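/- arXiv:1904.01919 — 2 statements merged into one kernel-verified Lean document; each statement's English description precedes it below -/
import Mathlib

section
/- Suppose 2 < p < ∞ and 1 − 2/p < s ≤ 1, let p' be the conjugate exponent of p, and let g be holomorphic on the unit disc D. Then the multiplication operator M_g maps the Besov space B^p into Q_s if and only if g ∈ Q_{s,log,1/p'} ∩ H^∞. -/
open MeasureTheory Metric Complex Real Filter Set

noncomputable section

/-- `f` is holomorphic on the open unit disc. -/
def HolOn (f : ℂ → ℂ) : Prop := DifferentiableOn ℂ f (Metric.ball (0:ℂ) 1)

/-- The normalized Lebesgue area measure on `ℂ` (so the unit disc has total mass 1). -/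
def dA : Measure ℂ := (ENNReal.ofReal π)⁻¹ • volume

/-- Bounded holomorphic functions on the unit disc. -/
def Hinf : Set (ℂ → ℂ) :=
  {f | HolOn f ∧ ∃ C : ℝ, ∀ z ∈ Metric.ball (0:ℂ) 1, ‖f z‖ ≤ C}

/-- The Bloch space. -/
def Bloch : Set (ℂ → ℂ) :=
  {f | HolOn f ∧ ∃ C : ℝ, ∀ z ∈ Metric.ball (0:ℂ) 1,
      (1 - ‖z‖ ^ 2) * ‖deriv f z‖ ≤ C}

/-- The little Bloch space: `(1-|z|²)|f'(z)| → 0` as `|z| → 1⁻`. -/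
def littleBloch : Set (ℂ → ℂ) :=
  {f | HolOn f ∧ ∀ ε : ℝ, 0 < ε → ∃ r : ℝ, r < 1 ∧ ∀ z ∈ Metric.ball (0:ℂ) 1,
      r < ‖z‖ → (1 - ‖z‖ ^ 2) * ‖deriv f z‖ < ε}

/-- The `α`-logarithmic Bloch space. -/
def BlochLog (α : ℝ) : Set (ℂ → ℂ) :=
  {f | HolOn f ∧ ∃ C : ℝ, ∀ z ∈ Metric.ball (0:ℂ) 1,
      (1 - ‖z‖ ^ 2) * (Real.log (2 / (1 - ‖z‖ ^ 2))) ^ α *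
        ‖deriv f z‖ ≤ C}

/-- The Besov space `B¹`: holomorphic `f` with `∫_D |f''| dA < ∞`. -/
def Besov1 : Set (ℂ → ℂ) :=
  {f | HolOn f ∧ ∫⁻ z in Metric.ball (0:ℂ) 1,
      ENNReal.ofReal (‖deriv (deriv f) z‖) ∂dA < ⊤}

/-- The Besov space `Bᵖ` (`1 < p < ∞`): `∫_D (1-|z|)^(p-2) |f'(z)|^p dA(z) < ∞`. -/
def Besov (p : ℝ) : Set (ℂ → ℂ) :=
  {f | HolOn f ∧ ∫⁻ z in Metric.ball (0:ℂ) 1,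
      ENNReal.ofReal ((1 - ‖z‖) ^ (p - 2) * ‖deriv f z‖ ^ p) ∂dA < ⊤}

open scoped Classical in
/-- The Besov space `Bᵖ` for all `1 ≤ p < ∞` (with the special definition at `p = 1`). -/
def BesovFull (p : ℝ) : Set (ℂ → ℂ) := if p = 1 then Besov1 else Besov p

/-- The Möbius transformation `φ_a(z) = (a-z)/(1 - conj a · z)`. -/
def phi (a z : ℂ) : ℂ := (a - z) / (1 - (starRingEnd ℂ) a * z)

/-- The space `Q_s`. -/
def Qs (s : ℝ) : Set (ℂ → ℂ) :=
  {f | HolOn f ∧ ⨆ a ∈ Metric.ball (0:ℂ) 1, ∫⁻ z in Metric.ball (0:ℂ) 1,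
      ENNReal.ofReal (‖deriv f z‖ ^ 2 *
        (1 - ‖phi a z‖ ^ 2) ^ s) ∂dA < ⊤}

/-- The space `Q_{s,log,α}`. -/
def QsLog (s α : ℝ) : Set (ℂ → ℂ) :=
  {f | HolOn f ∧ ⨆ a ∈ Metric.ball (0:ℂ) 1,
      (ENNReal.ofReal ((Real.log (2 / (1 - ‖a‖))) ^ (2 * α)) *
        ∫⁻ z in Metric.ball (0:ℂ) 1,
          ENNReal.ofReal (‖deriv f z‖ ^ 2 *
            (1 - ‖phi a z‖ ^ 2) ^ s) ∂dA) < ⊤}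

/-- The Volterra operator `T_g(f)(z) = ∫_0^z g'(ξ) f(ξ) dξ` (along the segment from 0 to z). -/
def Tg (g f : ℂ → ℂ) : ℂ → ℂ :=
  fun z => z * ∫ t in (0:ℝ)..1, deriv g ((t : ℂ) * z) * f ((t : ℂ) * z)

/-- The companion operator `I_g(f)(z) = ∫_0^z g(ξ) f'(ξ) dξ` (along the segment from 0 to z). -/
def Ig (g f : ℂ → ℂ) : ℂ → ℂ :=
  fun z => z * ∫ t in (0:ℝ)..1, g ((t : ℂ) * z) * deriv f ((t : ℂ) * z)

/-- The multiplication operator `M_g(f) = g · f`. -/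
def Mg (g f : ℂ → ℂ) : ℂ → ℂ := fun z => g z * f z

/-- `T` maps `X` into `Y`. -/
def MapsInto (T : (ℂ → ℂ) → (ℂ → ℂ)) (X Y : Set (ℂ → ℂ)) : Prop :=
  ∀ f ∈ X, T f ∈ Y

/-- The Hardy space `H^q`. -/
def Hardy (q : ℝ) : Set (ℂ → ℂ) :=
  {f | HolOn f ∧ ∃ C : ℝ, ∀ r : ℝ, 0 < r → r < 1 →
      (1 / (2 * π)) * ∫ t in (0:ℝ)..(2 * π),
        ‖f ((r : ℂ) * Complex.exp ((t : ℂ) * Complex.I))‖ ^ q ≤ C}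

/-- An inner function: bounded holomorphic with radial boundary values of modulus 1 a.e. -/
def IsInner (g : ℂ → ℂ) : Prop :=
  g ∈ Hinf ∧ ∀ᵐ t : ℝ ∂(volume.restrict (Set.Ioc (0:ℝ) (2 * π))),
    Filter.Tendsto (fun r : ℝ => ‖g ((r : ℂ) * Complex.exp ((t : ℂ) * Complex.I))‖)
      (nhdsWithin 1 (Set.Iio 1)) (nhds 1)

/-- `X` has the f-property (division by inner functions). -/
def FProperty (X : Set (ℂ → ℂ)) : Prop :=
  ∀ h ∈ X, ∀ g : ℂ → ℂ, IsInner g →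
    (fun z => h z / g z) ∈ Hardy 1 → (fun z => h z / g z) ∈ X

/-- The space of multipliers `M(X,Y)`. -/
def Mult (X Y : Set (ℂ → ℂ)) : Set (ℂ → ℂ) :=
  {g | HolOn g ∧ ∀ f ∈ X, (fun z => g z * f z) ∈ Y}

end

/-!
At each point `a` of the disc, split `g f = f(a) g + g (f - f(a))`. If `g ∈ Q_s ∩ H^∞`, the `Q_s`
integral based at `a` of the second term is controlled by the `Bᵖ` norm of `f`: its derivative is
`(f - f(a)) g' + g f'`, where `g f'` is harmless because Hölder's inequality gives `Bᵖ ⊆ Q_t` for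
every `t > 1 - 2/p`, and `(f - f(a)) g'` obeys a Carleson type estimate, obtained by bounding
`|f(w) - f(0)|²` by an area integral of `|f'|²` over a nontangential region with vertex `w` and
exchanging the integrals, which only costs a loss from `s` to some `t ∈ (1 - 2/p, s)`. Everything
then depends on the first term, and the supremum of `|f(a)|` over the unit ball of `Bᵖ` is
comparable to `(log (2 / (1 - |a|)))^{1/p'}`, as shown by the same nontangential regions and by the
normalized functions `log (2 / (1 - conj a z))`.

Testing `M_g` on a family needs a bound that is uniform over the family. As `M_g` is only assumed
to send elements to elements, this comes from Baire's theorem, applied to `ℓ¹` combinations of a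
bounded sequence of `Bᵖ`. Boundedness of `g` is obtained by testing on the automorphisms `φ_a`.
-/

open scoped ENNReal NNReal ComplexConjugate

local notation "𝔻" => ball (0 : ℂ) 1

section Moebius

variable {a b z w : ℂ}

lemma norm_one_sub_conj_mul_comm (a z : ℂ) : ‖1 - conj a * z‖ = ‖1 - conj z * a‖ := by
  rw [← RCLike.norm_conj]
  simp [mul_comm]

lemma one_sub_norm_mul_norm_le (a z : ℂ) : 1 - ‖a‖ * ‖z‖ ≤ ‖1 - conj a * z‖ := by
  simpa using norm_sub_norm_le (1 : ℂ) (conj a * z)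

lemma one_sub_norm_le_right (ha : ‖a‖ ≤ 1) : 1 - ‖z‖ ≤ ‖1 - conj a * z‖ := by
  nlinarith [one_sub_norm_mul_norm_le a z, norm_nonneg z]

lemma one_sub_norm_le_left (hz : ‖z‖ ≤ 1) : 1 - ‖a‖ ≤ ‖1 - conj a * z‖ := by
  nlinarith [one_sub_norm_mul_norm_le a z, norm_nonneg a]

lemma norm_one_sub_conj_mul_pos (ha : ‖a‖ < 1) (hz : ‖z‖ < 1) : 0 < ‖1 - conj a * z‖ :=
  (sub_pos.2 hz).trans_le (one_sub_norm_le_right ha.le)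

lemma one_sub_conj_mul_ne_zero (ha : ‖a‖ < 1) (hz : ‖z‖ < 1) : 1 - conj a * z ≠ 0 :=
  norm_pos_iff.1 (norm_one_sub_conj_mul_pos ha hz)

lemma one_sub_norm_sq_pos (ha : ‖a‖ < 1) : 0 < 1 - ‖a‖ ^ 2 := by
  nlinarith [norm_nonneg a]

lemma one_sub_norm_phi_sq (ha : ‖a‖ < 1) (hz : ‖z‖ < 1) :
    1 - ‖phi a z‖ ^ 2 = (1 - ‖a‖ ^ 2) * (1 - ‖z‖ ^ 2) / ‖1 - conj a * z‖ ^ 2 := by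
  have h := norm_one_sub_conj_mul_pos ha hz
  rw [phi, norm_div, div_pow, eq_div_iff (by positivity), sub_mul,
    div_mul_cancel₀ _ (by positivity)]
  simp only [← Complex.normSq_eq_norm_sq, Complex.normSq_apply, sub_re, sub_im, mul_re, mul_im,
    conj_re, conj_im, one_re, one_im]
  ring

lemma one_sub_norm_phi_sq_pos (ha : ‖a‖ < 1) (hz : ‖z‖ < 1) : 0 < 1 - ‖phi a z‖ ^ 2 := by
  rw [one_sub_norm_phi_sq ha hz]
  have := norm_one_sub_conj_mul_pos ha hz
  have := one_sub_norm_sq_pos ha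
  have := one_sub_norm_sq_pos hz
  positivity

lemma norm_phi_lt_one (ha : ‖a‖ < 1) (hz : ‖z‖ < 1) : ‖phi a z‖ < 1 := by
  nlinarith [one_sub_norm_phi_sq_pos ha hz, norm_nonneg (phi a z)]

lemma phi_zero_right (a : ℂ) : phi a 0 = a := by simp [phi]

lemma phi_self (a : ℂ) : phi a a = 0 := by simp [phi]

lemma norm_phi_zero_left (z : ℂ) : ‖phi 0 z‖ = ‖z‖ := by simp [phi]

lemma phi_phi (ha : ‖a‖ < 1) (hz : ‖z‖ < 1) : phi a (phi a z) = z := by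
  have h₁ : 1 - z * conj a ≠ 0 := mul_comm (conj a) z ▸ one_sub_conj_mul_ne_zero ha hz
  have h₂ := one_sub_conj_mul_ne_zero ha (norm_phi_lt_one ha hz)
  have h₃ := one_sub_conj_mul_ne_zero ha ha
  rw [phi, div_eq_iff h₂, phi]
  generalize conj a = c at *
  field_simp
  ring

lemma norm_phi_phi (ha : ‖a‖ < 1) (hb : ‖b‖ < 1) (hw : ‖w‖ < 1) :
    ‖phi b (phi a w)‖ = ‖phi (phi a b) w‖ := by
  have hab := one_sub_conj_mul_ne_zero ha hb
  have hba := one_sub_conj_mul_ne_zero hb ha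
  have haw := one_sub_conj_mul_ne_zero ha hw
  have h₁ := one_sub_conj_mul_ne_zero hb (norm_phi_lt_one ha hw)
  have h₂ := one_sub_conj_mul_ne_zero (norm_phi_lt_one ha hb) hw
  have key : phi b (phi a w) * (1 - conj b * a) = -(phi (phi a b) w * (1 - conj a * b)) := by
    change (b - phi a w) / (1 - conj b * phi a w) * _ =
      -((phi a b - w) / (1 - conj (phi a b) * w) * _)
    rw [div_mul_eq_mul_div, div_mul_eq_mul_div, ← neg_div, div_eq_div_iff h₁ h₂]
    simp only [phi, map_div₀, map_sub, map_mul, map_one, Complex.conj_conj] at *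
    generalize conj a = c, conj b = d at *
    have hba' : 1 - a * d ≠ 0 := by rwa [mul_comm]
    have haw' : 1 - w * c ≠ 0 := by rwa [mul_comm]
    have hab' : 1 - b * c ≠ 0 := by rwa [mul_comm]
    field_simp
    ring
  have hnorm := congrArg norm key
  rw [norm_neg, norm_mul, norm_mul, norm_one_sub_conj_mul_comm a b] at hnorm
  exact mul_right_cancel₀ (norm_ne_zero_iff.2 hba) hnorm

lemma hasDerivAt_phi (ha : ‖a‖ < 1) (hz : ‖z‖ < 1) :
    HasDerivAt (phi a) ((conj a * a - 1) / (1 - conj a * z) ^ 2) z := by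
  have hnum : HasDerivAt (fun z ↦ a - z) (-1) z := by
    simpa using (hasDerivAt_id z).const_sub a
  have hden : HasDerivAt (fun z ↦ 1 - conj a * z) (-conj a) z := by
    simpa using ((hasDerivAt_id z).const_mul (conj a)).const_sub 1
  refine (hnum.fun_div hden (one_sub_conj_mul_ne_zero ha hz)).congr_deriv ?_
  ring

lemma differentiableAt_phi (ha : ‖a‖ < 1) (hz : ‖z‖ < 1) : DifferentiableAt ℂ (phi a) z :=
  (hasDerivAt_phi ha hz).differentiableAt

lemma holOn_phi (ha : ‖a‖ < 1) : HolOn (phi a) := fun _ hz ↦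
  (differentiableAt_phi ha (mem_ball_zero_iff.1 hz)).differentiableWithinAt

lemma norm_deriv_phi (ha : ‖a‖ < 1) (hz : ‖z‖ < 1) :
    ‖deriv (phi a) z‖ = (1 - ‖phi a z‖ ^ 2) / (1 - ‖z‖ ^ 2) := by
  have hnum : ‖conj a * a - 1‖ = 1 - ‖a‖ ^ 2 := by
    rw [Complex.conj_mul', norm_sub_rev, ← ofReal_pow, ← ofReal_one, ← ofReal_sub, norm_real,
      Real.norm_of_nonneg (one_sub_norm_sq_pos ha).le]
  rw [(hasDerivAt_phi ha hz).deriv, norm_div, norm_pow, hnum, one_sub_norm_phi_sq ha hz]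
  have := one_sub_norm_sq_pos hz
  field_simp

lemma mapsTo_phi (ha : ‖a‖ < 1) : MapsTo (phi a) 𝔻 𝔻 := fun z hz ↦ by
  rw [mem_ball_zero_iff] at hz ⊢
  exact norm_phi_lt_one ha hz

lemma leftInvOn_phi (ha : ‖a‖ < 1) : LeftInvOn (phi a) (phi a) 𝔻 := fun _ hz ↦
  phi_phi ha (mem_ball_zero_iff.1 hz)

lemma phi_image_ball (ha : ‖a‖ < 1) : phi a '' 𝔻 = 𝔻 :=
  (mapsTo_phi ha).image_subset.antisymm
    fun z hz ↦ ⟨phi a z, mapsTo_phi ha hz, leftInvOn_phi ha hz⟩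

@[fun_prop]
lemma measurable_phi : Measurable fun x : ℂ × ℂ ↦ phi x.1 x.2 := by
  unfold phi
  fun_prop

end Moebius

section AreaMeasure

lemma dA_ball (c : ℂ) {r : ℝ} (hr : 0 ≤ r) : dA (ball c r) = ENNReal.ofReal (r ^ 2) := by
  have hπ : (NNReal.pi : ℝ≥0∞) = ENNReal.ofReal π := by
    rw [← NNReal.coe_real_pi, ENNReal.ofReal_coe_nnreal]
  rw [dA, Measure.smul_apply, smul_eq_mul, Complex.volume_ball, hπ, ← ENNReal.ofReal_pow hr,
    mul_comm, mul_assoc, ENNReal.mul_inv_cancel (by simp [pi_pos]) ENNReal.ofReal_ne_top, mul_one]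

instance : SFinite dA := by
  unfold dA
  infer_instance

lemma lintegral_dA (s : Set ℂ) (F : ℂ → ℝ≥0∞) :
    ∫⁻ z in s, F z ∂dA = (ENNReal.ofReal π)⁻¹ * ∫⁻ z in s, F z := by
  rw [dA, Measure.restrict_smul, lintegral_smul_measure, smul_eq_mul]

lemma lintegral_image_eq_lintegral_enorm_deriv_sq_mul {U : Set ℂ} (hU : MeasurableSet U)
    {φ φ' : ℂ → ℂ} (hφ : ∀ z ∈ U, HasDerivAt φ (φ' z) z) (hinj : InjOn φ U) (F : ℂ → ℝ≥0∞) :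
    ∫⁻ z in φ '' U, F z ∂dA = ∫⁻ w in U, ‖φ' w‖ₑ ^ 2 * F (φ w) ∂dA := by
  have hdet (w : ℂ) :
      ((ContinuousLinearMap.toSpanSingleton ℂ (φ' w)).restrictScalars ℝ).det = ‖φ' w‖ ^ 2 := by
    simp [ContinuousLinearMap.det, LinearMap.det_restrictScalars, Algebra.norm_complex_apply,
      Complex.normSq_eq_norm_sq]
  rw [lintegral_dA, lintegral_dA, lintegral_image_eq_lintegral_abs_det_fderiv_mul volume hU
    (fun z hz ↦ ((hφ z hz).hasFDerivAt.restrictScalars ℝ).hasFDerivWithinAt) hinj F]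
  simp_rw [hdet, abs_of_nonneg (sq_nonneg ‖φ' _‖), ENNReal.ofReal_pow (norm_nonneg _),
    ofReal_norm]

lemma lintegral_ball_eq_lintegral_phi {a : ℂ} (ha : ‖a‖ < 1) (F : ℂ → ℝ≥0∞) :
    ∫⁻ z in 𝔻, F z ∂dA = ∫⁻ w in 𝔻, ‖deriv (phi a) w‖ₑ ^ 2 * F (phi a w) ∂dA := by
  conv_lhs => rw [← phi_image_ball ha]
  exact lintegral_image_eq_lintegral_enorm_deriv_sq_mul measurableSet_ball
    (fun z hz ↦ (differentiableAt_phi ha (mem_ball_zero_iff.1 hz)).hasDerivAt)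
    (leftInvOn_phi ha).injOn F

/-- The measure `ω dA` on the unit disc, used to write the weighted Dirichlet integrals defining
the function spaces as `Lᵖ` norms. -/
noncomputable def weightedArea (ω : ℂ → ℝ) : Measure ℂ :=
  (dA.restrict 𝔻).withDensity fun z ↦ ENNReal.ofReal (ω z)

lemma lintegral_weightedArea {ω : ℂ → ℝ} (hω : Measurable ω) (F : ℂ → ℝ≥0∞) :
    ∫⁻ z, F z ∂weightedArea ω = ∫⁻ z in 𝔻, ENNReal.ofReal (ω z) * F z ∂dA :=
  lintegral_withDensity_eq_lintegral_mul_non_measurable _ hω.ennreal_ofReal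
    (by simp) F

lemma ae_weightedArea_of_forall_mem_ball {P : ℂ → Prop} (ω : ℂ → ℝ) (hP : ∀ z ∈ 𝔻, P z) :
    ∀ᵐ z ∂weightedArea ω, P z :=
  (withDensity_absolutelyContinuous _ _).ae_le (ae_restrict_of_forall_mem measurableSet_ball hP)

lemma eLpNorm_weightedArea_rpow {ω : ℂ → ℝ} (hω : Measurable ω) {p : ℝ} (hp : 0 < p)
    (F : ℂ → ℂ) :
    eLpNorm F (ENNReal.ofReal p) (weightedArea ω) ^ p =
      ∫⁻ z in 𝔻, ENNReal.ofReal (ω z) * ‖F z‖ₑ ^ p ∂dA := by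
  have h := eLpNorm_nnreal_pow_eq_lintegral (f := F) (μ := weightedArea ω)
    (p := p.toNNReal) (by simpa using hp)
  rw [Real.coe_toNNReal p hp.le] at h
  rw [← lintegral_weightedArea hω]
  exact h

lemma eLpNorm_two_weightedArea_sq {ω : ℂ → ℝ} (hω : Measurable ω) (F : ℂ → ℂ) :
    eLpNorm F 2 (weightedArea ω) ^ 2 =
      ∫⁻ z in 𝔻, ENNReal.ofReal (ω z) * ‖F z‖ₑ ^ 2 ∂dA := by
  simpa using eLpNorm_weightedArea_rpow hω two_pos F

end AreaMeasure

section Norms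

variable {p s α : ℝ} {f : ℂ → ℂ}

/-- The measure `(1 - |φ_a|²)ˢ dA` of the definition of `Q_s`. -/
noncomputable def qsMeasure (s : ℝ) (a : ℂ) : Measure ℂ :=
  weightedArea fun z ↦ (1 - ‖phi a z‖ ^ 2) ^ s

/-- The seminorm of `f` in the weighted Dirichlet space based at `a`; the `Q_s` seminorm is its
supremum over `a` in the disc. -/
noncomputable def qsNorm (s : ℝ) (a : ℂ) (f : ℂ → ℂ) : ℝ≥0∞ :=
  eLpNorm (deriv f) 2 (qsMeasure s a)

/-- The seminorm of the Besov space `Bᵖ`. -/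
noncomputable def besovNorm (p : ℝ) (f : ℂ → ℂ) : ℝ≥0∞ :=
  eLpNorm (deriv f) (ENNReal.ofReal p) (weightedArea fun z ↦ (1 - ‖z‖) ^ (p - 2))

lemma eLpNorm_qsMeasure_sq (s : ℝ) (a : ℂ) (F : ℂ → ℂ) :
    eLpNorm F 2 (qsMeasure s a) ^ 2 =
      ∫⁻ z in 𝔻, ENNReal.ofReal ((1 - ‖phi a z‖ ^ 2) ^ s) * ‖F z‖ₑ ^ 2 ∂dA :=
  eLpNorm_two_weightedArea_sq (by fun_prop) F

lemma besovNorm_rpow (hp : 0 < p) (f : ℂ → ℂ) :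
    besovNorm p f ^ p =
      ∫⁻ z in 𝔻, ENNReal.ofReal ((1 - ‖z‖) ^ (p - 2)) * ‖deriv f z‖ₑ ^ p ∂dA :=
  eLpNorm_weightedArea_rpow (by fun_prop) hp _

lemma qsNorm_sq (s : ℝ) (a : ℂ) (f : ℂ → ℂ) :
    qsNorm s a f ^ 2 = ∫⁻ z in 𝔻,
      ENNReal.ofReal (‖deriv f z‖ ^ 2 * (1 - ‖phi a z‖ ^ 2) ^ s) ∂dA := by
  simp_rw [qsNorm, eLpNorm_qsMeasure_sq, mul_comm (ENNReal.ofReal _),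
    ENNReal.ofReal_mul (sq_nonneg ‖deriv f _‖), ENNReal.ofReal_pow (norm_nonneg _), ofReal_norm]

lemma iSup₂_lt_top_iff {ι : Type*} {S : Set ι} {F : ι → ℝ≥0∞} :
    ⨆ i ∈ S, F i < ⊤ ↔ ∃ M : ℝ≥0, ∀ i ∈ S, F i ≤ M := by
  simp_rw [← iSup₂_le_iff]
  exact ⟨fun h ↦ ⟨_, (ENNReal.coe_toNNReal h.ne).ge⟩,
    fun ⟨_, h⟩ ↦ h.trans_lt ENNReal.coe_lt_top⟩

lemma exists_forall_sq_le_iff {ι : Type*} {S : Set ι} {F : ι → ℝ≥0∞} :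
    (∃ M : ℝ≥0, ∀ i ∈ S, F i ^ 2 ≤ M) ↔ ∃ M : ℝ≥0, ∀ i ∈ S, F i ≤ M := by
  constructor
  · rintro ⟨M, hM⟩
    refine ⟨NNReal.sqrt M, fun i hi ↦ (ENNReal.pow_le_pow_left_iff two_ne_zero).1 ?_⟩
    rw [← ENNReal.coe_pow, NNReal.sq_sqrt]
    exact hM i hi
  · rintro ⟨M, hM⟩
    refine ⟨M ^ 2, fun i hi ↦ ?_⟩
    rw [ENNReal.coe_pow]
    exact pow_le_pow_left' (hM i hi) 2

lemma mem_Qs_iff :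
    f ∈ Qs s ↔ HolOn f ∧ ∃ M : ℝ≥0, ∀ a ∈ 𝔻, qsNorm s a f ≤ M := by
  rw [← exists_forall_sq_le_iff, ← iSup₂_lt_top_iff]
  simp_rw [qsNorm_sq]
  rfl

lemma mem_Besov_iff (hp : 0 < p) : f ∈ Besov p ↔ HolOn f ∧ besovNorm p f < ⊤ := by
  refine and_congr_right fun _ ↦ ?_
  rw [← ENNReal.rpow_lt_top_iff_of_pos (x := besovNorm p f) hp, besovNorm_rpow hp]
  refine iff_of_eq (congrArg (· < ⊤) (setLIntegral_congr_fun measurableSet_ball fun z hz ↦ ?_))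
  have hz : 0 ≤ 1 - ‖z‖ := (sub_pos.2 (mem_ball_zero_iff.1 hz)).le
  rw [ENNReal.ofReal_mul (Real.rpow_nonneg hz _), ← ENNReal.ofReal_rpow_of_nonneg (norm_nonneg _)
    hp.le, ofReal_norm]

/-- The logarithmic weight of `Q_{s,log,α}`. -/
noncomputable def logWeight (a : ℂ) : ℝ := Real.log (2 / (1 - ‖a‖))

lemma log_two_le_logWeight {a : ℂ} (ha : ‖a‖ < 1) : Real.log 2 ≤ logWeight a :=
  Real.log_le_log two_pos ((le_div_iff₀ (sub_pos.2 ha)).2 (by nlinarith [norm_nonneg a]))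

lemma logWeight_pos {a : ℂ} (ha : ‖a‖ < 1) : 0 < logWeight a :=
  (Real.log_pos one_lt_two).trans_le (log_two_le_logWeight ha)

lemma mem_QsLog_iff : f ∈ QsLog s α ↔
    HolOn f ∧ ∃ M : ℝ≥0, ∀ a ∈ 𝔻, ENNReal.ofReal (logWeight a ^ α) * qsNorm s a f ≤ M := by
  rw [← exists_forall_sq_le_iff, ← iSup₂_lt_top_iff]
  refine and_congr_right fun _ ↦ iff_of_eq (congrArg (· < ⊤) (biSup_congr fun a ha ↦ ?_))
  have hL := (logWeight_pos (mem_ball_zero_iff.1 ha)).le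
  rw [mul_pow, qsNorm_sq, ← ENNReal.ofReal_pow (Real.rpow_nonneg hL _), mul_comm 2 α,
    ← Real.rpow_mul_natCast hL]
  rfl

lemma eLpNorm_qsMeasure_eq_phi {a c : ℂ} (ha : ‖a‖ < 1) (hc : ‖c‖ < 1) (s : ℝ) (F : ℂ → ℂ) :
    eLpNorm F 2 (qsMeasure s c) =
      eLpNorm (fun w ↦ F (phi a w) * deriv (phi a) w) 2 (qsMeasure s (phi a c)) := by
  refine (ENNReal.pow_right_strictMono two_ne_zero).injective ?_
  simp only [eLpNorm_qsMeasure_sq]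
  rw [lintegral_ball_eq_lintegral_phi ha]
  refine setLIntegral_congr_fun measurableSet_ball fun w hw ↦ ?_
  rw [norm_phi_phi ha hc (mem_ball_zero_iff.1 hw), enorm_mul]
  ring

lemma qsNorm_eq_qsNorm_comp_phi {a c : ℂ} (ha : ‖a‖ < 1) (hc : ‖c‖ < 1) (s : ℝ) (hf : HolOn f) :
    qsNorm s c f = qsNorm s (phi a c) (f ∘ phi a) := by
  rw [qsNorm, eLpNorm_qsMeasure_eq_phi ha hc]
  refine (eLpNorm_congr_ae (ae_weightedArea_of_forall_mem_ball _ fun w hw ↦ ?_)).symm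
  exact deriv_comp w (hf.differentiableAt (isOpen_ball.mem_nhds (mapsTo_phi ha hw)))
    (differentiableAt_phi ha (mem_ball_zero_iff.1 hw))

end Norms

section Embedding

lemma lintegral_mul_le_weighted {α : Type*} [MeasurableSpace α] {μ : Measure α} {p q : ℝ}
    (hpq : p.HolderConjugate q) {ω u v : α → ℝ≥0∞} (hω : AEMeasurable ω μ)
    (hω₀ : ∀ᵐ x ∂μ, ω x ≠ 0 ∧ ω x ≠ ⊤) (hu : AEMeasurable u μ) (hv : AEMeasurable v μ) :
    ∫⁻ x, u x * v x ∂μ ≤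
      (∫⁻ x, ω x * u x ^ p ∂μ) ^ (1 / p) * (∫⁻ x, ω x ^ (1 - q) * v x ^ q ∂μ) ^ (1 / q) := by
  have hp := hpq.ne_zero
  have hqp : -(1 / p) * q = 1 - q := by
    rw [neg_mul, one_div_mul_eq_div, hpq.symm.div_conj_eq_sub_one, neg_sub]
  have holder := ENNReal.lintegral_mul_le_Lp_mul_Lq μ hpq
    ((hω.pow_const (1 / p)).mul hu) ((hω.pow_const (-(1 / p))).mul hv)
  simp_rw [Pi.mul_apply, ENNReal.mul_rpow_of_nonneg _ _ hpq.nonneg,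
    ENNReal.mul_rpow_of_nonneg _ _ hpq.symm.nonneg, ← ENNReal.rpow_mul, one_div_mul_cancel hp,
    hqp, ENNReal.rpow_one] at holder
  refine (lintegral_congr_ae ?_).trans_le holder
  filter_upwards [hω₀] with x hx
  rw [mul_mul_mul_comm, ← ENNReal.rpow_add _ _ hx.1 hx.2, add_neg_cancel, ENNReal.rpow_zero,
    one_mul]

lemma rpow_lintegral_le_weighted {α : Type*} [MeasurableSpace α] {μ : Measure α} {p q : ℝ}
    (hpq : p.HolderConjugate q) {ω u : α → ℝ≥0∞} (hω : AEMeasurable ω μ)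
    (hω₀ : ∀ᵐ x ∂μ, ω x ≠ 0 ∧ ω x ≠ ⊤) (hu : AEMeasurable u μ) :
    (∫⁻ x, u x ∂μ) ^ p ≤ (∫⁻ x, ω x * u x ^ p ∂μ) * (∫⁻ x, ω x ^ (1 - q) ∂μ) ^ (p - 1) := by
  have holder := lintegral_mul_le_weighted hpq hω hω₀ hu (v := 1) aemeasurable_const
  simp only [Pi.one_apply, mul_one, ENNReal.one_rpow] at holder
  calc (∫⁻ x, u x ∂μ) ^ p ≤ _ := ENNReal.rpow_le_rpow holder hpq.nonneg
    _ = _ := by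
      rw [ENNReal.mul_rpow_of_nonneg _ _ hpq.nonneg, ← ENNReal.rpow_mul, ← ENNReal.rpow_mul,
        one_div_mul_cancel hpq.ne_zero, ENNReal.rpow_one, one_div_mul_eq_div,
        hpq.div_conj_eq_sub_one]

lemma lintegral_one_sub_norm_rpow_lt_top {c : ℝ} (hc : -1 < c) :
    ∫⁻ z in 𝔻, ENNReal.ofReal ((1 - ‖z‖) ^ c) ∂dA < ⊤ := by
  have hradial : IntegrableOn (fun t : ℝ ↦ (1 - t) ^ c) (Ioo 0 1) := by
    have h :=
      ((intervalIntegral.intervalIntegrable_rpow' (a := 0) (b := 1) hc).comp_sub_left 1).symm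
    rwa [sub_zero, sub_self, intervalIntegrable_iff_integrableOn_Ioo_of_le zero_le_one] at h
  have hint : IntegrableOn (fun z : ℂ ↦ (1 - ‖z‖) ^ c) 𝔻 := by
    rw [integrableOn_fun_norm_addHaar volume (f := fun t : ℝ ↦ (1 - t) ^ c)]
    refine hradial.mono' (by fun_prop) (ae_restrict_of_forall_mem measurableSet_Ioo fun t ht ↦ ?_)
    have hpow : 0 ≤ (1 - t) ^ c := Real.rpow_nonneg (sub_nonneg.2 ht.2.le) _
    have ht₀ := ht.1.le
    rw [Complex.finrank_real_complex, pow_one, smul_eq_mul, Real.norm_of_nonneg (by positivity)]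
    exact mul_le_of_le_one_left hpow ht.2.le
  rw [lintegral_dA]
  exact ENNReal.mul_lt_top (by simp [pi_pos]) hint.lintegral_lt_top

lemma lintegral_one_sub_norm_sq_rpow_lt_top {c : ℝ} (hc : -1 < c) :
    ∫⁻ z in 𝔻, ENNReal.ofReal ((1 - ‖z‖ ^ 2) ^ c) ∂dA < ⊤ := by
  refine (setLIntegral_mono' (g := fun z ↦ ENNReal.ofReal (2 ^ |c|) *
    ENNReal.ofReal ((1 - ‖z‖) ^ c)) measurableSet_ball fun z hz ↦ ?_).trans_lt ?_
  · have hz := mem_ball_zero_iff.1 hz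
    have hz' : 0 < 1 - ‖z‖ := sub_pos.2 hz
    rw [← ENNReal.ofReal_mul (by positivity), show 1 - ‖z‖ ^ 2 = (1 + ‖z‖) * (1 - ‖z‖) by ring,
      Real.mul_rpow (by positivity) hz'.le]
    gcongr
    calc (1 + ‖z‖) ^ c ≤ (1 + ‖z‖) ^ |c| :=
          Real.rpow_le_rpow_of_exponent_le (by simp) (le_abs_self c)
      _ ≤ 2 ^ |c| := Real.rpow_le_rpow (by positivity) (by linarith) (abs_nonneg c)
  · rw [lintegral_const_mul' _ _ ENNReal.ofReal_ne_top]
    exact ENNReal.mul_lt_top ENNReal.ofReal_lt_top (lintegral_one_sub_norm_rpow_lt_top hc)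

lemma lintegral_one_sub_norm_phi_sq_rpow_le {a : ℂ} (ha : ‖a‖ < 1) (c : ℝ) :
    ∫⁻ z in 𝔻, ENNReal.ofReal ((1 - ‖z‖) ^ (-2 : ℝ) * (1 - ‖phi a z‖ ^ 2) ^ c) ∂dA ≤
      4 * ∫⁻ w in 𝔻, ENNReal.ofReal ((1 - ‖w‖ ^ 2) ^ (c - 2)) ∂dA := by
  rw [lintegral_ball_eq_lintegral_phi ha fun w ↦ ENNReal.ofReal ((1 - ‖w‖ ^ 2) ^ (c - 2)),
    ← lintegral_const_mul' _ _ (by simp)]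
  refine setLIntegral_mono' measurableSet_ball fun z hz ↦ ?_
  have hz := mem_ball_zero_iff.1 hz
  have hz₁ : 0 < 1 - ‖z‖ := sub_pos.2 hz
  have hz₂ := one_sub_norm_sq_pos hz
  have hφ := one_sub_norm_phi_sq_pos ha hz
  rw [← ofReal_norm, norm_deriv_phi ha hz, ← ENNReal.ofReal_pow (by positivity),
    ← ENNReal.ofReal_mul (by positivity), ← ENNReal.ofReal_ofNat,
    ← ENNReal.ofReal_mul (by norm_num)]
  refine ENNReal.ofReal_le_ofReal ?_
  rw [Real.rpow_sub hφ, Real.rpow_neg hz₁.le, Real.rpow_two, Real.rpow_two]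
  have hle : ((1 - ‖z‖) ^ 2)⁻¹ ≤ 4 / (1 - ‖z‖ ^ 2) ^ 2 := by
    rw [inv_le_comm₀ (by positivity) (by positivity), inv_div, div_le_iff₀ (by norm_num)]
    nlinarith [norm_nonneg z]
  calc ((1 - ‖z‖) ^ 2)⁻¹ * (1 - ‖phi a z‖ ^ 2) ^ c
      ≤ 4 / (1 - ‖z‖ ^ 2) ^ 2 * (1 - ‖phi a z‖ ^ 2) ^ c := by gcongr
    _ = _ := by field_simp

lemma le_sqrt_mul_of_sq_le_mul_sq {x y : ℝ≥0∞} {C : ℝ≥0} (h : x ^ 2 ≤ C * y ^ 2) :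
    x ≤ NNReal.sqrt C * y := by
  refine (ENNReal.pow_le_pow_left_iff two_ne_zero).1 ?_
  rwa [mul_pow, ← ENNReal.coe_pow, NNReal.sq_sqrt]

lemma qsNorm_sq_le_besovNorm_sq_mul {p q t : ℝ} (hpq : (p / 2).HolderConjugate q) {a : ℂ}
    (ha : ‖a‖ < 1) (f : ℂ → ℂ) :
    qsNorm t a f ^ 2 ≤ besovNorm p f ^ 2 *
      (4 * ∫⁻ w in 𝔻, ENNReal.ofReal ((1 - ‖w‖ ^ 2) ^ (t * q - 2)) ∂dA) ^ (1 / q) := by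
  have hp : 0 < p := by linarith [hpq.pos]
  have hpq' : (p - 2) * (1 - q) = -2 := by linear_combination -2 * hpq.sub_one_mul_conj
  have one_sub_pos {z : ℂ} (hz : z ∈ 𝔻) : 0 < 1 - ‖z‖ := sub_pos.2 (mem_ball_zero_iff.1 hz)
  have holder := lintegral_mul_le_weighted (μ := dA.restrict 𝔻) hpq
    (ω := fun z ↦ ENNReal.ofReal ((1 - ‖z‖) ^ (p - 2))) (u := fun z ↦ ‖deriv f z‖ₑ ^ 2)
    (v := fun z ↦ ENNReal.ofReal ((1 - ‖phi a z‖ ^ 2) ^ t)) (by fun_prop)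
    (ae_restrict_of_forall_mem measurableSet_ball fun z hz ↦
      ⟨by simpa using Real.rpow_pos_of_pos (one_sub_pos hz) _, ENNReal.ofReal_ne_top⟩)
    (by fun_prop) (by fun_prop)
  have hbesov : (∫⁻ z in 𝔻, ENNReal.ofReal ((1 - ‖z‖) ^ (p - 2)) *
      (‖deriv f z‖ₑ ^ 2) ^ (p / 2) ∂dA) ^ (1 / (p / 2)) = besovNorm p f ^ 2 := by
    simp_rw [← ENNReal.rpow_natCast, ← ENNReal.rpow_mul, Nat.cast_two,
      mul_div_cancel₀ p two_ne_zero, ← besovNorm_rpow hp, ← ENNReal.rpow_mul]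
    congr 1
    field_simp
  rw [qsNorm, eLpNorm_qsMeasure_sq]
  simp_rw [mul_comm _ (‖deriv f _‖ₑ ^ 2)]
  rw [hbesov] at holder
  refine holder.trans (mul_le_mul_right (ENNReal.rpow_le_rpow ?_ hpq.symm.one_div_nonneg) _)
  refine le_of_eq_of_le (setLIntegral_congr_fun measurableSet_ball fun z hz ↦ ?_)
    (lintegral_one_sub_norm_phi_sq_rpow_le ha (t * q))
  have hφ := one_sub_norm_phi_sq_pos ha (mem_ball_zero_iff.1 hz)
  have hz := one_sub_pos hz
  rw [ENNReal.ofReal_rpow_of_pos (by positivity), ENNReal.ofReal_rpow_of_pos (by positivity),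
    ← ENNReal.ofReal_mul (by positivity), ← Real.rpow_mul hz.le, ← Real.rpow_mul hφ.le, hpq']

lemma exists_qsNorm_le_mul_besovNorm {p t : ℝ} (hp : 2 < p) (ht : 1 - 2 / p < t) :
    ∃ C : ℝ≥0, ∀ (f : ℂ → ℂ), ∀ a ∈ 𝔻, qsNorm t a f ≤ C * besovNorm p f := by
  have hpq : (p / 2).HolderConjugate (p / (p - 2)) := by
    have : 0 < p - 2 := by linarith
    rw [Real.holderConjugate_iff]
    exact ⟨by linarith, by field_simp; ring⟩
  have hc : -1 < t * (p / (p - 2)) - 2 := by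
    have : 0 < p - 2 := by linarith
    have : 1 - 2 / p = (p / (p - 2))⁻¹ := by field_simp
    have := (inv_lt_iff_one_lt_mul₀ hpq.symm.pos).1 (this ▸ ht)
    linarith
  obtain ⟨K, hK⟩ := WithTop.ne_top_iff_exists.1 <|
    ENNReal.rpow_ne_top_of_nonneg hpq.symm.one_div_nonneg (ENNReal.mul_ne_top
      (by simp : (4 : ℝ≥0∞) ≠ ⊤) (lintegral_one_sub_norm_sq_rpow_lt_top hc).ne)
  refine ⟨NNReal.sqrt K, fun f a ha ↦ le_sqrt_mul_of_sq_le_mul_sq ?_⟩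
  rw [mul_comm]
  exact (qsNorm_sq_le_besovNorm_sq_mul hpq (mem_ball_zero_iff.1 ha) f).trans_eq (by rw [← hK]; rfl)

end Embedding

section SubMeanValue

lemma lintegral_ball_eq_lintegral_circleMap {F : ℂ → ℝ≥0∞} (hF : Measurable F) (c : ℂ) (R : ℝ) :
    ∫⁻ z in ball c R, F z =
      ∫⁻ ρ in Ioo 0 R, ENNReal.ofReal ρ * ∫⁻ θ in Ioo (-π) π, F (circleMap c ρ θ) := by
  have hcircle (ρ θ : ℝ) : c + Complex.polarCoord.symm (ρ, θ) = circleMap c ρ θ := by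
    simp [Complex.polarCoord_symm_apply, circleMap, Complex.exp_mul_I]
  have htranslate :
      ∫⁻ z in ball c R, F z = ∫⁻ z, (ball (0 : ℂ) R).indicator (fun z ↦ F (c + z)) z := by
    rw [lintegral_indicator measurableSet_ball,
      ← (measurePreserving_add_left volume c).setLIntegral_comp_preimage measurableSet_ball hF]
    simp
  have hmeas : Measurable fun p : ℝ × ℝ ↦ ENNReal.ofReal p.1 *
      (ball (0 : ℂ) R).indicator (fun z ↦ F (c + z)) (Complex.polarCoord.symm p) := by
    have hpolar : Measurable fun p : ℝ × ℝ ↦ Complex.polarCoord.symm p := by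
      simp only [Complex.polarCoord_symm_apply]
      fun_prop
    exact measurable_fst.ennreal_ofReal.mul
      (((hF.comp (measurable_const_add c)).indicator measurableSet_ball).comp hpolar)
  rw [htranslate, ← Complex.lintegral_comp_polarCoord_symm, polarCoord_target,
    Measure.volume_eq_prod]
  simp only [smul_eq_mul]
  rw [setLIntegral_prod _ hmeas.aemeasurable,
    show Ioo 0 R = Iio R ∩ Ioi 0 by rw [inter_comm, Ioi_inter_Iio],
    ← setLIntegral_indicator measurableSet_Iio]
  refine setLIntegral_congr_fun measurableSet_Ioi fun ρ (hρ : 0 < ρ) ↦ ?_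
  have hmem (θ : ℝ) : Complex.polarCoord.symm (ρ, θ) ∈ ball (0 : ℂ) R ↔ ρ < R := by
    rw [mem_ball_zero_iff, Complex.norm_polarCoord_symm, abs_of_pos hρ]
  by_cases hR : ρ < R
  · simp only [lintegral_const_mul' _ _ ENNReal.ofReal_ne_top, indicator_of_mem ((hmem _).2 hR),
      indicator_of_mem (mem_Iio.2 hR), hcircle]
  · simp only [indicator_of_notMem (mt (hmem _).1 hR), indicator_of_notMem (mt mem_Iio.1 hR),
      mul_zero, lintegral_zero]

variable {h : ℂ → ℂ} {c : ℂ} {R : ℝ}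

lemma enorm_mul_le_lintegral_circleMap {ρ : ℝ} (hρ : 0 < ρ)
    (hd : DiffContOnCl ℂ h (ball c ρ)) :
    ∫⁻ _ in Ioo (-π) π, ‖h c‖ₑ ≤ ∫⁻ θ in Ioo (-π) π, ‖h (circleMap c ρ θ)‖ₑ := by
  have hmean : (2 * π) • h c = ∫ θ in (-π)..π, h (circleMap c ρ θ) := by
    have hper : Function.Periodic (fun θ ↦ h (circleMap c ρ θ)) (2 * π) := fun θ ↦ by
      simp only [periodic_circleMap c ρ θ]
    have hshift := hper.intervalIntegral_add_eq (-π) 0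
    rw [show -π + 2 * π = π by ring, zero_add] at hshift
    rw [hshift, ← (show DiffContOnCl ℂ h (ball c |ρ|) by rwa [abs_of_pos hρ]).circleAverage,
      circleAverage_def, smul_inv_smul₀ Real.two_pi_pos.ne']
  calc ∫⁻ _ in Ioo (-π) π, ‖h c‖ₑ = ‖(2 * π) • h c‖ₑ := by
        rw [setLIntegral_const, Real.volume_Ioo, enorm_smul, mul_comm,
          Real.enorm_eq_ofReal Real.two_pi_pos.le, sub_neg_eq_add, two_mul]
    _ ≤ ∫⁻ θ in Ioo (-π) π, ‖h (circleMap c ρ θ)‖ₑ := by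
        rw [hmean, intervalIntegral.integral_of_le (by linarith [pi_pos]),
          ← restrict_Ioo_eq_restrict_Ioc]
        exact enorm_integral_le_lintegral_enorm _

lemma enorm_mul_dA_ball_le_lintegral (hm : Measurable h) (hd : DifferentiableOn ℂ h (ball c R)) :
    ‖h c‖ₑ * dA (ball c R) ≤ ∫⁻ z in ball c R, ‖h z‖ₑ ∂dA := by
  rw [← setLIntegral_const, lintegral_dA, lintegral_dA]
  gcongr 1
  rw [lintegral_ball_eq_lintegral_circleMap measurable_const,
    lintegral_ball_eq_lintegral_circleMap hm.enorm]
  refine setLIntegral_mono' measurableSet_Ioo fun ρ hρ ↦ ?_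
  gcongr 1
  refine enorm_mul_le_lintegral_circleMap hρ.1 (DifferentiableOn.diffContOnCl (hd.mono ?_))
  exact closure_ball_subset_closedBall.trans (closedBall_subset_ball hρ.2)

lemma enorm_rpow_mul_dA_ball_le_lintegral (hm : Measurable h) (hR : 0 < R)
    (hd : DifferentiableOn ℂ h (ball c R)) {q : ℝ} (hq : 1 < q) :
    ‖h c‖ₑ ^ q * dA (ball c R) ≤ ∫⁻ z in ball c R, ‖h z‖ₑ ^ q ∂dA := by
  have hV : dA (ball c R) = ENNReal.ofReal (R ^ 2) := dA_ball c hR.le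
  have hV₀ : dA (ball c R) ≠ 0 := by simp [hV, hR.ne']
  have hV₁ : dA (ball c R) ≠ ⊤ := hV ▸ ENNReal.ofReal_ne_top
  have jensen := rpow_lintegral_le_weighted (μ := dA.restrict (ball c R))
    (Real.HolderConjugate.conjExponent hq) (ω := 1) aemeasurable_const (by simp)
    hm.enorm.aemeasurable
  simp only [Pi.one_apply, one_mul, ENNReal.one_rpow, lintegral_one, Measure.restrict_apply_univ]
    at jensen
  have hpow : (‖h c‖ₑ * dA (ball c R)) ^ q =
      ‖h c‖ₑ ^ q * dA (ball c R) * dA (ball c R) ^ (q - 1) := by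
    nth_rw 2 [← ENNReal.rpow_one (dA (ball c R))]
    rw [ENNReal.mul_rpow_of_nonneg _ _ (by linarith), mul_assoc,
      ← ENNReal.rpow_add _ _ hV₀ hV₁, add_sub_cancel]
  have hle :=
    (ENNReal.rpow_le_rpow (enorm_mul_dA_ball_le_lintegral hm hd) (by linarith)).trans jensen
  rw [hpow] at hle
  exact (ENNReal.mul_le_mul_iff_left (ENNReal.rpow_pos (pos_iff_ne_zero.2 hV₀) hV₁).ne'
    (ENNReal.rpow_ne_top_of_nonneg (by linarith) hV₁)).1 hle

end SubMeanValue

section RadialGrowth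

/-- A nontangential approach region of the disc, with aperture large enough to contain the balls
`B(ρξ, (1 - ρ) / 2)`, `0 < ρ < R`, along the radius from `0` to `w = Rξ`. -/
def stolzRegion (w : ℂ) : Set ℂ := {u | ‖u‖ < 1 ∧ ‖1 - conj u * w‖ ≤ 5 * (1 - ‖u‖)}

lemma abs_norm_sub_le_of_mem_ball {ξ u : ℂ} {ρ δ : ℝ} (hξ : ‖ξ‖ = 1) (hρ : 0 ≤ ρ)
    (hu : u ∈ ball (ρ * ξ) δ) : |‖u‖ - ρ| < δ := by
  have hnorm : ‖(ρ : ℂ) * ξ‖ = ρ := by simp [hξ, hρ]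
  calc |‖u‖ - ρ| = |‖u‖ - ‖(ρ : ℂ) * ξ‖| := by rw [hnorm]
    _ ≤ ‖u - ρ * ξ‖ := abs_norm_sub_norm_le _ _
    _ < δ := mem_ball_iff_norm.1 hu

lemma measurableSet_stolzRegion (w : ℂ) : MeasurableSet (stolzRegion w) :=
  (measurableSet_lt (f := fun u : ℂ ↦ ‖u‖) (by fun_prop) measurable_const).inter
    (measurableSet_le (f := fun u : ℂ ↦ ‖1 - conj u * w‖) (g := fun u : ℂ ↦ 5 * (1 - ‖u‖))
      (by fun_prop) (by fun_prop))

lemma mem_stolzRegion_of_mem_ball {ξ u : ℂ} {ρ R : ℝ} (hξ : ‖ξ‖ = 1) (hρ : ρ ∈ Ioo 0 R)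
    (hR : R < 1) (hu : u ∈ ball (ρ * ξ) ((1 - ρ) / 2)) : u ∈ stolzRegion (R * ξ) := by
  have hclose := abs_lt.1 (abs_norm_sub_le_of_mem_ball hξ hρ.1.le hu)
  have hu₁ : ‖u‖ < 1 := by linarith [hρ.2]
  refine ⟨hu₁, ?_⟩
  have hsplit : 1 - conj u * (R * ξ) =
      ((1 - ‖u‖ ^ 2 : ℝ) : ℂ) + conj u * ((u - ρ * ξ) - ((R - ρ : ℝ) : ℂ) * ξ) := by
    have := Complex.conj_mul' u
    push_cast
    linear_combination -this
  have htail : ‖conj u * ((u - ρ * ξ) - ((R - ρ : ℝ) : ℂ) * ξ)‖ ≤ 1 * ((1 - ρ) / 2 + (R - ρ)) := by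
    rw [norm_mul, RCLike.norm_conj]
    gcongr
    refine (norm_sub_le _ _).trans (add_le_add (mem_ball_iff_norm.1 hu).le ?_)
    rw [norm_mul, hξ, mul_one, Complex.norm_real, Real.norm_of_nonneg (by linarith [hρ.2])]
  calc ‖1 - conj u * (R * ξ)‖ ≤ (1 - ‖u‖ ^ 2) + 1 * ((1 - ρ) / 2 + (R - ρ)) := by
        rw [hsplit]
        refine (norm_add_le _ _).trans (add_le_add ?_ htail)
        rw [Complex.norm_real, Real.norm_of_nonneg (one_sub_norm_sq_pos hu₁).le]
    _ ≤ 5 * (1 - ‖u‖) := by nlinarith [norm_nonneg u]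

lemma volume_radius_section_le {ξ : ℂ} {R : ℝ} (hξ : ‖ξ‖ = 1) (hR : R < 1) (u : ℂ) :
    volume ({ρ : ℝ | u ∈ ball (ρ * ξ) ((1 - ρ) / 2)} ∩ Ioo 0 R) ≤
      (stolzRegion (R * ξ)).indicator (fun u ↦ ENNReal.ofReal (2 * (1 - ‖u‖))) u := by
  by_cases hu : u ∈ stolzRegion (R * ξ)
  · have hsub : {ρ : ℝ | u ∈ ball (ρ * ξ) ((1 - ρ) / 2)} ∩ Ioo 0 R ⊆ ball ‖u‖ (1 - ‖u‖) := by
      rintro ρ ⟨hρu, hρ⟩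
      have hclose := abs_lt.1 (abs_norm_sub_le_of_mem_ball hξ hρ.1.le hρu)
      rw [Real.ball_eq_Ioo]
      constructor <;> linarith
    calc _ ≤ volume (ball ‖u‖ (1 - ‖u‖)) := measure_mono hsub
      _ = _ := by rw [Real.volume_ball, indicator_of_mem hu]
  · have hempty : {ρ : ℝ | u ∈ ball (ρ * ξ) ((1 - ρ) / 2)} ∩ Ioo 0 R = ∅ :=
      eq_empty_of_forall_notMem fun ρ hρ ↦ hu (mem_stolzRegion_of_mem_ball hξ hρ.2 hR hρ.1)
    rw [hempty, measure_empty]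
    exact bot_le

lemma rpow_le_two_rpow_abs_mul_rpow {x y e : ℝ} (hx : 0 < x) (hy : 0 < y) (hxy : x ≤ 2 * y)
    (hyx : y ≤ 2 * x) : x ^ e ≤ 2 ^ |e| * y ^ e := by
  rcases le_total 0 e with he | he
  · rw [abs_of_nonneg he, ← Real.mul_rpow zero_le_two hy.le]
    exact Real.rpow_le_rpow hx.le hxy he
  · calc x ^ e ≤ (2⁻¹ * y) ^ e := Real.rpow_le_rpow_of_nonpos (by positivity) (by linarith) he
      _ = 2 ^ |e| * y ^ e := by
        rw [abs_of_nonpos he, Real.mul_rpow (by positivity) hy.le, Real.inv_rpow zero_le_two,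
          Real.rpow_neg zero_le_two]

lemma lintegral_section_swap {α β : Type*} [MeasurableSpace α] [MeasurableSpace β]
    {μ : Measure α} {ν : Measure β} [SFinite μ] [SFinite ν] {T : Set (α × β)}
    (hT : MeasurableSet T) {F : α × β → ℝ≥0∞} (hF : Measurable F) :
    ∫⁻ x, ∫⁻ y in {y | (x, y) ∈ T}, F (x, y) ∂ν ∂μ =
      ∫⁻ y, ∫⁻ x in {x | (x, y) ∈ T}, F (x, y) ∂μ ∂ν := by
  have hx (x : α) : ∫⁻ y in {y | (x, y) ∈ T}, F (x, y) ∂ν = ∫⁻ y, T.indicator F (x, y) ∂ν :=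
    (lintegral_indicator (hT.preimage measurable_prodMk_left) _).symm
  have hy (y : β) : ∫⁻ x in {x | (x, y) ∈ T}, F (x, y) ∂μ = ∫⁻ x, T.indicator F (x, y) ∂μ :=
    (lintegral_indicator (hT.preimage measurable_prodMk_right) _).symm
  simp_rw [hx, hy]
  exact lintegral_lintegral_swap (hF.indicator hT).aemeasurable

variable {f h : ℂ → ℂ} {ξ w : ℂ} {q ρ R : ℝ}

lemma rpow_mul_enorm_rpow_le_lintegral_ball (hm : Measurable h)
    (hd : DifferentiableOn ℂ h 𝔻) (hξ : ‖ξ‖ = 1) (hρ : ρ ∈ Ioo 0 1) (hq : 1 < q) (γ : ℝ) :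
    ENNReal.ofReal ((1 - ρ) ^ (γ + 1)) * ‖h (ρ * ξ)‖ₑ ^ q ≤
      ENNReal.ofReal (4 * 2 ^ |γ - 1|) * ∫⁻ u in ball (ρ * ξ) ((1 - ρ) / 2),
        ENNReal.ofReal ((1 - ‖u‖) ^ (γ - 1)) * ‖h u‖ₑ ^ q ∂dA := by
  have hX : 0 < 1 - ρ := sub_pos.2 hρ.2
  set X := 1 - ρ
  have hclose {u : ℂ} (hu : u ∈ ball (ρ * ξ) (X / 2)) :=
    abs_lt.1 (abs_norm_sub_le_of_mem_ball hξ hρ.1.le hu)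
  have hsub : ball (ρ * ξ) (X / 2) ⊆ 𝔻 := fun u hu ↦ by
    rw [mem_ball_zero_iff]
    linarith [hclose hu]
  calc ENNReal.ofReal (X ^ (γ + 1)) * ‖h (ρ * ξ)‖ₑ ^ q
      = ENNReal.ofReal (4 * X ^ (γ - 1)) * (‖h (ρ * ξ)‖ₑ ^ q * dA (ball (ρ * ξ) (X / 2))) := by
        rw [dA_ball _ (by positivity), mul_comm (‖_‖ₑ ^ q), ← mul_assoc,
          ← ENNReal.ofReal_mul (by positivity), show γ + 1 = γ - 1 + 2 by ring,
          Real.rpow_add hX, Real.rpow_two]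
        congr 2
        ring
    _ ≤ ENNReal.ofReal (4 * X ^ (γ - 1)) * ∫⁻ u in ball (ρ * ξ) (X / 2), ‖h u‖ₑ ^ q ∂dA := by
        gcongr
        exact enorm_rpow_mul_dA_ball_le_lintegral hm (by positivity) (hd.mono hsub) hq
    _ ≤ ENNReal.ofReal (4 * 2 ^ |γ - 1|) * ∫⁻ u in ball (ρ * ξ) (X / 2),
          ENNReal.ofReal ((1 - ‖u‖) ^ (γ - 1)) * ‖h u‖ₑ ^ q ∂dA := by
        rw [← lintegral_const_mul' _ _ ENNReal.ofReal_ne_top,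
          ← lintegral_const_mul' _ _ ENNReal.ofReal_ne_top]
        refine setLIntegral_mono' measurableSet_ball fun u hu ↦ ?_
        rw [← mul_assoc, ← ENNReal.ofReal_mul (by positivity), mul_assoc 4]
        gcongr
        exact rpow_le_two_rpow_abs_mul_rpow hX (by linarith [hclose hu]) (by linarith [hclose hu])
          (by linarith [hclose hu])

lemma lintegral_radius_le_lintegral_stolzRegion (hm : Measurable h)
    (hd : DifferentiableOn ℂ h 𝔻) (hξ : ‖ξ‖ = 1) (hR : R < 1) (hq : 1 < q) (γ : ℝ) :
    ∫⁻ ρ in Ioo 0 R, ENNReal.ofReal ((1 - ρ) ^ (γ + 1)) * ‖h (ρ * ξ)‖ₑ ^ q ≤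
      ENNReal.ofReal (8 * 2 ^ |γ - 1|) * ∫⁻ u in stolzRegion (R * ξ),
        ENNReal.ofReal ((1 - ‖u‖) ^ γ) * ‖h u‖ₑ ^ q ∂dA := by
  let c : ℂ → ℝ≥0∞ := fun u ↦ ENNReal.ofReal ((1 - ‖u‖) ^ (γ - 1)) * ‖h u‖ₑ ^ q
  let T : Set (ℝ × ℂ) := {x | dist x.2 (x.1 * ξ) < (1 - x.1) / 2}
  have hT : MeasurableSet T := measurableSet_lt (by fun_prop) (by fun_prop)
  have hsection (u : ℂ) : ∫⁻ _ in {ρ | (ρ, u) ∈ T}, c u ∂volume.restrict (Ioo 0 R) ≤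
      (stolzRegion (R * ξ)).indicator
        (fun u ↦ 2 * (ENNReal.ofReal ((1 - ‖u‖) ^ γ) * ‖h u‖ₑ ^ q)) u := by
    rw [setLIntegral_const, Measure.restrict_apply' measurableSet_Ioo]
    refine (mul_le_mul_right (volume_radius_section_le hξ hR u) (c u)).trans_eq ?_
    by_cases hu : u ∈ stolzRegion (R * ξ)
    · have hpos : 0 < 1 - ‖u‖ := sub_pos.2 hu.1
      have hpow : (1 - ‖u‖) ^ γ = (1 - ‖u‖) ^ (γ - 1) * (1 - ‖u‖) := by
        rw [← Real.rpow_add_one hpos.ne', sub_add_cancel]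
      rw [indicator_of_mem hu, indicator_of_mem hu, hpow, ENNReal.ofReal_mul zero_le_two,
        ENNReal.ofReal_mul (Real.rpow_nonneg hpos.le _), ENNReal.ofReal_ofNat]
      simp only [c]
      ring
    · simp [hu]
  calc _ ≤ ∫⁻ ρ in Ioo 0 R, ENNReal.ofReal (4 * 2 ^ |γ - 1|) * ∫⁻ u in {u | (ρ, u) ∈ T}, c u ∂dA :=
        setLIntegral_mono' measurableSet_Ioo fun ρ hρ ↦
          rpow_mul_enorm_rpow_le_lintegral_ball hm hd hξ ⟨hρ.1, hρ.2.trans hR⟩ hq γ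
    _ = ENNReal.ofReal (4 * 2 ^ |γ - 1|) *
          ∫⁻ u, ∫⁻ _ in {ρ | (ρ, u) ∈ T}, c u ∂volume.restrict (Ioo 0 R) ∂dA := by
        rw [lintegral_const_mul' _ _ ENNReal.ofReal_ne_top]
        congr 1
        exact lintegral_section_swap hT (F := fun x ↦ c x.2) (by fun_prop)
    _ ≤ ENNReal.ofReal (4 * 2 ^ |γ - 1|) * ∫⁻ u in stolzRegion (R * ξ),
          2 * (ENNReal.ofReal ((1 - ‖u‖) ^ γ) * ‖h u‖ₑ ^ q) ∂dA := by
        rw [← lintegral_indicator (measurableSet_stolzRegion _)]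
        gcongr with u
        exact hsection u
    _ = _ := by
        rw [lintegral_const_mul' _ _ (by simp), ← mul_assoc, ← ENNReal.ofReal_ofNat 2,
          ← ENNReal.ofReal_mul (by positivity)]
        congr 2
        ring

lemma enorm_sub_le_lintegral_radius (hf : HolOn f) (hξ : ‖ξ‖ = 1) (hR₀ : 0 ≤ R) (hR : R < 1) :
    ‖f (R * ξ) - f 0‖ₑ ≤ ∫⁻ ρ in Ioo 0 R, ‖deriv f (ρ * ξ)‖ₑ := by
  have hmem {ρ : ℝ} (hρ : ρ ∈ uIcc 0 R) : (ρ : ℂ) * ξ ∈ 𝔻 := by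
    rw [uIcc_of_le hR₀] at hρ
    rw [mem_ball_zero_iff, norm_mul, hξ, mul_one, Complex.norm_real, Real.norm_of_nonneg hρ.1]
    exact hρ.2.trans_lt hR
  have hderiv (ρ : ℝ) (hρ : ρ ∈ uIcc 0 R) :
      HasDerivAt (fun ρ : ℝ ↦ f (ρ * ξ)) (deriv f (ρ * ξ) * ξ) ρ := by
    have hline : HasDerivAt (fun z : ℂ ↦ z * ξ) ξ ρ := by
      simpa using (hasDerivAt_id (ρ : ℂ)).mul_const ξ
    exact (HasDerivAt.comp (h := fun z : ℂ ↦ z * ξ) (ρ : ℂ)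
      (hf.differentiableAt (isOpen_ball.mem_nhds (hmem hρ))).hasDerivAt hline).comp_ofReal
  have hcont : ContinuousOn (fun ρ : ℝ ↦ deriv f (ρ * ξ) * ξ) (uIcc 0 R) :=
    ((hf.deriv isOpen_ball).continuousOn.comp (by fun_prop) fun _ ↦ hmem).mul continuousOn_const
  have hftc := intervalIntegral.integral_eq_sub_of_hasDerivAt hderiv hcont.intervalIntegrable
  rw [Complex.ofReal_zero, zero_mul, intervalIntegral.integral_of_le hR₀] at hftc
  rw [← hftc, restrict_Ioo_eq_restrict_Ioc]
  refine (enorm_integral_le_lintegral_enorm _).trans_eq (lintegral_congr fun ρ ↦ ?_)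
  rw [enorm_mul, ← ofReal_norm ξ, hξ, ENNReal.ofReal_one, mul_one]

lemma enorm_sub_rpow_le_lintegral_stolzRegion {q q' : ℝ} (hq : q.HolderConjugate q')
    (hf : HolOn f) (hw : ‖w‖ < 1) (γ : ℝ) :
    ‖f w - f 0‖ₑ ^ q ≤ ENNReal.ofReal (8 * 2 ^ |γ - 1|) *
      (∫⁻ u in stolzRegion w, ENNReal.ofReal ((1 - ‖u‖) ^ γ) * ‖deriv f u‖ₑ ^ q ∂dA) *
      (∫⁻ ρ in Ioo 0 ‖w‖, ENNReal.ofReal ((1 - ρ) ^ ((γ + 1) * (1 - q')))) ^ (q - 1) := by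
  obtain ⟨ξ, hξ, hwξ⟩ : ∃ ξ : ℂ, ‖ξ‖ = 1 ∧ w = ‖w‖ * ξ :=
    ⟨_, Complex.norm_exp_ofReal_mul_I w.arg, (Complex.norm_mul_exp_arg_mul_I w).symm⟩
  have one_sub_pos {ρ : ℝ} (hρ : ρ ∈ Ioo 0 ‖w‖) : 0 < 1 - ρ := by linarith [hρ.2]
  have hm := measurable_deriv f
  calc ‖f w - f 0‖ₑ ^ q ≤ (∫⁻ ρ in Ioo 0 ‖w‖, ‖deriv f (ρ * ξ)‖ₑ) ^ q := by
        conv_lhs => rw [hwξ]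
        gcongr
        · exact hq.nonneg
        · exact enorm_sub_le_lintegral_radius hf hξ (norm_nonneg w) hw
    _ ≤ (∫⁻ ρ in Ioo 0 ‖w‖, ENNReal.ofReal ((1 - ρ) ^ (γ + 1)) * ‖deriv f (ρ * ξ)‖ₑ ^ q) *
        (∫⁻ ρ in Ioo 0 ‖w‖, ENNReal.ofReal ((1 - ρ) ^ (γ + 1)) ^ (1 - q')) ^ (q - 1) :=
      rpow_lintegral_le_weighted hq (by fun_prop)
        (ae_restrict_of_forall_mem measurableSet_Ioo fun ρ hρ ↦
          ⟨by simpa using Real.rpow_pos_of_pos (one_sub_pos hρ) _, ENNReal.ofReal_ne_top⟩)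
        (by fun_prop)
    _ ≤ _ := by
      gcongr ?_ * ?_ ^ _
      · conv_rhs => rw [hwξ]
        exact lintegral_radius_le_lintegral_stolzRegion hm (hf.deriv isOpen_ball) hξ hw hq.lt γ
      · exact hq.sub_one_pos.le
      · refine (setLIntegral_congr_fun measurableSet_Ioo fun ρ hρ ↦ ?_).le
        have hρ := one_sub_pos hρ
        rw [ENNReal.ofReal_rpow_of_pos (by positivity), ← Real.rpow_mul hρ.le]

lemma lintegral_Ioo_one_sub_rpow (hR₀ : 0 ≤ R) (hR : R < 1) (c : ℝ) :
    ∫⁻ ρ in Ioo 0 R, ENNReal.ofReal ((1 - ρ) ^ c) = ENNReal.ofReal (∫ x in (1 - R)..1, x ^ c) := by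
  have one_sub_pos {ρ : ℝ} (hρ : ρ ∈ Icc 0 R) : 0 < 1 - ρ := by linarith [hρ.2]
  have hcont : ContinuousOn (fun ρ : ℝ ↦ (1 - ρ) ^ c) (Icc 0 R) :=
    ContinuousOn.rpow_const (by fun_prop) fun ρ hρ ↦ .inl (one_sub_pos hρ).ne'
  have hsubst := intervalIntegral.integral_comp_sub_left (fun x : ℝ ↦ x ^ c) 1 (a := 0) (b := R)
  rw [sub_zero] at hsubst
  rw [← hsubst, intervalIntegral.integral_of_le hR₀, restrict_Ioo_eq_restrict_Ioc,
    ofReal_integral_eq_lintegral_ofReal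
      (hcont.integrableOn_Icc.mono_set Ioc_subset_Icc_self)
      (ae_restrict_of_forall_mem measurableSet_Ioc fun ρ hρ ↦
        Real.rpow_nonneg (one_sub_pos (Ioc_subset_Icc_self hρ)).le c)]

lemma lintegral_Ioo_one_sub_rpow_neg_one_le (hw : ‖w‖ < 1) :
    ∫⁻ ρ in Ioo 0 ‖w‖, ENNReal.ofReal ((1 - ρ) ^ (-1 : ℝ)) ≤ ENNReal.ofReal (logWeight w) := by
  have hw' : 0 < 1 - ‖w‖ := sub_pos.2 hw
  rw [lintegral_Ioo_one_sub_rpow (norm_nonneg w) hw]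
  simp_rw [Real.rpow_neg_one]
  rw [integral_inv_of_pos hw' one_pos, logWeight]
  gcongr
  norm_num

lemma lintegral_Ioo_one_sub_rpow_le (hR₀ : 0 ≤ R) (hR : R < 1) {c : ℝ} (hc : -1 < c) :
    ∫⁻ ρ in Ioo 0 R, ENNReal.ofReal ((1 - ρ) ^ c) ≤ ENNReal.ofReal (1 / (c + 1)) := by
  have hc' : 0 < c + 1 := by linarith
  rw [lintegral_Ioo_one_sub_rpow hR₀ hR, integral_rpow (.inl hc), Real.one_rpow]
  gcongr
  exact sub_le_self _ (Real.rpow_nonneg (sub_nonneg.2 hR.le) _)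

lemma exists_enorm_sub_sq_le_lintegral_stolzRegion {γ : ℝ} (hγ : γ < 0) :
    ∃ C : ℝ≥0, ∀ f, HolOn f → ∀ w ∈ 𝔻, ‖f w - f 0‖ₑ ^ 2 ≤
      C * ∫⁻ u in stolzRegion w, ENNReal.ofReal ((1 - ‖u‖) ^ γ) * ‖deriv f u‖ₑ ^ 2 ∂dA := by
  refine ⟨(8 * 2 ^ |γ - 1| : ℝ).toNNReal * (1 / (-γ) : ℝ).toNNReal, fun f hf w hw ↦ ?_⟩
  have hw := mem_ball_zero_iff.1 hw
  have growth := enorm_sub_rpow_le_lintegral_stolzRegion .two_two hf hw γ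
  simp only [ENNReal.rpow_two, show (γ + 1) * (1 - 2) = -γ - 1 by ring,
    show (2 : ℝ) - 1 = 1 by norm_num, ENNReal.rpow_one] at growth
  refine growth.trans ?_
  rw [ENNReal.coe_mul, mul_right_comm]
  gcongr
  · exact le_rfl
  refine (lintegral_Ioo_one_sub_rpow_le (norm_nonneg w) hw (c := -γ - 1) (by linarith)).trans_eq ?_
  rw [sub_add_cancel]
  rfl

lemma exists_enorm_sub_le_besovNorm {p p' : ℝ} (hp : p.HolderConjugate p') :
    ∃ C : ℝ≥0, ∀ f, HolOn f → ∀ a ∈ 𝔻,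
      ‖f a - f 0‖ₑ ≤ C * besovNorm p f * ENNReal.ofReal (logWeight a ^ (1 / p')) := by
  refine ⟨(8 * 2 ^ |p - 2 - 1| : ℝ).toNNReal ^ (1 / p), fun f hf a ha ↦ ?_⟩
  have ha := mem_ball_zero_iff.1 ha
  have hL := logWeight_pos ha
  have hexp : (p - 2 + 1) * (1 - p') = -1 := by linear_combination -hp.sub_one_mul_conj
  have hpow : 1 / p' * p = p - 1 := by rw [one_div_mul_eq_div, hp.div_conj_eq_sub_one]
  have growth := enorm_sub_rpow_le_lintegral_stolzRegion hp hf ha (p - 2)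
  rw [hexp] at growth
  rw [← ENNReal.rpow_le_rpow_iff hp.pos, ENNReal.mul_rpow_of_nonneg _ _ hp.nonneg,
    ENNReal.mul_rpow_of_nonneg _ _ hp.nonneg, besovNorm_rpow hp.pos,
    ENNReal.ofReal_rpow_of_pos (by positivity), ← Real.rpow_mul hL.le, hpow,
    ← ENNReal.ofReal_rpow_of_pos hL, ← ENNReal.coe_rpow_of_nonneg _ hp.nonneg,
    ← NNReal.rpow_mul, one_div_mul_cancel hp.ne_zero, NNReal.rpow_one]
  refine growth.trans (mul_le_mul' (mul_le_mul_right ?_ _) ?_)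
  · exact lintegral_mono_set fun u hu ↦ mem_ball_zero_iff.2 hu.1
  · exact ENNReal.rpow_le_rpow (lintegral_Ioo_one_sub_rpow_neg_one_le ha) hp.sub_one_pos.le

end RadialGrowth

section BlochEstimate

lemma enorm_deriv_zero_le_qsNorm (s : ℝ) {G : ℂ → ℂ} (hG : HolOn G) :
    ‖deriv G 0‖ₑ ≤ NNReal.sqrt (4 * (4 / 3) ^ |s|) * qsNorm s 0 G := by
  have hsub : ball (0 : ℂ) (1 / 2) ⊆ 𝔻 := ball_subset_ball (by norm_num)
  have hweight {w : ℂ} (hw : w ∈ ball (0 : ℂ) (1 / 2)) :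
      1 ≤ ((4 / 3 : ℝ≥0) ^ |s| : ℝ≥0) * ENNReal.ofReal ((1 - ‖w‖ ^ 2) ^ s) := by
    have hw := mem_ball_zero_iff.1 hw
    have hw' : 3 / 4 ≤ 1 - ‖w‖ ^ 2 := by nlinarith [norm_nonneg w]
    have hw₀ : 0 < 1 - ‖w‖ ^ 2 := by linarith
    have hw₁ : 1 - ‖w‖ ^ 2 ≤ 1 := by nlinarith [norm_nonneg w]
    rw [← ENNReal.ofReal_coe_nnreal, ← ENNReal.ofReal_mul (by positivity), ENNReal.one_le_ofReal]
    push_cast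
    calc (1 : ℝ) = (4 / 3) ^ |s| * (3 / 4) ^ |s| := by
          rw [← Real.mul_rpow (by norm_num) (by norm_num)]
          norm_num
      _ ≤ (4 / 3) ^ |s| * (1 - ‖w‖ ^ 2) ^ |s| := by gcongr
      _ ≤ (4 / 3) ^ |s| * (1 - ‖w‖ ^ 2) ^ s :=
          mul_le_mul_of_nonneg_left (Real.rpow_le_rpow_of_exponent_ge hw₀ hw₁ (le_abs_self s))
            (by positivity)
  have hmean := enorm_rpow_mul_dA_ball_le_lintegral (measurable_deriv G)
    (show (0 : ℝ) < 1 / 2 by norm_num) ((hG.deriv isOpen_ball).mono hsub) one_lt_two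
  have hquarter : 4 * dA (ball (0 : ℂ) (1 / 2)) = 1 := by
    rw [dA_ball 0 (by norm_num), ← ENNReal.ofReal_ofNat, ← ENNReal.ofReal_mul (by norm_num)]
    norm_num
  refine le_sqrt_mul_of_sq_le_mul_sq ?_
  simp_rw [qsNorm, eLpNorm_qsMeasure_sq, norm_phi_zero_left]
  simp only [ENNReal.rpow_two] at hmean
  calc ‖deriv G 0‖ₑ ^ 2 = 4 * (‖deriv G 0‖ₑ ^ 2 * dA (ball 0 (1 / 2))) := by
        rw [mul_left_comm, hquarter, mul_one]
    _ ≤ 4 * ∫⁻ w in ball (0 : ℂ) (1 / 2), ((4 / 3 : ℝ≥0) ^ |s| : ℝ≥0) *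
          (ENNReal.ofReal ((1 - ‖w‖ ^ 2) ^ s) * ‖deriv G w‖ₑ ^ 2) ∂dA := by
        refine mul_le_mul_right (hmean.trans (setLIntegral_mono' measurableSet_ball
          fun w hw ↦ ?_)) _
        rw [← mul_assoc]
        exact le_mul_of_one_le_left' (hweight hw)
    _ ≤ 4 * (((4 / 3 : ℝ≥0) ^ |s| : ℝ≥0) *
          ∫⁻ w in 𝔻, ENNReal.ofReal ((1 - ‖w‖ ^ 2) ^ s) * ‖deriv G w‖ₑ ^ 2 ∂dA) := by
        rw [lintegral_const_mul' _ _ ENNReal.coe_ne_top]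
        exact mul_le_mul_right (mul_le_mul_right (lintegral_mono_set hsub) _) _
    _ = _ := by
        rw [← mul_assoc]
        rfl

lemma enorm_deriv_mul_le_qsNorm (s : ℝ) {f : ℂ → ℂ} (hf : HolOn f) {a : ℂ} (ha : ‖a‖ < 1) :
    ‖deriv f a‖ₑ * ENNReal.ofReal (1 - ‖a‖ ^ 2) ≤
      NNReal.sqrt (4 * (4 / 3) ^ |s|) * qsNorm s a f := by
  have hφ := differentiableAt_phi ha (z := 0) (by simp)
  have hf' : DifferentiableAt ℂ f (phi a 0) := by
    rw [phi_zero_right]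
    exact hf.differentiableAt (isOpen_ball.mem_nhds (mem_ball_zero_iff.2 ha))
  have hderiv : deriv (f ∘ phi a) 0 = deriv f a * deriv (phi a) 0 := by
    rw [deriv_comp 0 hf' hφ, phi_zero_right]
  have hφ₀ : ‖deriv (phi a) 0‖ₑ = ENNReal.ofReal (1 - ‖a‖ ^ 2) := by
    rw [← ofReal_norm, norm_deriv_phi ha (by simp), phi_zero_right]
    simp
  rw [qsNorm_eq_qsNorm_comp_phi ha ha s hf, phi_self, ← hφ₀, ← enorm_mul, ← hderiv]
  exact enorm_deriv_zero_le_qsNorm s (hf.comp (holOn_phi ha) (mapsTo_phi ha))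

end BlochEstimate

section CarlesonEstimate

variable {s t : ℝ}

lemma rpow_mul_rpow_le_of_mem_stolzRegion (ht : 0 < t) (hts : t < s) {u w : ℂ} (hw : ‖w‖ < 1)
    (hu : u ∈ stolzRegion w) :
    (1 - ‖w‖ ^ 2) ^ s * (1 - ‖u‖) ^ (t - s) ≤
      25 ^ s * ((1 - ‖u‖ ^ 2) ^ t * (1 - ‖phi u w‖ ^ 2) ^ s) := by
  obtain ⟨hu, hstolz⟩ := hu
  have hs : 0 < s := ht.trans hts
  have hu₁ : 0 < 1 - ‖u‖ := sub_pos.2 hu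
  have hw₂ := one_sub_norm_sq_pos hw
  have hφ := one_sub_norm_phi_sq_pos hu hw
  have hle : 1 - ‖u‖ ≤ 1 - ‖u‖ ^ 2 := by nlinarith [norm_nonneg u]
  have hbase : (1 - ‖w‖ ^ 2) / (1 - ‖u‖) ≤ 25 * (1 - ‖phi u w‖ ^ 2) := by
    have hden := norm_one_sub_conj_mul_pos hu hw
    rw [one_sub_norm_phi_sq hu hw, div_le_iff₀ hu₁, mul_div_assoc', div_mul_eq_mul_div,
      le_div_iff₀ (by positivity)]
    calc (1 - ‖w‖ ^ 2) * ‖1 - conj u * w‖ ^ 2 ≤ (1 - ‖w‖ ^ 2) * (5 * (1 - ‖u‖)) ^ 2 := by gcongr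
      _ = 25 * ((1 - ‖u‖) * (1 - ‖w‖ ^ 2)) * (1 - ‖u‖) := by ring
      _ ≤ 25 * ((1 - ‖u‖ ^ 2) * (1 - ‖w‖ ^ 2)) * (1 - ‖u‖) := by gcongr
  calc (1 - ‖w‖ ^ 2) ^ s * (1 - ‖u‖) ^ (t - s)
      = ((1 - ‖w‖ ^ 2) / (1 - ‖u‖)) ^ s * (1 - ‖u‖) ^ t := by
        rw [Real.div_rpow hw₂.le hu₁.le, Real.rpow_sub hu₁]
        ring
    _ ≤ (25 * (1 - ‖phi u w‖ ^ 2)) ^ s * (1 - ‖u‖ ^ 2) ^ t := by gcongr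
    _ = 25 ^ s * ((1 - ‖u‖ ^ 2) ^ t * (1 - ‖phi u w‖ ^ 2) ^ s) := by
        rw [Real.mul_rpow (by norm_num) hφ.le]
        ring

lemma exists_enorm_sub_sq_mul_le_lintegral (ht : 0 < t) (hts : t < s) :
    ∃ C : ℝ≥0, ∀ f, HolOn f → ∀ w ∈ 𝔻,
      ENNReal.ofReal ((1 - ‖w‖ ^ 2) ^ s) * ‖f w - f 0‖ₑ ^ 2 ≤
        C * ∫⁻ u in 𝔻, ENNReal.ofReal ((1 - ‖u‖ ^ 2) ^ t) * ‖deriv f u‖ₑ ^ 2 *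
          ENNReal.ofReal ((1 - ‖phi u w‖ ^ 2) ^ s) ∂dA := by
  obtain ⟨C, growth⟩ := exists_enorm_sub_sq_le_lintegral_stolzRegion (sub_neg.2 hts)
  refine ⟨C * (25 ^ s : ℝ).toNNReal, fun f hf w hw ↦ ?_⟩
  have hw₁ := mem_ball_zero_iff.1 hw
  have hw₂ := one_sub_norm_sq_pos hw₁
  calc _ ≤ ENNReal.ofReal ((1 - ‖w‖ ^ 2) ^ s) * (C * ∫⁻ u in stolzRegion w,
          ENNReal.ofReal ((1 - ‖u‖) ^ (t - s)) * ‖deriv f u‖ₑ ^ 2 ∂dA) := by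
        gcongr
        exact growth f hf w hw
    _ = C * ∫⁻ u in stolzRegion w, ENNReal.ofReal ((1 - ‖w‖ ^ 2) ^ s) *
          (ENNReal.ofReal ((1 - ‖u‖) ^ (t - s)) * ‖deriv f u‖ₑ ^ 2) ∂dA := by
        rw [lintegral_const_mul' _ _ ENNReal.ofReal_ne_top, mul_left_comm]
    _ ≤ C * ∫⁻ u in stolzRegion w, ENNReal.ofReal (25 ^ s) *
          (ENNReal.ofReal ((1 - ‖u‖ ^ 2) ^ t) * ‖deriv f u‖ₑ ^ 2 *
            ENNReal.ofReal ((1 - ‖phi u w‖ ^ 2) ^ s)) ∂dA := by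
        refine mul_le_mul_right (setLIntegral_mono' (measurableSet_stolzRegion w) fun u hu ↦ ?_) _
        have hu₂ := one_sub_norm_sq_pos hu.1
        rw [← mul_assoc, ← ENNReal.ofReal_mul (by positivity), mul_right_comm, ← mul_assoc,
          ← ENNReal.ofReal_mul (by positivity), ← ENNReal.ofReal_mul (by positivity)]
        exact mul_le_mul_left
          (ENNReal.ofReal_le_ofReal (rpow_mul_rpow_le_of_mem_stolzRegion ht hts hw₁ hu)) _
    _ ≤ _ := by
        rw [lintegral_const_mul' _ _ ENNReal.ofReal_ne_top, ENNReal.coe_mul, mul_assoc]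
        exact mul_le_mul_right (mul_le_mul_right
          (lintegral_mono_set fun u hu ↦ mem_ball_zero_iff.2 hu.1) _) _

lemma exists_eLpNorm_sub_zero_mul_deriv_le (ht : 0 < t) (hts : t < s) :
    ∃ C : ℝ≥0, ∀ f g, HolOn f → ∀ M : ℝ≥0∞, (∀ b ∈ 𝔻, qsNorm s b g ≤ M) →
      eLpNorm (fun w ↦ (f w - f 0) * deriv g w) 2 (qsMeasure s 0) ≤ C * (M * qsNorm t 0 f) := by
  obtain ⟨C, hC⟩ := exists_enorm_sub_sq_mul_le_lintegral ht hts
  refine ⟨NNReal.sqrt C, fun f g hf M hM ↦ le_sqrt_mul_of_sq_le_mul_sq ?_⟩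
  rw [mul_pow, qsNorm, eLpNorm_qsMeasure_sq, eLpNorm_qsMeasure_sq]
  simp_rw [norm_phi_zero_left]
  calc _ ≤ ∫⁻ w in 𝔻, C * ∫⁻ u in 𝔻, ENNReal.ofReal ((1 - ‖u‖ ^ 2) ^ t) * ‖deriv f u‖ₑ ^ 2 *
          (ENNReal.ofReal ((1 - ‖phi u w‖ ^ 2) ^ s) * ‖deriv g w‖ₑ ^ 2) ∂dA ∂dA := by
        refine setLIntegral_mono' measurableSet_ball fun w hw ↦ ?_
        simp_rw [← mul_assoc]
        rw [lintegral_mul_const' _ _ (by simp), enorm_mul, mul_pow, ← mul_assoc, ← mul_assoc]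
        exact mul_le_mul_left (hC f hf w hw) _
    _ = C * ∫⁻ u in 𝔻, ENNReal.ofReal ((1 - ‖u‖ ^ 2) ^ t) * ‖deriv f u‖ₑ ^ 2 *
          qsNorm s u g ^ 2 ∂dA := by
        rw [lintegral_const_mul' _ _ (by simp), lintegral_lintegral_swap (by fun_prop)]
        simp_rw [qsNorm, eLpNorm_qsMeasure_sq]
        congr 2 with u
        rw [lintegral_const_mul _ (by fun_prop)]
    _ ≤ C * ∫⁻ u in 𝔻, ENNReal.ofReal ((1 - ‖u‖ ^ 2) ^ t) * ‖deriv f u‖ₑ ^ 2 * M ^ 2 ∂dA := by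
        refine mul_le_mul_right (setLIntegral_mono' measurableSet_ball fun u hu ↦ ?_) _
        gcongr
        exact hM u hu
    _ = _ := by rw [lintegral_mul_const _ (by fun_prop), mul_comm (M ^ 2)]

lemma exists_eLpNorm_sub_mul_deriv_le (ht : 0 < t) (hts : t < s) :
    ∃ C : ℝ≥0, ∀ f g, HolOn f → HolOn g → ∀ M : ℝ≥0∞, (∀ b ∈ 𝔻, qsNorm s b g ≤ M) →
      ∀ a ∈ 𝔻, eLpNorm (fun z ↦ (f z - f a) * deriv g z) 2 (qsMeasure s a) ≤
        C * (M * qsNorm t a f) := by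
  obtain ⟨C, hC⟩ := exists_eLpNorm_sub_zero_mul_deriv_le ht hts
  refine ⟨C, fun f g hf hg M hM a ha ↦ ?_⟩
  have ha' := mem_ball_zero_iff.1 ha
  have hM' (b : ℂ) (hb : b ∈ 𝔻) : qsNorm s b (g ∘ phi a) ≤ M := by
    have hb' := mem_ball_zero_iff.1 hb
    rw [← phi_phi ha' hb', ← qsNorm_eq_qsNorm_comp_phi ha' (norm_phi_lt_one ha' hb') s hg]
    exact hM _ (mapsTo_phi ha' hb)
  rw [eLpNorm_qsMeasure_eq_phi ha' ha', qsNorm_eq_qsNorm_comp_phi ha' ha' t hf, phi_self]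
  refine (eLpNorm_congr_ae (ae_weightedArea_of_forall_mem_ball _ fun w hw ↦ ?_)).trans_le
    (hC (f ∘ phi a) (g ∘ phi a) (hf.comp (holOn_phi ha') (mapsTo_phi ha')) M hM')
  have hw' := mem_ball_zero_iff.1 hw
  simp only [Function.comp_apply, phi_zero_right]
  rw [deriv_comp w (hg.differentiableAt (isOpen_ball.mem_nhds (mapsTo_phi ha' hw)))
    (differentiableAt_phi ha' hw'), mul_assoc]

end CarlesonEstimate

section UniformBoundedness

open scoped lp

lemma lowerSemicontinuous_eLpNorm {X α F : Type*} [TopologicalSpace X] [SequentialSpace X]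
    [MeasurableSpace α] [NormedAddCommGroup F] {μ : Measure α} (p : ℝ≥0∞) {D : X → α → F}
    (hD : ∀ x, AEStronglyMeasurable (D x) μ) (hcont : ∀ᵐ z ∂μ, Continuous fun x ↦ D x z) :
    LowerSemicontinuous fun x ↦ eLpNorm (D x) p μ := by
  refine lowerSemicontinuous_iff_isClosed_preimage.2 fun M ↦ IsSeqClosed.isClosed ?_
  intro u x hu hux
  calc eLpNorm (D x) p μ ≤ liminf (fun n ↦ eLpNorm (D (u n)) p μ) atTop :=
        Lp.eLpNorm_lim_le_liminf_eLpNorm (fun n ↦ hD (u n)) _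
          (hcont.mono fun z hz ↦ (hz.tendsto x).comp hux)
    _ ≤ M := liminf_le_of_le (by isBoundedDefault) fun b hb ↦ by
        obtain ⟨n, hn⟩ := hb.exists
        exact hn.trans (hu n)

lemma exists_enorm_le_of_lowerSemicontinuous {E : Type*} [NormedAddCommGroup E]
    [NormedSpace ℂ E] [CompleteSpace E] {q : E → ℝ≥0∞} (hq : LowerSemicontinuous q)
    (hfin : ∀ x, q x ≠ ⊤) (hadd : ∀ x y, q (x + y) ≤ q x + q y)
    (hsmul : ∀ (c : ℂ) x, q (c • x) = ‖c‖ₑ * q x) :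
    ∃ C : ℝ≥0, ∀ x, q x ≤ C * ‖x‖ₑ := by
  let Q : Seminorm ℂ E := Seminorm.of (fun x ↦ (q x).toReal)
    (fun x y ↦ by
      rw [← ENNReal.toReal_add (hfin x) (hfin y)]
      exact ENNReal.toReal_mono (ENNReal.add_ne_top.2 ⟨hfin x, hfin y⟩) (hadd x y))
    (fun c x ↦ by rw [hsmul, ENNReal.toReal_mul, toReal_enorm])
  have hQ : LowerSemicontinuous Q := by
    intro x y hy
    rcases lt_or_ge y 0 with hneg | hnonneg
    · exact Eventually.of_forall fun x' ↦ hneg.trans_le ENNReal.toReal_nonneg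
    · refine (hq x _ ((ENNReal.ofReal_lt_iff_lt_toReal hnonneg (hfin x)).2 hy)).mono fun x' hx' ↦ ?_
      exact (ENNReal.ofReal_lt_iff_lt_toReal hnonneg (hfin x')).1 hx'
  obtain ⟨C, -, hC⟩ := Q.bound_of_continuous_normedSpace (Q.continuous_of_lowerSemicontinuous hQ)
  refine ⟨C.toNNReal, fun x ↦ ?_⟩
  rw [← ENNReal.ofReal_toReal (hfin x), ← ofReal_norm, ENNReal.ofNNReal_toNNReal,
    ← ENNReal.ofReal_mul' (norm_nonneg x)]
  exact ENNReal.ofReal_le_ofReal (hC x)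

lemma exists_eLpNorm_le_mul_enorm {ι α E : Type*} [MeasurableSpace α] [NormedAddCommGroup E]
    [NormedSpace ℂ E] [CompleteSpace E] {p : ℝ≥0∞} (hp : 1 ≤ p) {μ : ι → Measure α}
    {D : α → E →L[ℂ] ℂ} (hD : ∀ x i, AEStronglyMeasurable (fun z ↦ D z x) (μ i))
    (hfin : ∀ x, ∃ M : ℝ≥0, ∀ i, eLpNorm (fun z ↦ D z x) p (μ i) ≤ M) :
    ∃ C : ℝ≥0, ∀ x i, eLpNorm (fun z ↦ D z x) p (μ i) ≤ C * ‖x‖ₑ := by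
  obtain ⟨C, hC⟩ := exists_enorm_le_of_lowerSemicontinuous
    (q := fun x ↦ ⨆ i, eLpNorm (fun z ↦ D z x) p (μ i))
    (lowerSemicontinuous_iSup fun i ↦ lowerSemicontinuous_eLpNorm p (fun x ↦ hD x i)
      (ae_of_all _ fun z ↦ (D z).continuous))
    (fun x ↦ by
      obtain ⟨M, hM⟩ := hfin x
      exact ((iSup_le hM).trans_lt ENNReal.coe_lt_top).ne)
    (fun x y ↦ iSup_le fun i ↦ by
      simp_rw [map_add]
      exact (eLpNorm_add_le (hD x i) (hD y i) hp).trans (add_le_add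
        (le_iSup (fun i ↦ eLpNorm (fun z ↦ D z x) p (μ i)) i)
        (le_iSup (fun i ↦ eLpNorm (fun z ↦ D z y) p (μ i)) i)))
    (fun c x ↦ by
      simp_rw [map_smul, ENNReal.mul_iSup]
      exact iSup_congr fun i ↦ eLpNorm_const_smul c (fun z ↦ D z x) p (μ i))
  exact ⟨C, fun x i ↦ (le_iSup (fun i ↦ eLpNorm (fun z ↦ D z x) p (μ i)) i).trans (hC x)⟩

lemma eLpNorm_le_tsum_of_hasSum {α F : Type*} [MeasurableSpace α] [NormedAddCommGroup F]
    {μ : Measure α} {p : ℝ≥0∞} (hp : 1 ≤ p) {f : ℕ → α → F} {S : α → F}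
    (hf : ∀ n, AEStronglyMeasurable (f n) μ) (hS : ∀ᵐ z ∂μ, HasSum (fun n ↦ f n z) (S z)) :
    eLpNorm S p μ ≤ ∑' n, eLpNorm (f n) p μ := by
  calc eLpNorm S p μ ≤ liminf (fun N ↦ eLpNorm (∑ n ∈ Finset.range N, f n) p μ) atTop := by
        refine Lp.eLpNorm_lim_le_liminf_eLpNorm
          (fun N ↦ Finset.aestronglyMeasurable_sum _ fun n _ ↦ hf n) S (hS.mono fun z hz ↦ ?_)
        simpa only [Finset.sum_apply] using hz.tendsto_sum_nat
    _ ≤ ∑' n, eLpNorm (f n) p μ := liminf_le_of_le (by isBoundedDefault) fun b hb ↦ by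
        obtain ⟨N, hN⟩ := hb.exists
        exact hN.trans ((eLpNorm_sum_le (fun n _ ↦ hf n) hp).trans (ENNReal.sum_le_tsum _))

/-- Uniform boundedness of a sequence of functions on each disc of radius less than `1`, under
which `ℓ¹` combinations of holomorphic functions are holomorphic. -/
def LocallyUniformlyBounded (f : ℕ → ℂ → ℂ) : Prop :=
  ∀ r < 1, ∃ B : ℝ, ∀ n, ∀ z ∈ ball (0 : ℂ) r, ‖f n z‖ ≤ B

variable {f : ℕ → ℂ → ℂ} {c : ℕ → ℂ}

lemma LocallyUniformlyBounded.exists_norm_mul_le (hb : LocallyUniformlyBounded f)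
    (hc : Summable fun n ↦ ‖c n‖) {r : ℝ} (hr : r < 1) :
    ∃ u : ℕ → ℝ, Summable u ∧ ∀ n, ∀ z ∈ ball (0 : ℂ) r, ‖c n * f n z‖ ≤ u n := by
  obtain ⟨B, hB⟩ := hb r hr
  refine ⟨fun n ↦ ‖c n‖ * B, hc.mul_right B, fun n z hz ↦ ?_⟩
  rw [norm_mul]
  exact mul_le_mul_of_nonneg_left (hB n z hz) (norm_nonneg _)

lemma LocallyUniformlyBounded.holOn_tsum (hb : LocallyUniformlyBounded f)
    (hf : ∀ n, HolOn (f n)) (hc : Summable fun n ↦ ‖c n‖) :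
    HolOn fun z ↦ ∑' n, c n * f n z := by
  intro z hz
  obtain ⟨r, hzr, hr⟩ := exists_between (mem_ball_zero_iff.1 hz)
  obtain ⟨u, hu, hle⟩ := hb.exists_norm_mul_le hc hr
  exact ((differentiableOn_tsum_of_summable_norm hu
    (fun n ↦ ((hf n).mono (ball_subset_ball hr.le)).const_mul (c n)) isOpen_ball
    hle).differentiableAt (isOpen_ball.mem_nhds (mem_ball_zero_iff.2 hzr))).differentiableWithinAt

lemma LocallyUniformlyBounded.hasSum_deriv (hb : LocallyUniformlyBounded f)
    (hf : ∀ n, HolOn (f n)) (hc : Summable fun n ↦ ‖c n‖) {z : ℂ} (hz : z ∈ 𝔻) :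
    HasSum (fun n ↦ c n * deriv (f n) z) (deriv (fun z ↦ ∑' n, c n * f n z) z) := by
  obtain ⟨r, hzr, hr⟩ := exists_between (mem_ball_zero_iff.1 hz)
  obtain ⟨u, hu, hle⟩ := hb.exists_norm_mul_le hc hr
  simpa only [deriv_const_mul_field] using hasSum_deriv_of_summable_norm hu
    (fun n ↦ ((hf n).mono (ball_subset_ball hr.le)).const_mul (c n)) isOpen_ball hle
    (mem_ball_zero_iff.2 hzr)

lemma LocallyUniformlyBounded.exists_norm_deriv_le (hb : LocallyUniformlyBounded f)
    (hf : ∀ n, HolOn (f n)) {z : ℂ} (hz : z ∈ 𝔻) : ∃ B, ∀ n, ‖deriv (f n) z‖ ≤ B := by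
  obtain ⟨r, hzr, hr⟩ := exists_between (mem_ball_zero_iff.1 hz)
  obtain ⟨R, hR₀, hR⟩ := exists_between (sub_pos.2 hzr)
  obtain ⟨B, hB⟩ := hb r hr
  have hsub : closedBall z R ⊆ ball 0 r := fun w hw ↦ by
    have := norm_le_norm_add_norm_sub' w z
    rw [mem_closedBall_iff_norm] at hw
    exact mem_ball_zero_iff.2 (by linarith)
  refine ⟨B / R, fun n ↦ norm_deriv_le_of_forall_mem_sphere_norm_le hR₀ ?_
    fun w hw ↦ hB n w (hsub (sphere_subset_closedBall hw))⟩
  exact ((hf n).mono (closure_ball_subset_closedBall.trans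
    (hsub.trans (ball_subset_ball hr.le)))).diffContOnCl

lemma LocallyUniformlyBounded.mg {g : ℂ → ℂ} (hb : LocallyUniformlyBounded f)
    (hg : HolOn g) : LocallyUniformlyBounded fun n ↦ Mg g (f n) := by
  intro r hr
  obtain ⟨B, hB⟩ := hb r hr
  obtain ⟨G, hG⟩ := (isCompact_closedBall (0 : ℂ) r).exists_bound_of_continuousOn
    (hg.continuousOn.mono (closedBall_subset_ball hr))
  refine ⟨G * B, fun n z hz ↦ ?_⟩
  exact (norm_mul _ _).trans_le <|
    mul_le_mul (hG z (ball_subset_closedBall hz)) (hB n z hz) (norm_nonneg _)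
    ((norm_nonneg _).trans (hG z (ball_subset_closedBall hz)))

lemma exists_continuousLinearMap_eq_tsum {b : ℕ → ℂ} (hb : ∃ B, ∀ n, ‖b n‖ ≤ B) :
    ∃ Φ : ℓ¹(ℕ, ℂ) →L[ℂ] ℂ, ∀ c, Φ c = ∑' n, c n * b n := by
  obtain ⟨B, hB⟩ := hb
  let b' : lp (fun _ : ℕ ↦ ℂ) ∞ := ⟨b, memℓp_infty ⟨B, forall_mem_range.2 hB⟩⟩
  exact ⟨(lp.dualPairing 1 ∞ (fun _ ↦ ContinuousLinearMap.mul ℂ ℂ) (K := 1) (by simp)).flip b',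
    fun c ↦ rfl⟩

lemma summable_norm_lp_one (c : ℓ¹(ℕ, ℂ)) : Summable fun n ↦ ‖c n‖ := by
  simpa using (lp.memℓp c).summable

lemma qsNorm_eq_eLpNorm_indicator (s : ℝ) (a : ℂ) (h : ℂ → ℂ) :
    qsNorm s a h = eLpNorm (indicator 𝔻 (deriv h)) 2 (qsMeasure s a) :=
  eLpNorm_congr_ae (ae_weightedArea_of_forall_mem_ball _ fun _ hz ↦
    (indicator_of_mem hz _).symm)

lemma exists_qsNorm_le_of_forall_tsum_mem_Qs {s : ℝ} {h : ℕ → ℂ → ℂ} (hh : ∀ n, HolOn (h n))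
    (hb : LocallyUniformlyBounded h)
    (hQ : ∀ c : ℓ¹(ℕ, ℂ), (fun z ↦ ∑' n, c n * h n z) ∈ Qs s) :
    ∃ M : ℝ≥0, ∀ n, ∀ a ∈ 𝔻, qsNorm s a (h n) ≤ M := by
  have hbdd (z : ℂ) : ∃ B, ∀ n, ‖indicator 𝔻 (deriv (h n)) z‖ ≤ B := by
    by_cases hz : z ∈ 𝔻
    · simpa only [indicator_of_mem hz] using hb.exists_norm_deriv_le hh hz
    · exact ⟨0, fun n ↦ by simp only [indicator_of_notMem hz, norm_zero, le_refl]⟩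
  choose D hD using fun z ↦ exists_continuousLinearMap_eq_tsum (hbdd z)
  have hD_eq (c : ℓ¹(ℕ, ℂ)) :
      (fun z ↦ D z c) = indicator 𝔻 (deriv fun z ↦ ∑' n, c n * h n z) := by
    ext z
    rw [hD]
    by_cases hz : z ∈ 𝔻
    · simpa only [indicator_of_mem hz] using
        (hb.hasSum_deriv hh (summable_norm_lp_one c) hz).tsum_eq
    · simp only [indicator_of_notMem hz, mul_zero, tsum_zero]
  obtain ⟨C, hC⟩ := exists_eLpNorm_le_mul_enorm (D := D) one_le_two
    (μ := fun a : 𝔻 ↦ qsMeasure s a) (fun c a ↦ by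
      rw [hD_eq]
      exact ((measurable_deriv _).indicator measurableSet_ball).aestronglyMeasurable)
    (fun c ↦ by
      obtain ⟨M, hM⟩ := (mem_Qs_iff.1 (hQ c)).2
      refine ⟨M, fun a ↦ ?_⟩
      rw [hD_eq, ← qsNorm_eq_eLpNorm_indicator]
      exact hM a a.2)
  refine ⟨C, fun n a ha ↦ ?_⟩
  let e : ℓ¹(ℕ, ℂ) := lp.single 1 n 1
  have he : (fun z ↦ ∑' m, e m * h m z) = h n := by
    ext z
    rw [tsum_eq_single n fun m hm ↦ by simp [e, hm]]
    simp [e]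
  have he_norm : ‖e‖ₑ = 1 := by
    rw [← ofReal_norm, lp.norm_single one_pos, norm_one, ENNReal.ofReal_one]
  have hCe := hC e ⟨a, ha⟩
  rwa [hD_eq, he, ← qsNorm_eq_eLpNorm_indicator, he_norm, mul_one] at hCe

lemma tsum_mem_Besov {p : ℝ} (hp : 1 ≤ p) (hf : ∀ n, HolOn (f n))
    (hb : LocallyUniformlyBounded f) (hc : Summable fun n ↦ ‖c n‖) {K : ℝ≥0}
    (hK : ∀ n, besovNorm p (f n) ≤ K) : (fun z ↦ ∑' n, c n * f n z) ∈ Besov p := by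
  refine (mem_Besov_iff (by linarith)).2 ⟨hb.holOn_tsum hf hc, ?_⟩
  calc besovNorm p (fun z ↦ ∑' n, c n * f n z)
      ≤ ∑' n, eLpNorm (c n • deriv (f n)) (ENNReal.ofReal p)
          (weightedArea fun z ↦ (1 - ‖z‖) ^ (p - 2)) :=
        eLpNorm_le_tsum_of_hasSum (ENNReal.one_le_ofReal.2 hp)
          (fun n ↦ ((measurable_deriv _).const_smul (c n)).aestronglyMeasurable)
          (ae_weightedArea_of_forall_mem_ball _ fun z hz ↦ hb.hasSum_deriv hf hc hz)
    _ = ∑' n, ‖c n‖ₑ * besovNorm p (f n) :=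
        tsum_congr fun n ↦ eLpNorm_const_smul (c n) _ _ _
    _ ≤ ∑' n, ‖c n‖ₑ * K := ENNReal.tsum_le_tsum fun n ↦ mul_le_mul_right (hK n) _
    _ = (∑' n, ‖c n‖ₑ) * K := ENNReal.tsum_mul_right
    _ < ⊤ := ENNReal.mul_lt_top (by
        simpa only [← ofReal_norm] using hc.tsum_ofReal_lt_top) ENNReal.coe_lt_top

lemma locallyUniformlyBounded_of_besovNorm_le {p p' : ℝ} (hp : p.HolderConjugate p')
    (hf : ∀ n, HolOn (f n)) {K : ℝ≥0} (hf₀ : ∀ n, ‖f n 0‖ₑ ≤ K)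
    (hK : ∀ n, besovNorm p (f n) ≤ K) : LocallyUniformlyBounded f := by
  obtain ⟨C, growth⟩ := exists_enorm_sub_le_besovNorm hp
  intro r hr
  have hp' := hp.symm.pos
  refine ⟨(C * K * (Real.log (2 / (1 - r)) ^ (1 / p')).toNNReal + K : ℝ≥0), fun n z hz ↦ ?_⟩
  have hzr := mem_ball_zero_iff.1 hz
  have hweight : logWeight z ^ (1 / p') ≤ Real.log (2 / (1 - r)) ^ (1 / p') := by
    have hz₀ := sub_pos.2 (hzr.trans hr)
    have hL₀ := logWeight_pos (hzr.trans hr)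
    unfold logWeight at hL₀ ⊢
    gcongr
  refine NNReal.coe_le_coe.2 ((enorm_le_coe (x := f n z)).1 ?_)
  calc ‖f n z‖ₑ = ‖(f n z - f n 0) + f n 0‖ₑ := by rw [sub_add_cancel]
    _ ≤ ‖f n z - f n 0‖ₑ + ‖f n 0‖ₑ := enorm_add_le _ _
    _ ≤ C * besovNorm p (f n) * ENNReal.ofReal (logWeight z ^ (1 / p')) + K :=
        add_le_add (growth _ (hf n) z (ball_subset_ball hr.le hz)) (hf₀ n)
    _ ≤ C * K * ENNReal.ofReal (Real.log (2 / (1 - r)) ^ (1 / p')) + K := by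
        gcongr
        exact hK n
    _ = _ := by
        push_cast
        rfl

lemma exists_qsNorm_Mg_le_of_mapsInto {p p' s : ℝ} (hp : p.HolderConjugate p') {g : ℂ → ℂ}
    (hg : HolOn g) (H : MapsInto (Mg g) (Besov p) (Qs s)) (K : ℝ≥0) :
    ∃ M : ℝ≥0, ∀ f, HolOn f → ‖f 0‖ₑ ≤ K → besovNorm p f ≤ K →
      ∀ a ∈ 𝔻, qsNorm s a (Mg g f) ≤ M := by
  by_contra! hunbounded
  choose f hf hf₀ hfK a ha hlarge using fun n : ℕ ↦ hunbounded n
  have hb := locallyUniformlyBounded_of_besovNorm_le hp hf hf₀ hfK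
  obtain ⟨M, hM⟩ := exists_qsNorm_le_of_forall_tsum_mem_Qs (h := fun n ↦ Mg g (f n))
    (fun n ↦ hg.mul (hf n)) (hb.mg hg) (s := s) fun c ↦ by
      convert H _ (tsum_mem_Besov hp.lt.le hf hb (summable_norm_lp_one c) hfK) using 1
      ext z
      simp only [Mg, mul_left_comm (c _), tsum_mul_left]
  obtain ⟨n, hn⟩ := exists_nat_ge M
  have hlarge := (hlarge n).trans_le (hM n (a n) (ha n))
  exact absurd hlarge (not_lt.2 (by exact_mod_cast hn))

end UniformBoundedness

section TestFunctions

variable {p : ℝ} {a z : ℂ}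

lemma one_sub_rpow_mul_rpow_le_sq (hp : 2 ≤ p) {x y : ℝ} (hx : 0 ≤ x) (hy : 0 ≤ y)
    (hxy : x * y ≤ 1) : x ^ (p - 2) * y ^ p ≤ y ^ 2 := by
  have hp₂ := sub_nonneg.2 hp
  calc x ^ (p - 2) * y ^ p = (x * y) ^ (p - 2) * y ^ 2 := by
        rw [Real.mul_rpow hx hy, mul_assoc, ← Real.rpow_two y,
          ← Real.rpow_add_of_nonneg hy hp₂ two_pos.le, sub_add_cancel]
    _ ≤ 1 * y ^ 2 := by
        gcongr
        exact Real.rpow_le_one (mul_nonneg hx hy) hxy hp₂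
    _ = y ^ 2 := one_mul _

lemma besovNorm_rpow_le_lintegral_sq (hp : 2 ≤ p) {f : ℂ → ℂ}
    (hf : ∀ z ∈ 𝔻, (1 - ‖z‖) * ‖deriv f z‖ ≤ 1) :
    besovNorm p f ^ p ≤ ∫⁻ z in 𝔻, ‖deriv f z‖ₑ ^ 2 ∂dA := by
  have hp₀ : 0 < p := two_pos.trans_le hp
  rw [besovNorm_rpow hp₀]
  refine setLIntegral_mono' measurableSet_ball fun z hz ↦ ?_
  have hz₁ : 0 ≤ 1 - ‖z‖ := (sub_pos.2 (mem_ball_zero_iff.1 hz)).le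
  rw [← ofReal_norm, ENNReal.ofReal_rpow_of_nonneg (norm_nonneg _) hp₀.le,
    ← ENNReal.ofReal_mul (by positivity), ← ENNReal.ofReal_pow (norm_nonneg _)]
  exact ENNReal.ofReal_le_ofReal
    (one_sub_rpow_mul_rpow_le_sq hp hz₁ (norm_nonneg _) (hf z hz))

lemma besovNorm_phi_le_one (hp : 2 ≤ p) (ha : ‖a‖ < 1) : besovNorm p (phi a) ≤ 1 := by
  have hbloch (z : ℂ) (hz : z ∈ 𝔻) : (1 - ‖z‖) * ‖deriv (phi a) z‖ ≤ 1 := by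
    have hz := mem_ball_zero_iff.1 hz
    have hz₂ := one_sub_norm_sq_pos hz
    rw [norm_deriv_phi ha hz, mul_div_assoc', div_le_one hz₂]
    calc (1 - ‖z‖) * (1 - ‖phi a z‖ ^ 2) ≤ (1 - ‖z‖) * 1 :=
          mul_le_mul_of_nonneg_left (sub_le_self 1 (sq_nonneg _)) (sub_pos.2 hz).le
      _ ≤ 1 - ‖z‖ ^ 2 := by nlinarith [norm_nonneg z]
  have harea : ∫⁻ z in 𝔻, ‖deriv (phi a) z‖ₑ ^ 2 ∂dA = 1 := by
    have h := lintegral_ball_eq_lintegral_phi ha fun _ ↦ 1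
    simp only [mul_one, setLIntegral_one] at h
    rw [← h, dA_ball 0 zero_le_one, one_pow, ENNReal.ofReal_one]
  have hle := (besovNorm_rpow_le_lintegral_sq hp hbloch).trans_eq harea
  rwa [← ENNReal.one_rpow p, ENNReal.rpow_le_rpow_iff (two_pos.trans_le hp)] at hle

/-- The branch of `log (2 / (1 - conj a * z))` on the unit disc; its size at `a` is comparable to
`logWeight a`, and suitable multiples of it extremize the growth of Besov functions. -/
noncomputable def logKernel (a z : ℂ) : ℂ := Complex.log (2 / (1 - conj a * z))

lemma two_div_mem_slitPlane (ha : ‖a‖ < 1) (hz : ‖z‖ < 1) :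
    2 / (1 - conj a * z) ∈ slitPlane := by
  have hden := one_sub_conj_mul_ne_zero ha hz
  have hlt : (conj a * z).re < 1 := by
    refine (re_le_norm _).trans_lt ?_
    rw [norm_mul, norm_conj]
    exact mul_lt_one_of_nonneg_of_lt_one_left (norm_nonneg _) ha hz.le
  have hpos : 0 < (1 - conj a * z).re := by
    rw [sub_re, one_re]
    exact sub_pos.2 hlt
  refine mem_slitPlane_iff.2 (Or.inl ?_)
  rw [div_eq_mul_inv, ← ofReal_ofNat, re_ofReal_mul, inv_re]
  have := normSq_pos.2 hden
  positivity

lemma hasDerivAt_logKernel (ha : ‖a‖ < 1) (hz : ‖z‖ < 1) :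
    HasDerivAt (logKernel a) (conj a / (1 - conj a * z)) z := by
  have hden := one_sub_conj_mul_ne_zero ha hz
  have hlin : HasDerivAt (fun z ↦ 1 - conj a * z) (-conj a) z := by
    simpa using ((hasDerivAt_id z).const_mul (conj a)).const_sub 1
  refine (((hasDerivAt_const z (2 : ℂ)).div hlin hden).clog
    (two_div_mem_slitPlane ha hz)).congr_deriv ?_
  simp only [Pi.div_apply, zero_mul, zero_sub, mul_neg, neg_neg]
  field_simp

lemma holOn_logKernel (ha : ‖a‖ < 1) : HolOn (logKernel a) := fun _ hz ↦
  (hasDerivAt_logKernel ha (mem_ball_zero_iff.1 hz)).differentiableAt.differentiableWithinAt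

lemma logKernel_zero_right (a : ℂ) : logKernel a 0 = Real.log 2 := by
  simp [logKernel]

lemma logWeight_le_two_mul_norm_logKernel (ha : ‖a‖ < 1) :
    logWeight a ≤ 2 * ‖logKernel a a‖ := by
  have ha₁ := sub_pos.2 ha
  have ha₂ := one_sub_norm_sq_pos ha
  have hself : logKernel a a = Real.log (2 / (1 - ‖a‖ ^ 2)) := by
    rw [logKernel, conj_mul', ofReal_log (by positivity)]
    push_cast
    rfl
  rw [hself, norm_real]
  calc logWeight a ≤ Real.log ((2 / (1 - ‖a‖ ^ 2)) ^ 2) := by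
        refine Real.log_le_log (by positivity) ?_
        rw [div_pow, div_le_div_iff₀ ha₁ (by positivity)]
        nlinarith [norm_nonneg a, mul_nonneg (sq_nonneg ‖a‖) ha₂.le]
    _ = 2 * Real.log (2 / (1 - ‖a‖ ^ 2)) := by rw [Real.log_pow, Nat.cast_two]
    _ ≤ 2 * ‖Real.log (2 / (1 - ‖a‖ ^ 2))‖ := by
        gcongr
        exact Real.le_norm_self _

lemma logKernel_mem_rectangle (ha : ‖a‖ < 1) (hz : ‖z‖ < 1) :
    logKernel a z ∈ Icc 0 (logWeight a) ×ℂ Icc (-π) π := by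
  have hden := norm_one_sub_conj_mul_pos ha hz
  have hle_two : ‖1 - conj a * z‖ ≤ 2 := by
    refine (norm_sub_le _ _).trans ?_
    rw [norm_one, norm_mul, norm_conj]
    nlinarith [norm_nonneg a, norm_nonneg z]
  refine mem_reProdIm.2 ⟨?_, (neg_pi_lt_log_im _).le, log_im_le_pi _⟩
  rw [logKernel, log_re, norm_div, Complex.norm_ofNat]
  refine ⟨Real.log_nonneg ((one_le_div hden).2 hle_two),
    Real.log_le_log (by positivity) ?_⟩
  exact div_le_div_of_nonneg_left two_pos.le (sub_pos.2 ha) (one_sub_norm_le_left hz.le)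

lemma injOn_logKernel (ha₀ : a ≠ 0) (ha : ‖a‖ < 1) : InjOn (logKernel a) 𝔻 := by
  intro z hz w hw h
  have hz := one_sub_conj_mul_ne_zero ha (mem_ball_zero_iff.1 hz)
  have hw := one_sub_conj_mul_ne_zero ha (mem_ball_zero_iff.1 hw)
  have hexp := congrArg Complex.exp h
  rw [logKernel, logKernel, Complex.exp_log (div_ne_zero two_ne_zero hz),
    Complex.exp_log (div_ne_zero two_ne_zero hw)] at hexp
  have hmul : conj a * z = conj a * w := by
    field_simp at hexp
    linear_combination hexp
  exact mul_left_cancel₀ ((map_ne_zero conj).2 ha₀) hmul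

lemma dA_rectangle {x y u v : ℝ} (hxy : x ≤ y) :
    dA (Icc x y ×ℂ Icc u v) = ENNReal.ofReal ((y - x) * (v - u) / π) := by
  have hvol : volume (Icc x y ×ℂ Icc u v) = ENNReal.ofReal ((y - x) * (v - u)) := by
    have h := Complex.volume_preserving_equiv_real_prod.measure_preimage
      (s := Icc x y ×ˢ Icc u v) (measurableSet_Icc.prod measurableSet_Icc).nullMeasurableSet
    rw [Measure.volume_eq_prod, Measure.prod_prod, Real.volume_Icc, Real.volume_Icc,
      ← ENNReal.ofReal_mul (sub_nonneg.2 hxy)] at h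
    exact h
  rw [dA, Measure.smul_apply, smul_eq_mul, hvol, mul_comm, ← div_eq_mul_inv,
    ENNReal.ofReal_div_of_pos pi_pos]

lemma lintegral_deriv_logKernel_sq_le (ha : ‖a‖ < 1) :
    ∫⁻ z in 𝔻, ‖deriv (logKernel a) z‖ₑ ^ 2 ∂dA ≤ ENNReal.ofReal (2 * logWeight a) := by
  rcases eq_or_ne a 0 with rfl | ha₀
  · have hconst : logKernel 0 = fun _ ↦ Complex.log 2 := by
      ext z
      simp [logKernel]
    simp [hconst]
  have himage := lintegral_image_eq_lintegral_enorm_deriv_sq_mul measurableSet_ball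
    (fun z hz ↦ (hasDerivAt_logKernel ha (mem_ball_zero_iff.1 hz)).differentiableAt.hasDerivAt)
    (injOn_logKernel ha₀ ha) fun _ ↦ 1
  simp only [mul_one, setLIntegral_one] at himage
  rw [← himage]
  calc dA (logKernel a '' 𝔻) ≤ dA (Icc 0 (logWeight a) ×ℂ Icc (-π) π) :=
        measure_mono (image_subset_iff.2 fun z hz ↦
          logKernel_mem_rectangle ha (mem_ball_zero_iff.1 hz))
    _ = ENNReal.ofReal (2 * logWeight a) := by
        rw [dA_rectangle (logWeight_pos ha).le]
        congr 1
        field_simp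
        ring

lemma besovNorm_logKernel_rpow_le (hp : 2 ≤ p) (ha : ‖a‖ < 1) :
    besovNorm p (logKernel a) ^ p ≤ ENNReal.ofReal (2 * logWeight a) := by
  refine (besovNorm_rpow_le_lintegral_sq hp fun z hz ↦ ?_).trans
    (lintegral_deriv_logKernel_sq_le ha)
  have hz := mem_ball_zero_iff.1 hz
  rw [(hasDerivAt_logKernel ha hz).deriv, norm_div, norm_conj, mul_div_assoc',
    div_le_one (norm_one_sub_conj_mul_pos ha hz)]
  calc (1 - ‖z‖) * ‖a‖ ≤ (1 - ‖z‖) * 1 := mul_le_mul_of_nonneg_left ha.le (sub_pos.2 hz).le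
    _ ≤ ‖1 - conj a * z‖ := by
        rw [mul_one]
        exact one_sub_norm_le_right ha.le

/-- The logarithmic kernel normalized to have bounded `Bᵖ` norm. -/
noncomputable def logTest (p : ℝ) (a : ℂ) : ℂ → ℂ :=
  ((logWeight a ^ (-1 / p) : ℝ) : ℂ) • logKernel a

lemma holOn_logTest (p : ℝ) (ha : ‖a‖ < 1) : HolOn (logTest p a) :=
  (holOn_logKernel ha).const_smul _

lemma enorm_logWeight_rpow (ha : ‖a‖ < 1) (α : ℝ) :
    ‖((logWeight a ^ α : ℝ) : ℂ)‖ₑ = ENNReal.ofReal (logWeight a ^ α) := by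
  rw [← ofReal_norm, norm_real, Real.norm_of_nonneg (Real.rpow_nonneg (logWeight_pos ha).le α)]

lemma besovNorm_logTest_le_two (hp : 2 ≤ p) (ha : ‖a‖ < 1) : besovNorm p (logTest p a) ≤ 2 := by
  have hp₀ : 0 < p := two_pos.trans_le hp
  have hL := logWeight_pos ha
  have hderiv : deriv (logTest p a) =
      ((logWeight a ^ (-1 / p) : ℝ) : ℂ) • deriv (logKernel a) := by
    ext z
    exact deriv_const_smul_field _ _
  rw [besovNorm, hderiv, eLpNorm_const_smul, enorm_logWeight_rpow ha]
  change ENNReal.ofReal (logWeight a ^ (-1 / p)) * besovNorm p (logKernel a) ≤ 2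
  have hpow : (ENNReal.ofReal (logWeight a ^ (-1 / p)) * besovNorm p (logKernel a)) ^ p ≤ 2 := by
    rw [ENNReal.mul_rpow_of_nonneg _ _ hp₀.le, ENNReal.ofReal_rpow_of_nonneg (by positivity) hp₀.le,
      ← Real.rpow_mul hL.le, div_mul_cancel₀ _ hp₀.ne', Real.rpow_neg_one]
    refine (mul_le_mul_right (besovNorm_logKernel_rpow_le hp ha) _).trans_eq ?_
    rw [← ENNReal.ofReal_mul (by positivity), mul_left_comm, inv_mul_cancel₀ hL.ne']
    simp
  refine (ENNReal.rpow_le_rpow_iff hp₀).1 (hpow.trans ?_)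
  exact ENNReal.le_rpow_self_of_one_le one_le_two (by linarith)

lemma enorm_logTest_zero_le_one (hp : 1 ≤ p) (ha : ‖a‖ < 1) : ‖logTest p a 0‖ₑ ≤ 1 := by
  have hp₀ : 0 < p := one_pos.trans_le hp
  have hlog := Real.log_pos one_lt_two
  have hL := logWeight_pos ha
  rw [logTest, Pi.smul_apply, enorm_smul, enorm_logWeight_rpow ha, logKernel_zero_right,
    ← ofReal_norm, norm_real, Real.norm_of_nonneg hlog.le, ← ENNReal.ofReal_mul (by positivity),
    ENNReal.ofReal_le_one]
  have hexp : 0 ≤ -1 / p + 1 := by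
    rw [neg_div, neg_add_eq_sub, sub_nonneg, div_le_one hp₀]
    exact hp
  calc logWeight a ^ (-1 / p) * Real.log 2 ≤ Real.log 2 ^ (-1 / p) * Real.log 2 := by
        refine mul_le_mul_of_nonneg_right (Real.rpow_le_rpow_of_nonpos hlog
          (log_two_le_logWeight ha) ?_) hlog.le
        exact div_nonpos_of_nonpos_of_nonneg (by norm_num) hp₀.le
    _ = Real.log 2 ^ (-1 / p + 1) := (Real.rpow_add_one hlog.ne' _).symm
    _ ≤ 1 := Real.rpow_le_one hlog.le (Real.log_two_lt_d9.le.trans (by norm_num)) hexp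

lemma ofReal_logWeight_rpow_le {p' : ℝ} (hpp' : p.HolderConjugate p') (ha : ‖a‖ < 1) :
    ENNReal.ofReal (logWeight a ^ (1 / p')) ≤ 2 * ‖logTest p a a‖ₑ := by
  have hL := logWeight_pos ha
  have hexp : 1 / p' = -1 / p + 1 := by
    rw [neg_div, one_div, one_div, neg_add_eq_sub, hpp'.one_sub_inv]
  rw [logTest, Pi.smul_apply, enorm_smul, enorm_logWeight_rpow ha, ← ofReal_norm,
    ← ENNReal.ofReal_ofNat 2, ← ENNReal.ofReal_mul (by positivity),
    ← ENNReal.ofReal_mul two_pos.le]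
  refine ENNReal.ofReal_le_ofReal ?_
  calc logWeight a ^ (1 / p') = logWeight a ^ (-1 / p) * logWeight a := by
        rw [hexp, Real.rpow_add_one hL.ne']
    _ ≤ logWeight a ^ (-1 / p) * (2 * ‖logKernel a a‖) := by
        gcongr
        exact logWeight_le_two_mul_norm_logKernel ha
    _ = 2 * (logWeight a ^ (-1 / p) * ‖logKernel a a‖) := by ring

end TestFunctions

section Multipliers

variable {p p' s : ℝ} {a : ℂ} {f g : ℂ → ℂ}

lemma HolOn.deriv_Mg (hg : HolOn g) (hf : HolOn f) {z : ℂ} (hz : z ∈ 𝔻) :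
    deriv (Mg g f) z = deriv g z * f z + g z * deriv f z :=
  deriv_fun_mul (hg.differentiableAt (isOpen_ball.mem_nhds hz))
    (hf.differentiableAt (isOpen_ball.mem_nhds hz))

lemma HolOn.aestronglyMeasurable (hf : HolOn f) (ω : ℂ → ℝ) :
    AEStronglyMeasurable f (weightedArea ω) :=
  (hf.continuousOn.aestronglyMeasurable measurableSet_ball).mono_ac
    (withDensity_absolutelyContinuous _ _)

lemma qsNorm_add_le (s : ℝ) (a : ℂ) (hf : HolOn f) (hg : HolOn g) :
    qsNorm s a (f + g) ≤ qsNorm s a f + qsNorm s a g := by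
  have hderiv : deriv (f + g) =ᵐ[qsMeasure s a] deriv f + deriv g :=
    ae_weightedArea_of_forall_mem_ball _ fun z hz ↦
      deriv_add (hf.differentiableAt (isOpen_ball.mem_nhds hz))
        (hg.differentiableAt (isOpen_ball.mem_nhds hz))
  rw [qsNorm, eLpNorm_congr_ae hderiv]
  exact eLpNorm_add_le (measurable_deriv f).aestronglyMeasurable
    (measurable_deriv g).aestronglyMeasurable one_le_two

lemma qsNorm_const_smul (s : ℝ) (a c : ℂ) (f : ℂ → ℂ) :
    qsNorm s a (c • f) = ‖c‖ₑ * qsNorm s a f := by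
  have hderiv : deriv (c • f) = c • deriv f := by
    ext z
    exact deriv_const_smul_field _ _
  rw [qsNorm, hderiv, eLpNorm_const_smul, qsNorm]

lemma mem_Hinf_iff : g ∈ Hinf ↔ HolOn g ∧ ∃ B : ℝ≥0, ∀ z ∈ 𝔻, ‖g z‖ₑ ≤ B := by
  refine and_congr_right fun _ ↦ ⟨fun ⟨B, hB⟩ ↦ ⟨B.toNNReal, fun z hz ↦ ?_⟩,
    fun ⟨B, hB⟩ ↦ ⟨B, fun z hz ↦ ?_⟩⟩
  · rw [← ofReal_norm]
    exact ENNReal.ofReal_le_ofReal (hB z hz)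
  · exact enorm_le_coe.1 (hB z hz)

lemma exists_qsNorm_Mg_sub_le (hp : 2 < p) (hs : 1 - 2 / p < s) :
    ∃ C : ℝ≥0, ∀ f g, HolOn f → HolOn g → ∀ M B : ℝ≥0, (∀ b ∈ 𝔻, qsNorm s b g ≤ M) →
      (∀ z ∈ 𝔻, ‖g z‖ₑ ≤ B) → ∀ a ∈ 𝔻,
        qsNorm s a (Mg g fun z ↦ f z - f a) ≤ C * (M + B) * besovNorm p f := by
  obtain ⟨t, hpt, hts⟩ := exists_between hs
  have ht : 0 < t := (sub_pos.2 ((div_lt_one (by linarith)).2 hp)).trans hpt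
  obtain ⟨C₁, hC₁⟩ := exists_eLpNorm_sub_mul_deriv_le ht hts
  obtain ⟨C₂, hC₂⟩ := exists_qsNorm_le_mul_besovNorm hp hpt
  obtain ⟨C₃, hC₃⟩ := exists_qsNorm_le_mul_besovNorm hp hs
  refine ⟨C₁ * C₂ + C₃, fun f g hf hg M B hM hB a ha ↦ ?_⟩
  have hf_sub : HolOn fun z ↦ f z - f a := hf.sub_const _
  have hderiv : deriv (Mg g fun z ↦ f z - f a) =ᵐ[qsMeasure s a]
      fun z ↦ (f z - f a) * deriv g z + g z * deriv f z :=
    ae_weightedArea_of_forall_mem_ball _ fun z hz ↦ by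
      rw [hg.deriv_Mg hf_sub hz, deriv_sub_const_fun, mul_comm (deriv g z)]
  have hmul : eLpNorm (fun z ↦ g z * deriv f z) 2 (qsMeasure s a) ≤ B * qsNorm s a f :=
    eLpNorm_le_nnreal_smul_eLpNorm_of_ae_le_mul'
      (ae_weightedArea_of_forall_mem_ball _ fun z hz ↦ by
        rw [enorm_mul]
        gcongr
        exact hB z hz) 2
  calc qsNorm s a (Mg g fun z ↦ f z - f a)
      ≤ eLpNorm (fun z ↦ (f z - f a) * deriv g z) 2 (qsMeasure s a) +
          eLpNorm (fun z ↦ g z * deriv f z) 2 (qsMeasure s a) := by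
        rw [qsNorm, eLpNorm_congr_ae hderiv]
        exact eLpNorm_add_le
          ((hf_sub.aestronglyMeasurable _).mul (measurable_deriv g).aestronglyMeasurable)
          ((hg.aestronglyMeasurable _).mul (measurable_deriv f).aestronglyMeasurable) one_le_two
    _ ≤ C₁ * (M * (C₂ * besovNorm p f)) + B * (C₃ * besovNorm p f) := by
        grw [hC₁ f g hf hg M hM a ha, hmul, hC₂ f a ha, hC₃ f a ha]
    _ = (C₁ * C₂ * M + C₃ * B) * besovNorm p f := by ring
    _ ≤ ((C₁ * C₂ + C₃) * M + (C₁ * C₂ + C₃) * B) * besovNorm p f := by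
        gcongr
        · exact le_self_add
        · exact le_add_self
    _ = ↑(C₁ * C₂ + C₃) * (M + B) * besovNorm p f := by
        push_cast
        ring

lemma qsNorm_Mg_le (s : ℝ) (a : ℂ) (hf : HolOn f) (hg : HolOn g) :
    qsNorm s a (Mg g f) ≤ ‖f a‖ₑ * qsNorm s a g + qsNorm s a (Mg g fun z ↦ f z - f a) := by
  have hdecomp : Mg g f = f a • g + Mg g fun z ↦ f z - f a := by
    ext z
    simp only [Mg, Pi.add_apply, Pi.smul_apply, smul_eq_mul]
    ring
  rw [hdecomp, ← qsNorm_const_smul]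
  exact qsNorm_add_le s a (hg.const_smul _) (hg.mul (hf.sub_const _))

lemma enorm_mul_qsNorm_le (s : ℝ) (a : ℂ) (hf : HolOn f) (hg : HolOn g) :
    ‖f a‖ₑ * qsNorm s a g ≤ qsNorm s a (Mg g f) + qsNorm s a (Mg g fun z ↦ f z - f a) := by
  have hdecomp : f a • g = Mg g f + (-1 : ℂ) • Mg g fun z ↦ f z - f a := by
    ext z
    simp only [Mg, Pi.add_apply, Pi.smul_apply, smul_eq_mul]
    ring
  have hsub : HolOn (Mg g fun z ↦ f z - f a) := hg.mul (hf.sub_const _)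
  rw [← qsNorm_const_smul, hdecomp]
  refine (qsNorm_add_le s a (show HolOn (Mg g f) from hg.mul hf) (hsub.const_smul _)).trans_eq ?_
  rw [qsNorm_const_smul, enorm_neg, enorm_one, one_mul]

lemma mem_Qs_of_mapsInto (hp : 0 < p) (H : MapsInto (Mg g) (Besov p) (Qs s)) : g ∈ Qs s := by
  have hone : (fun _ ↦ 1) ∈ Besov p :=
    (mem_Besov_iff hp).2 ⟨differentiableOn_const 1, by simp [besovNorm]⟩
  have hMg : (Mg g fun _ ↦ 1) = g := funext fun z ↦ mul_one (g z)
  exact hMg ▸ H _ hone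

lemma mem_Hinf_of_mapsInto (hp : 2 ≤ p) (hpp' : p.HolderConjugate p')
    (H : MapsInto (Mg g) (Besov p) (Qs s)) : g ∈ Hinf := by
  have hg := (mem_Qs_of_mapsInto hpp'.pos H).1
  obtain ⟨M, hM⟩ := exists_qsNorm_Mg_le_of_mapsInto hpp' hg H 1
  refine mem_Hinf_iff.2 ⟨hg, NNReal.sqrt (4 * (4 / 3) ^ |s|) * M, fun a ha ↦ ?_⟩
  have ha' := mem_ball_zero_iff.1 ha
  have hφ := holOn_phi ha'
  have hφ₀ : ‖phi a 0‖ₑ ≤ (1 : ℝ≥0) := by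
    rw [phi_zero_right]
    exact enorm_le_coe.2 ha'.le
  have hderiv : ‖deriv (Mg g (phi a)) a‖ₑ * ENNReal.ofReal (1 - ‖a‖ ^ 2) = ‖g a‖ₑ := by
    have hpos := one_sub_norm_sq_pos ha'
    have hφ' : ‖deriv (phi a) a‖ * (1 - ‖a‖ ^ 2) = 1 := by
      rw [norm_deriv_phi ha' ha', phi_self, norm_zero]
      field_simp
      norm_num
    rw [hg.deriv_Mg hφ ha, phi_self, mul_zero, zero_add, enorm_mul, mul_assoc,
      ← ofReal_norm (deriv (phi a) a), ← ENNReal.ofReal_mul (norm_nonneg _), hφ',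
      ENNReal.ofReal_one, mul_one]
  rw [← hderiv, ENNReal.coe_mul]
  exact (enorm_deriv_mul_le_qsNorm s (hg.mul hφ) ha').trans <| mul_le_mul_right
    (hM _ hφ hφ₀ (besovNorm_phi_le_one hp ha') a ha) _

lemma mem_QsLog_of_mapsInto (hp : 2 < p) (hpp' : p.HolderConjugate p') (hs : 1 - 2 / p < s)
    (H : MapsInto (Mg g) (Besov p) (Qs s)) : g ∈ QsLog s (1 / p') := by
  obtain ⟨hg, M, hM⟩ := mem_Qs_iff.1 (mem_Qs_of_mapsInto hpp'.pos H)
  obtain ⟨B, hB⟩ := (mem_Hinf_iff.1 (mem_Hinf_of_mapsInto hp.le hpp' H)).2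
  obtain ⟨N, hN⟩ := exists_qsNorm_Mg_le_of_mapsInto hpp' hg H 2
  obtain ⟨C, hC⟩ := exists_qsNorm_Mg_sub_le hp hs
  refine mem_QsLog_iff.2 ⟨hg, 2 * (N + C * (M + B) * 2), fun a ha ↦ ?_⟩
  have ha' := mem_ball_zero_iff.1 ha
  have hf := holOn_logTest p ha'
  have hf₀ := (enorm_logTest_zero_le_one hpp'.lt.le ha').trans one_le_two
  have hf_norm := besovNorm_logTest_le_two hp.le ha'
  calc ENNReal.ofReal (logWeight a ^ (1 / p')) * qsNorm s a g
      ≤ 2 * ‖logTest p a a‖ₑ * qsNorm s a g := by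
        gcongr
        exact ofReal_logWeight_rpow_le hpp' ha'
    _ = 2 * (‖logTest p a a‖ₑ * qsNorm s a g) := mul_assoc _ _ _
    _ ≤ 2 * (qsNorm s a (Mg g (logTest p a)) +
          qsNorm s a (Mg g fun z ↦ logTest p a z - logTest p a a)) := by
        gcongr
        exact enorm_mul_qsNorm_le s a hf hg
    _ ≤ 2 * (N + C * (M + B) * 2) := by
        gcongr
        · exact hN _ hf hf₀ hf_norm a ha
        · grw [hC _ g hf hg M B hM hB a ha, hf_norm]

lemma QsLog_subset_Qs {α : ℝ} (hα : 0 ≤ α) : QsLog s α ⊆ Qs s := by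
  intro g hg
  obtain ⟨hg, M, hM⟩ := mem_QsLog_iff.1 hg
  have hlog := Real.rpow_pos_of_pos (Real.log_pos one_lt_two) α
  refine mem_Qs_iff.2 ⟨hg, M / (Real.log 2 ^ α).toNNReal, fun a ha ↦ ?_⟩
  have hlog' := Real.toNNReal_pos.2 hlog
  rw [ENNReal.coe_div hlog'.ne', ENNReal.le_div_iff_mul_le
    (.inl (ENNReal.coe_pos.2 hlog').ne') (.inl ENNReal.coe_ne_top), mul_comm]
  refine (mul_le_mul_left (ENNReal.ofReal_le_ofReal ?_) _).trans (hM a ha)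
  exact Real.rpow_le_rpow (Real.log_pos one_lt_two).le
    (log_two_le_logWeight (mem_ball_zero_iff.1 ha)) hα

lemma mapsInto_of_mem_QsLog_inter_Hinf (hp : 2 < p) (hpp' : p.HolderConjugate p')
    (hs : 1 - 2 / p < s) (hg : g ∈ QsLog s (1 / p') ∩ Hinf) :
    MapsInto (Mg g) (Besov p) (Qs s) := by
  intro f hf
  obtain ⟨hf, hf_top⟩ := (mem_Besov_iff hpp'.pos).1 hf
  obtain ⟨M, hM⟩ := (mem_Qs_iff.1 (QsLog_subset_Qs hpp'.symm.one_div_nonneg hg.1)).2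
  obtain ⟨hg_hol, B, hB⟩ := mem_Hinf_iff.1 hg.2
  obtain ⟨L, hL⟩ := (mem_QsLog_iff.1 hg.1).2
  obtain ⟨C, hC⟩ := exists_enorm_sub_le_besovNorm hpp'
  obtain ⟨D, hD⟩ := exists_qsNorm_Mg_sub_le hp hs
  lift besovNorm p f to ℝ≥0 using hf_top.ne with b hb
  refine mem_Qs_iff.2 ⟨hg_hol.mul hf, ‖f 0‖₊ * M + C * b * L + D * (M + B) * b, fun a ha ↦ ?_⟩
  have hfa : ‖f a‖ₑ ≤ ‖f 0‖ₑ + C * b * ENNReal.ofReal (logWeight a ^ (1 / p')) := by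
    calc ‖f a‖ₑ = ‖f 0 + (f a - f 0)‖ₑ := by rw [add_sub_cancel]
      _ ≤ ‖f 0‖ₑ + ‖f a - f 0‖ₑ := enorm_add_le _ _
      _ ≤ _ := by
        gcongr
        exact (hC f hf a ha).trans_eq (by rw [hb])
  have hrem : qsNorm s a (Mg g fun z ↦ f z - f a) ≤ D * (M + B) * b :=
    (hD f g hf hg_hol M B hM hB a ha).trans_eq (by rw [hb])
  calc qsNorm s a (Mg g f)
      ≤ ‖f a‖ₑ * qsNorm s a g + qsNorm s a (Mg g fun z ↦ f z - f a) :=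
        qsNorm_Mg_le s a hf hg_hol
    _ ≤ (‖f 0‖ₑ + C * b * ENNReal.ofReal (logWeight a ^ (1 / p'))) * qsNorm s a g +
          D * (M + B) * b := by
        gcongr
    _ = ‖f 0‖ₑ * qsNorm s a g + C * b * (ENNReal.ofReal (logWeight a ^ (1 / p')) * qsNorm s a g) +
          D * (M + B) * b := by ring
    _ ≤ ‖f 0‖ₑ * M + C * b * L + D * (M + B) * b := by
        grw [hL a ha, hM a ha]

end Multipliers

theorem stmt12_general {p p' s : ℝ} (hp : 2 < p) (hpp' : 1 / p + 1 / p' = 1)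
    (hs : 1 - 2 / p < s) (g : ℂ → ℂ) :
    MapsInto (Mg g) (Besov p) (Qs s) ↔ g ∈ QsLog s (1 / p') ∩ Hinf := by
  have hconj : p.HolderConjugate p' :=
    Real.holderConjugate_iff.2 ⟨by linarith, by simpa only [one_div] using hpp'⟩
  exact ⟨fun H ↦ ⟨mem_QsLog_of_mapsInto hp hconj hs H, mem_Hinf_of_mapsInto hp.le hconj H⟩,
    mapsInto_of_mem_QsLog_inter_Hinf hp hconj hs⟩

/-- For `2 < p < ∞`, `1 - 2/p < s ≤ 1`, `p'` the conjugate exponent of `p`,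
and `g` holomorphic on the unit disc: `M_g` maps `Bᵖ` into `Q_s` iff
`g ∈ Q_{s,log,1/p'} ∩ H^∞`. -/
theorem stmt12 (p p' s : ℝ) (hp : 2 < p) (hpp' : 1 / p + 1 / p' = 1)
    (hs0 : 1 - 2 / p < s) (hs1 : s ≤ 1) (g : ℂ → ℂ) (hg : HolOn g) :
    MapsInto (Mg g) (Besov p) (Qs s) ↔ g ∈ QsLog s (1 / p') ∩ Hinf :=
  stmt12_general hp hpp' hs0 g
end

section
/- Suppose 2 < p < ∞ and 0 < s ≤ 1 − 2/p, and let g be holomorphic on the unit disc D. Then: (i) the operator I_g maps the Besov space B^p into Q_s if and only if g is identically zero; (ii) the multiplication operator M_g maps B^p into Q_s if and only if g is identically zero. -/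
open MeasureTheory Metric Complex Real Filter Set

/-!
Only the Taylor coefficients at the origin matter. By Parseval on circles, every `F ∈ Q_s`, and
more generally every `F` in the weighted Dirichlet space of index `1 - 2/p`, satisfies
`∑ |c_n|² / (n + 1) ^ (2 - 2/p) < ∞`, where `F' = ∑ c_n zⁿ`. A lacunary series `f = ∑ u_k z^(4^k)`
lies in `B^p` as soon as `∑ 4^k |u_k|^p < ∞`, and since `p > 2` the moduli `|u_k|` can be chosen
such that nevertheless `∑ (4^k |u_k|)² / (4^k) ^ (2 - 2/p)` is the harmonic series. If `g` vanishes
to order exactly `m` at the origin, with leading coefficient `a`, then the coefficient of `(I_g f)'`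
or `(M_g f)'` at `z^(m + 4^k - 1)` is a multiple of `u_k`, by a factor of modulus at least
`|a| 4^k`, plus a combination of `u_0, …, u_(k-1)`. Choosing the signs of the `u_k` one after the
other prevents cancellation, so these coefficients have modulus at least `|a| 4^k |u_k|` and the
image of `f` violates the Parseval condition.
-/

open Finset.HasAntidiagonal (antidiagonal)
open scoped Nat Topology ENNReal

noncomputable section

variable {f g h : ℂ → ℂ} {z : ℂ}

/-! ### Taylor coefficients at the origin -/

theorem HolOn.analyticAt (hf : HolOn f) (hz : z ∈ ball (0 : ℂ) 1) : AnalyticAt ℂ f z :=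
  DifferentiableOn.analyticAt hf (isOpen_ball.mem_nhds hz)

protected theorem HolOn.deriv (hf : HolOn f) : HolOn (deriv f) :=
  DifferentiableOn.deriv hf isOpen_ball

/-- The `n`-th coefficient of the Taylor series of `f` at the origin. -/
def taylorCoeff (f : ℂ → ℂ) (n : ℕ) : ℂ := iteratedDeriv n f 0 / n !

theorem taylorCoeff_congr (hfg : f =ᶠ[𝓝 0] g) (n : ℕ) : taylorCoeff f n = taylorCoeff g n := by
  rw [taylorCoeff, hfg.iteratedDeriv_eq, taylorCoeff]

theorem HolOn.hasSum_taylorCoeff (hf : HolOn f) (hz : z ∈ ball (0 : ℂ) 1) :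
    HasSum (fun n ↦ taylorCoeff f n * z ^ n) (f z) := by
  refine (Complex.hasSum_taylorSeries_on_ball hf hz).congr_fun fun n ↦ ?_
  simp only [taylorCoeff, sub_zero, smul_eq_mul]
  ring

theorem taylorCoeff_eq_of_hasSum {c : ℕ → ℂ} (hf : AnalyticAt ℂ f 0)
    (hc : ∀ᶠ z in 𝓝 0, HasSum (fun n ↦ c n * z ^ n) (f z)) : taylorCoeff f = c := by
  have hseries : HasFPowerSeriesAt f (FormalMultilinearSeries.ofScalars ℂ c) 0 := by
    simpa only [hasFPowerSeriesAt_iff, FormalMultilinearSeries.coeff_ofScalars, zero_add,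
      smul_eq_mul, mul_comm] using hc
  funext n
  simpa only [taylorCoeff, FormalMultilinearSeries.coeff_ofScalars] using
    congrArg (fun q ↦ q.coeff n) (hf.hasFPowerSeriesAt.eq_formalMultilinearSeries hseries)

theorem taylorCoeff_deriv (f : ℂ → ℂ) (n : ℕ) :
    taylorCoeff (deriv f) n = (n + 1 : ℕ) * taylorCoeff f (n + 1) := by
  rw [taylorCoeff, taylorCoeff, iteratedDeriv_succ', Nat.factorial_succ, Nat.cast_mul]
  field_simp

theorem taylorCoeff_mul (hf : AnalyticAt ℂ f 0) (hg : AnalyticAt ℂ g 0) (n : ℕ) :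
    taylorCoeff (f * g) n =
      ∑ ij ∈ antidiagonal n, taylorCoeff f ij.1 * taylorCoeff g ij.2 := by
  rw [taylorCoeff, iteratedDeriv_mul hf.contDiffAt hg.contDiffAt, Finset.sum_div,
    Finset.Nat.sum_antidiagonal_eq_sum_range_succ fun i j ↦ taylorCoeff f i * taylorCoeff g j]
  refine Finset.sum_congr rfl fun i hi ↦ ?_
  have hin : i ≤ n := Nat.lt_succ_iff.mp (Finset.mem_range.mp hi)
  have hfact : (n ! : ℂ) ≠ 0 := Nat.cast_ne_zero.mpr n.factorial_ne_zero
  rw [Nat.cast_choose ℂ hin, taylorCoeff, taylorCoeff]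
  field_simp

theorem HolOn.exists_taylorCoeff_ne_zero (hf : HolOn f) (hne : ∃ z ∈ ball (0 : ℂ) 1, f z ≠ 0) :
    ∃ m, taylorCoeff f m ≠ 0 ∧ ∀ i < m, taylorCoeff f i = 0 := by
  classical
  have hex : ∃ m, taylorCoeff f m ≠ 0 := by
    by_contra! hzero
    obtain ⟨z, hz, hfz⟩ := hne
    refine hfz ((hf.hasSum_taylorCoeff hz).unique ?_)
    simpa only [hzero, zero_mul] using hasSum_zero
  exact ⟨Nat.find hex, Nat.find_spec hex, fun i hi ↦ not_not.mp (Nat.find_min hex hi)⟩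

theorem hasDerivAt_Ig (hg : HolOn g) (hf : HolOn f) (hz : z ∈ ball (0 : ℂ) 1) :
    HasDerivAt (Ig g f) (g z * deriv f z) z := by
  have hgf : HolOn fun w ↦ g w * deriv f w := DifferentiableOn.mul hg hf.deriv
  obtain ⟨F, hF⟩ := DifferentiableOn.isExactOn_ball hgf
  have hIg : ∀ w ∈ ball (0 : ℂ) 1, Ig g f w = F w - F 0 := by
    intro w hw
    have hseg : ∀ t ∈ uIcc (0 : ℝ) 1, (t : ℂ) * w ∈ ball (0 : ℂ) 1 := by
      intro t ht
      rw [uIcc_of_le zero_le_one] at ht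
      exact ((convex_ball (0 : ℂ) 1).starConvex (mem_ball_self one_pos)).smul_mem hw ht.1 ht.2
    have hderiv : ∀ t ∈ uIcc (0 : ℝ) 1, HasDerivAt (fun t : ℝ ↦ F (t * w))
        (g (t * w) * deriv f (t * w) * w) t := fun t ht ↦
      ((hF _ (hseg t ht)).comp (t : ℂ) (hasDerivAt_mul_const w)).comp_ofReal
    have hcont : ContinuousOn (fun t : ℝ ↦ g (t * w) * deriv f (t * w) * w) (uIcc 0 1) :=
      (hgf.continuousOn.comp (by fun_prop) hseg).mul continuousOn_const
    have hFTC := intervalIntegral.integral_eq_sub_of_hasDerivAt hderiv hcont.intervalIntegrable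
    rw [intervalIntegral.integral_mul_const] at hFTC
    simpa [Ig, mul_comm w] using hFTC
  exact ((hF z hz).sub_const (F 0)).congr_of_eventuallyEq
    (eventuallyEq_of_mem (isOpen_ball.mem_nhds hz) hIg)

theorem Ig_eq_zero (hg : ∀ w ∈ ball (0 : ℂ) 1, g w = 0) (f : ℂ → ℂ) (hz : z ∈ ball (0 : ℂ) 1) :
    Ig g f z = 0 := by
  have hint : ∫ t in (0 : ℝ)..1, g (t * z) * deriv f (t * z) = ∫ _ in (0 : ℝ)..1, (0 : ℂ) := by
    refine intervalIntegral.integral_congr fun t ht ↦ ?_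
    rw [uIcc_of_le zero_le_one] at ht
    have htz : (t : ℂ) * z ∈ ball (0 : ℂ) 1 :=
      ((convex_ball (0 : ℂ) 1).starConvex (mem_ball_self one_pos)).smul_mem hz ht.1 ht.2
    simp only [hg _ htz, zero_mul]
  rw [Ig, hint, intervalIntegral.integral_zero, mul_zero]

/-! ### Parseval's inequality on circles -/

theorem circleMap_zero_mem_ball {r : ℝ} (h0 : 0 < r) (h1 : r < 1) (θ : ℝ) :
    circleMap 0 r θ ∈ ball (0 : ℂ) 1 := by
  rwa [mem_ball_zero_iff, norm_circleMap_zero, abs_of_pos h0]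

theorem HolOn.continuous_comp_circleMap (hh : HolOn h) {r : ℝ} (h0 : 0 < r) (h1 : r < 1) :
    Continuous fun θ ↦ h (circleMap 0 r θ) :=
  hh.continuousOn.comp_continuous (continuous_circleMap 0 r) (circleMap_zero_mem_ball h0 h1)

theorem HolOn.taylorCoeff_eq_circleIntegral (hh : HolOn h) {r : ℝ} (h0 : 0 < r) (h1 : r < 1)
    (n : ℕ) : taylorCoeff h n = (2 * π * I : ℂ)⁻¹ * ∮ z in C(0, r), z⁻¹ ^ n * (z⁻¹ * h z) := by
  lift r to NNReal using h0.le
  have hcauchy : HasFPowerSeriesAt h (cauchyPowerSeries h 0 r) 0 :=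
    (DifferentiableOn.hasFPowerSeriesOnBall (hh.mono (closedBall_subset_ball h1))
      (by exact_mod_cast h0)).hasFPowerSeriesAt
  have htaylor := (hh.analyticAt (mem_ball_self one_pos)).hasFPowerSeriesAt
  have hcoeff := congrArg (fun q ↦ q.coeff n) (htaylor.eq_formalMultilinearSeries hcauchy)
  simp only [FormalMultilinearSeries.coeff_ofScalars] at hcoeff
  rw [taylorCoeff, hcoeff]
  simp [FormalMultilinearSeries.coeff, cauchyPowerSeries]

theorem HolOn.fourierCoeffOn_comp_circleMap (hh : HolOn h) {r : ℝ} (h0 : 0 < r) (h1 : r < 1)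
    (hπ : -π < π) (n : ℕ) :
    fourierCoeffOn hπ (fun θ ↦ h (circleMap 0 r θ)) n = taylorCoeff h n * r ^ n := by
  have hr : (r : ℂ) ≠ 0 := by exact_mod_cast h0.ne'
  set F : ℝ → ℂ := fun θ ↦ (circleMap 0 r θ)⁻¹ ^ n * h (circleMap 0 r θ) with hF
  have hperiodic : Function.Periodic F (2 * π) := fun θ ↦ by
    simp only [hF, periodic_circleMap (0 : ℂ) r θ]
  have hshift : ∫ θ in (-π)..π, F θ = ∫ θ in 0..2 * π, F θ := by
    have := hperiodic.intervalIntegral_add_eq (-π) 0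
    rwa [show -π + 2 * π = π by ring, zero_add] at this
  have hcircle : ∮ z in C(0, r), z⁻¹ ^ n * (z⁻¹ * h z) = I * ∫ θ in 0..2 * π, F θ := by
    rw [circleIntegral, ← intervalIntegral.integral_const_mul]
    refine intervalIntegral.integral_congr fun θ _ ↦ ?_
    have : circleMap 0 r θ ≠ 0 := circleMap_ne_center h0.ne'
    simp only [deriv_circleMap, smul_eq_mul, hF]
    field_simp
  have hkernel : ∀ θ : ℝ, fourier (-(n : ℤ)) (θ : AddCircle (π - -π)) • h (circleMap 0 r θ)
      = r ^ n * F θ := by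
    intro θ
    have hexp : fourier (-(n : ℤ)) (θ : AddCircle (π - -π)) = (Complex.exp (θ * I))⁻¹ ^ n := by
      rw [fourier_coe_apply, ← Complex.exp_neg, ← Complex.exp_nat_mul]
      congr 1
      push_cast
      field
    simp only [hexp, hF, circleMap_zero, smul_eq_mul, mul_inv, mul_pow]
    rw [← mul_assoc, ← mul_assoc, ← mul_pow, mul_inv_cancel₀ hr, one_pow, one_mul]
  rw [fourierCoeffOn_eq_integral, hh.taylorCoeff_eq_circleIntegral h0 h1, hcircle, ← hshift]
  simp only [hkernel, intervalIntegral.integral_const_mul, Complex.real_smul]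
  push_cast
  field

theorem HolOn.tsum_sq_taylorCoeff_le_lintegral (hh : HolOn h) {r : ℝ} (h0 : 0 < r) (h1 : r < 1) :
    ∑' n, ENNReal.ofReal (2 * π * ‖taylorCoeff h n * r ^ n‖ ^ 2) ≤
      ∫⁻ θ in Ioo (-π) π, ENNReal.ofReal (‖h (circleMap 0 r θ)‖ ^ 2) := by
  have hπ : -π < π := neg_lt_self pi_pos
  have hcont := hh.continuous_comp_circleMap h0 h1
  have hint : IntegrableOn (fun θ ↦ ‖h (circleMap 0 r θ)‖ ^ 2) (Ioc (-π) π) :=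
    (hcont.norm.pow 2).integrableOn_Ioc
  have hparseval := hasSum_sq_fourierCoeffOn hπ
    ((memLp_two_iff_integrable_sq_norm hcont.aestronglyMeasurable).mpr hint)
  have hcoeff : HasSum (fun n : ℤ ↦ 2 * π *
      ‖fourierCoeffOn hπ (fun θ ↦ h (circleMap 0 r θ)) n‖ ^ 2)
      (∫ θ in Ioo (-π) π, ‖h (circleMap 0 r θ)‖ ^ 2) := by
    have hvalue : 2 * π * ((π - -π)⁻¹ • ∫ θ in (-π)..π, ‖h (circleMap 0 r θ)‖ ^ 2) =
        ∫ θ in Ioo (-π) π, ‖h (circleMap 0 r θ)‖ ^ 2 := by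
      rw [intervalIntegral.integral_of_le hπ.le, integral_Ioc_eq_integral_Ioo, smul_eq_mul]
      field
    exact hvalue ▸ hparseval.mul_left (2 * π)
  calc ∑' n, ENNReal.ofReal (2 * π * ‖taylorCoeff h n * r ^ n‖ ^ 2)
      = ∑' n : ℕ, ENNReal.ofReal (2 * π *
          ‖fourierCoeffOn hπ (fun θ ↦ h (circleMap 0 r θ)) n‖ ^ 2) := by
        simp only [hh.fourierCoeffOn_comp_circleMap h0 h1 hπ]
    _ ≤ ∑' n : ℤ, ENNReal.ofReal (2 * π *
          ‖fourierCoeffOn hπ (fun θ ↦ h (circleMap 0 r θ)) n‖ ^ 2) :=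
        ENNReal.tsum_comp_le_tsum_of_injective Nat.cast_injective _
    _ = ENNReal.ofReal (∫ θ in Ioo (-π) π, ‖h (circleMap 0 r θ)‖ ^ 2) := by
        rw [← hcoeff.tsum_eq,
          ENNReal.ofReal_tsum_of_nonneg (fun n ↦ by positivity) hcoeff.summable]
    _ = _ := ofReal_integral_eq_lintegral_ofReal (hint.mono_set Ioo_subset_Ioc_self)
        (Eventually.of_forall fun θ ↦ by positivity)

/-! ### Integration in polar coordinates -/

theorem lintegral_eq_lintegral_circleMap {F : ℂ → ℝ≥0∞} (hF : Measurable F) :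
    ∫⁻ z, F z =
      ∫⁻ r in Ioi (0 : ℝ), ENNReal.ofReal r * ∫⁻ θ in Ioo (-π) π, F (circleMap 0 r θ) := by
  have hpolar (q : ℝ × ℝ) : Complex.polarCoord.symm q = circleMap 0 q.1 q.2 := by
    simp [circleMap, Complex.exp_mul_I]
  have : Measurable fun q : ℝ × ℝ ↦ F (circleMap 0 q.1 q.2) :=
    hF.comp (by unfold circleMap; fun_prop)
  rw [← Complex.lintegral_comp_polarCoord_symm, polarCoord_target, Measure.volume_eq_prod,
    ← Measure.prod_restrict]
  simp only [hpolar, smul_eq_mul]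
  rw [lintegral_prod _ (by fun_prop)]
  refine lintegral_congr fun r ↦ ?_
  simpa only [Function.comp_def] using
    lintegral_const_mul _ (hF.comp (continuous_circleMap 0 r).measurable)

theorem setLIntegral_ball_eq_lintegral_circleMap {F : ℂ → ℝ≥0∞} (hF : Measurable F) (R : ℝ) :
    ∫⁻ z in ball (0 : ℂ) R, F z =
      ∫⁻ r in Ioo 0 R, ENNReal.ofReal r * ∫⁻ θ in Ioo (-π) π, F (circleMap 0 r θ) := by
  have hIoo : Ioo 0 R = Iio R ∩ Ioi 0 := by rw [inter_comm, Ioi_inter_Iio]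
  rw [← lintegral_indicator measurableSet_ball,
    lintegral_eq_lintegral_circleMap (hF.indicator measurableSet_ball), hIoo]
  refine (setLIntegral_congr_fun measurableSet_Ioi fun r (hr : 0 < r) ↦ ?_).trans
    (setLIntegral_indicator measurableSet_Iio _)
  have hball (θ : ℝ) : circleMap 0 r θ ∈ ball (0 : ℂ) R ↔ r < R := by
    rw [mem_ball_zero_iff, norm_circleMap_zero, abs_of_pos hr]
  by_cases hrR : r < R
  · simp [indicator, hball, hrR]
  · simp [indicator, hball, hrR]

theorem setLIntegral_ball_norm {W : ℝ → ℝ≥0∞} (hW : Measurable W) (R : ℝ) :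
    ∫⁻ z in ball (0 : ℂ) R, W ‖z‖ =
      ENNReal.ofReal (2 * π) * ∫⁻ r in Ioo 0 R, ENNReal.ofReal r * W r := by
  rw [setLIntegral_ball_eq_lintegral_circleMap (F := fun z ↦ W ‖z‖) (by fun_prop),
    ← lintegral_const_mul _ (by fun_prop)]
  refine setLIntegral_congr_fun measurableSet_Ioo fun r hr ↦ ?_
  simp only [norm_circleMap_zero, abs_of_pos hr.1, setLIntegral_const, Real.volume_Ioo,
    sub_neg_eq_add, ← two_mul]
  ring

theorem setLIntegral_dA (F : ℂ → ℝ≥0∞) (S : Set ℂ) :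
    ∫⁻ z in S, F z ∂dA = (ENNReal.ofReal π)⁻¹ * ∫⁻ z in S, F z := by
  rw [dA, Measure.restrict_smul, lintegral_smul_measure, smul_eq_mul]

theorem setLIntegral_dA_lt_top {F : ℂ → ℝ≥0∞} {S : Set ℂ} :
    ∫⁻ z in S, F z ∂dA < ⊤ ↔ ∫⁻ z in S, F z < ⊤ := by
  rw [setLIntegral_dA, ENNReal.mul_lt_top_iff]
  simp +contextual [pi_pos]

/-! ### Weighted Dirichlet spaces -/

/-- The weighted Dirichlet space `𝒟_s`, whose defining integral is the one of `Q_s` for the single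
parameter `a = 0`. -/
def WeightedDirichlet (s : ℝ) : Set (ℂ → ℂ) :=
  {f | HolOn f ∧ ∫⁻ z in ball (0 : ℂ) 1,
    ENNReal.ofReal (‖deriv f z‖ ^ 2 * (1 - ‖z‖ ^ 2) ^ s) ∂dA < ⊤}

theorem Qs_subset_weightedDirichlet (s : ℝ) : Qs s ⊆ WeightedDirichlet s := by
  rintro f ⟨hf, hsup⟩
  have h0 := (le_iSup₂ (f := fun a (_ : a ∈ ball (0 : ℂ) 1) ↦ ∫⁻ z in ball (0 : ℂ) 1,
    ENNReal.ofReal (‖deriv f z‖ ^ 2 * (1 - ‖phi a z‖ ^ 2) ^ s) ∂dA) 0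
    (mem_ball_self one_pos)).trans_lt hsup
  exact ⟨hf, by simpa [phi] using h0⟩

theorem weightedDirichlet_mono : Monotone WeightedDirichlet := by
  rintro s t hst f ⟨hf, hfin⟩
  refine ⟨hf, (setLIntegral_mono' measurableSet_ball fun z hz ↦ ?_).trans_lt hfin⟩
  have hz2 : ‖z‖ ^ 2 < 1 := by
    rw [mem_ball_zero_iff] at hz
    exact pow_lt_one₀ (norm_nonneg z) hz two_ne_zero
  refine ENNReal.ofReal_le_ofReal (mul_le_mul_of_nonneg_left ?_ (by positivity))
  exact rpow_le_rpow_of_exponent_ge (by linarith) (by linarith [sq_nonneg ‖z‖]) hst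

theorem mem_Qs_of_eqOn_zero (s : ℝ) (hf : ∀ z ∈ ball (0 : ℂ) 1, f z = 0) : f ∈ Qs s := by
  have hderiv : ∀ z ∈ ball (0 : ℂ) 1, deriv f z = 0 := fun z hz ↦ by
    rw [(eventuallyEq_of_mem (isOpen_ball.mem_nhds hz) hf : f =ᶠ[𝓝 z] fun _ ↦ 0).deriv_eq,
      deriv_const]
  have hint (a : ℂ) : ∫⁻ z in ball (0 : ℂ) 1,
      ENNReal.ofReal (‖deriv f z‖ ^ 2 * (1 - ‖phi a z‖ ^ 2) ^ s) ∂dA = 0 :=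
    (setLIntegral_congr_fun measurableSet_ball fun z hz ↦ by simp [hderiv z hz]).trans
      lintegral_zero
  exact ⟨(differentiableOn_const 0).congr hf, by simp_rw [hint]; simp⟩

theorem le_lintegral_pow_mul_one_sub_sq_rpow {s : ℝ} (hs : 0 ≤ s) (m : ℕ) :
    ENNReal.ofReal (1 / 2 * (1 / (4 * (m + 1 : ℝ))) ^ (1 + s)) ≤
      ∫⁻ r in Ioo (0 : ℝ) 1, ENNReal.ofReal (r ^ m * (1 - r ^ 2) ^ s) := by
  set δ : ℝ := 1 / (4 * (m + 1 : ℝ)) with hδ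
  have hδ0 : 0 < δ := by positivity
  have hmδ : 2 * δ * m ≤ 1 / 2 := by
    rw [hδ]; field_simp; linarith
  have hδ4 : δ ≤ 1 / 4 := by
    rw [hδ]; exact one_div_le_one_div_of_le (by norm_num) (by linarith [m.cast_nonneg (α := ℝ)])
  have hbound : ∀ r ∈ Ioo (1 - 2 * δ) (1 - δ), 1 / 2 * δ ^ s ≤ r ^ m * (1 - r ^ 2) ^ s := by
    rintro r ⟨hr1, hr2⟩
    have hpow : 1 / 2 ≤ r ^ m := calc
      (1 / 2 : ℝ) ≤ 1 + m * (-(2 * δ)) := by linarith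
      _ ≤ (1 + -(2 * δ)) ^ m := one_add_mul_le_pow (by linarith) m
      _ ≤ r ^ m := by gcongr <;> linarith
    gcongr
    nlinarith
  calc ENNReal.ofReal (1 / 2 * δ ^ (1 + s))
      = ∫⁻ _ in Ioo (1 - 2 * δ) (1 - δ), ENNReal.ofReal (1 / 2 * δ ^ s) := by
        rw [setLIntegral_const, Real.volume_Ioo, ← ENNReal.ofReal_mul (by positivity),
          rpow_add hδ0, rpow_one]
        congr 1
        ring
    _ ≤ ∫⁻ r in Ioo (1 - 2 * δ) (1 - δ), ENNReal.ofReal (r ^ m * (1 - r ^ 2) ^ s) :=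
        setLIntegral_mono' measurableSet_Ioo fun r hr ↦ ENNReal.ofReal_le_ofReal (hbound r hr)
    _ ≤ _ := lintegral_mono_set (Ioo_subset_Ioo (by linarith) (by linarith))

theorem HolOn.tsum_sq_taylorCoeff_mul_pow_le_lintegral (hh : HolOn h) (s : ℝ) {r : ℝ} (h0 : 0 < r)
    (h1 : r < 1) :
    ∑' n, ENNReal.ofReal (2 * π * ‖taylorCoeff h n‖ ^ 2) *
        ENNReal.ofReal (r ^ (2 * n + 1) * (1 - r ^ 2) ^ s) ≤
      ENNReal.ofReal r * ∫⁻ θ in Ioo (-π) π, ENNReal.ofReal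
        (‖h (circleMap 0 r θ)‖ ^ 2 * (1 - ‖circleMap 0 r θ‖ ^ 2) ^ s) := by
  have hw : 0 ≤ (1 - r ^ 2) ^ s := rpow_nonneg (by nlinarith) s
  have hmeas : Measurable fun θ ↦ ENNReal.ofReal (‖h (circleMap 0 r θ)‖ ^ 2) :=
    ((hh.continuous_comp_circleMap h0 h1).norm.pow 2).measurable.ennreal_ofReal
  calc _ = ENNReal.ofReal r * (ENNReal.ofReal ((1 - r ^ 2) ^ s) *
        ∑' n, ENNReal.ofReal (2 * π * ‖taylorCoeff h n * r ^ n‖ ^ 2)) := by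
        rw [← ENNReal.tsum_mul_left, ← ENNReal.tsum_mul_left]
        refine tsum_congr fun n ↦ ?_
        rw [← ENNReal.ofReal_mul (by positivity), ← ENNReal.ofReal_mul hw,
          ← ENNReal.ofReal_mul h0.le, norm_mul, norm_pow, Complex.norm_real,
          Real.norm_of_nonneg h0.le]
        congr 1
        ring
    _ ≤ ENNReal.ofReal r * (ENNReal.ofReal ((1 - r ^ 2) ^ s) *
        ∫⁻ θ in Ioo (-π) π, ENNReal.ofReal (‖h (circleMap 0 r θ)‖ ^ 2)) := by
        gcongr
        exact hh.tsum_sq_taylorCoeff_le_lintegral h0 h1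
    _ = _ := by
        rw [← lintegral_const_mul _ hmeas]
        simp only [norm_circleMap_zero, abs_of_pos h0, mul_comm _ ((1 - r ^ 2) ^ s),
          ENNReal.ofReal_mul hw]

theorem HolOn.tsum_sq_taylorCoeff_deriv_mul_le (hf : HolOn f) (s : ℝ) :
    ∑' n, ENNReal.ofReal (2 * π * ‖taylorCoeff (deriv f) n‖ ^ 2) *
        ∫⁻ r in Ioo (0 : ℝ) 1, ENNReal.ofReal (r ^ (2 * n + 1) * (1 - r ^ 2) ^ s) ≤
      ∫⁻ z in ball (0 : ℂ) 1, ENNReal.ofReal (‖deriv f z‖ ^ 2 * (1 - ‖z‖ ^ 2) ^ s) := by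
  have := measurable_deriv f
  rw [setLIntegral_ball_eq_lintegral_circleMap (by fun_prop)]
  calc _ = ∫⁻ r in Ioo (0 : ℝ) 1, ∑' n, ENNReal.ofReal (2 * π * ‖taylorCoeff (deriv f) n‖ ^ 2) *
          ENNReal.ofReal (r ^ (2 * n + 1) * (1 - r ^ 2) ^ s) := by
        rw [lintegral_tsum fun n ↦ by fun_prop]
        exact tsum_congr fun n ↦ (lintegral_const_mul _ (by fun_prop)).symm
    _ ≤ _ := setLIntegral_mono' measurableSet_Ioo fun r hr ↦
        hf.deriv.tsum_sq_taylorCoeff_mul_pow_le_lintegral s hr.1 hr.2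

theorem summable_of_mem_weightedDirichlet {s : ℝ} (hs : 0 ≤ s) (hf : f ∈ WeightedDirichlet s) :
    Summable fun n : ℕ ↦ ‖taylorCoeff (deriv f) n‖ ^ 2 / (n + 1 : ℝ) ^ (1 + s) := by
  obtain ⟨hhol, hfin⟩ := hf
  rw [setLIntegral_dA_lt_top] at hfin
  have hterm (n : ℕ) :
      ENNReal.ofReal (π * (1 / 8) ^ (1 + s) *
        (‖taylorCoeff (deriv f) n‖ ^ 2 / (n + 1 : ℝ) ^ (1 + s))) ≤
      ENNReal.ofReal (2 * π * ‖taylorCoeff (deriv f) n‖ ^ 2) *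
        ∫⁻ r in Ioo (0 : ℝ) 1, ENNReal.ofReal (r ^ (2 * n + 1) * (1 - r ^ 2) ^ s) := by
    refine le_trans (le_of_eq ?_)
      (mul_le_mul_right (le_lintegral_pow_mul_one_sub_sq_rpow hs (2 * n + 1)) _)
    have hsplit : 1 / (4 * ((2 * n + 1 : ℕ) + 1 : ℝ)) = 1 / 8 / (n + 1) := by
      push_cast
      field
    rw [← ENNReal.ofReal_mul (by positivity), hsplit,
      div_rpow (by norm_num : (0 : ℝ) ≤ 1 / 8) (by positivity)]
    congr 1
    ring
  have hsum := ((ENNReal.tsum_le_tsum hterm).trans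
    (hhol.tsum_sq_taylorCoeff_deriv_mul_le s)).trans_lt hfin
  exact (summable_mul_left_iff (by positivity)).mp
    ((ENNReal.summable_toReal hsum.ne).congr fun n ↦ ENNReal.toReal_ofReal (by positivity))

/-! ### Lacunary series -/

theorem taylorCoeff_eq_extend {e : ℕ → ℕ} (he : e.Injective) {v : ℕ → ℂ} (hf : AnalyticAt ℂ f 0)
    (hv : ∀ᶠ z in 𝓝 0, HasSum (fun k ↦ v k * z ^ e k) (f z)) :
    taylorCoeff f = Function.extend e v 0 := by
  refine taylorCoeff_eq_of_hasSum hf (hv.mono fun z hz ↦ (he.hasSum_iff fun n hn ↦ ?_).mp ?_)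
  · rw [Function.extend_apply' _ _ _ hn, Pi.zero_apply, zero_mul]
  · simpa only [Function.comp_def, he.extend_apply] using hz

theorem sum_antidiagonal_mul_extend {e : ℕ → ℕ} (he : StrictMono e) {a : ℕ → ℂ} {m : ℕ}
    (ha : ∀ i < m, a i = 0) (v : ℕ → ℂ) (k : ℕ) :
    ∑ ij ∈ antidiagonal (m + e k), a ij.1 * Function.extend e v 0 ij.2 =
      ∑ l ∈ Finset.range (k + 1), v l * a (m + e k - e l) := by
  have hle {l : ℕ} (hl : l ∈ Finset.range (k + 1)) : e l ≤ e k :=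
    he.monotone (Nat.lt_succ_iff.mp (Finset.mem_range.mp hl))
  refine (Finset.sum_of_injOn (fun l ↦ (m + e k - e l, e l)) ?_ ?_ ?_ ?_).symm
  · exact fun l _ l' _ hll' ↦ he.injective (Prod.ext_iff.mp hll').2
  · intro l hl
    have := hle hl
    simp only [Finset.mem_coe, Finset.HasAntidiagonal.mem_antidiagonal]
    omega
  · rintro ⟨i, j⟩ hij hnotMem
    rw [Finset.HasAntidiagonal.mem_antidiagonal] at hij
    by_cases hj : ∃ l, e l = j
    · obtain ⟨l, rfl⟩ := hj
      have hkl : k < l := by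
        by_contra! hlk
        exact hnotMem ⟨l, Finset.mem_coe.mpr (Finset.mem_range.mpr (by omega)),
          Prod.ext (by dsimp only at hij ⊢; omega) rfl⟩
      have := he hkl
      rw [ha i (by dsimp only at hij; omega), zero_mul]
    · rw [Function.extend_apply' _ _ _ hj, Pi.zero_apply, mul_zero]
  · intro l _
    rw [he.injective.extend_apply, mul_comm]

/-- The lacunary power series with coefficients `u k` at the exponents `4 ^ k`. The ratio `4` makes
the square roots `2 ^ k` of the exponents available as weights. -/
def lacunarySeries (u : ℕ → ℂ) (z : ℂ) : ℂ := ∑' k, u k * z ^ 4 ^ k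

section lacunarySeries

variable {u : ℕ → ℂ} {C : ℝ}

theorem norm_mul_pow_four_pow_le (hu : ∀ k, ‖u k‖ ≤ C) {ρ : ℝ} (hρ : ρ < 1) (k : ℕ)
    (hz : z ∈ ball (0 : ℂ) ρ) : ‖u k * z ^ 4 ^ k‖ ≤ C * ρ ^ k := by
  rw [mem_ball_zero_iff] at hz
  rw [norm_mul, norm_pow]
  have hk : k ≤ 4 ^ k := (Nat.lt_pow_self (by norm_num)).le
  have hpow : ‖z‖ ^ 4 ^ k ≤ ρ ^ k := calc
    ‖z‖ ^ 4 ^ k ≤ ‖z‖ ^ k := pow_le_pow_of_le_one (norm_nonneg z) (hz.trans hρ).le hk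
    _ ≤ ρ ^ k := by gcongr
  exact mul_le_mul (hu k) hpow (by positivity) ((norm_nonneg _).trans (hu k))

theorem hasSum_lacunarySeries (hu : ∀ k, ‖u k‖ ≤ C) (hz : z ∈ ball (0 : ℂ) 1) :
    HasSum (fun k ↦ u k * z ^ 4 ^ k) (lacunarySeries u z) := by
  rw [mem_ball_zero_iff] at hz
  obtain ⟨ρ, hzρ, hρ⟩ := exists_between hz
  exact (Summable.of_norm_bounded
    ((summable_geometric_of_lt_one ((norm_nonneg z).trans hzρ.le) hρ).mul_left C) fun k ↦
    norm_mul_pow_four_pow_le hu hρ k (mem_ball_zero_iff.mpr hzρ)).hasSum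

theorem holOn_lacunarySeries (hu : ∀ k, ‖u k‖ ≤ C) : HolOn (lacunarySeries u) := by
  intro z hz
  rw [mem_ball_zero_iff] at hz
  obtain ⟨ρ, hzρ, hρ⟩ := exists_between hz
  have hdiff := differentiableOn_tsum_of_summable_norm
    ((summable_geometric_of_lt_one ((norm_nonneg z).trans hzρ.le) hρ).mul_left C)
    (fun k ↦ (by fun_prop : DifferentiableOn ℂ (fun z ↦ u k * z ^ 4 ^ k) _)) isOpen_ball
    fun k _ ↦ norm_mul_pow_four_pow_le hu hρ k
  exact (hdiff.differentiableAt
    (isOpen_ball.mem_nhds (mem_ball_zero_iff.mpr hzρ))).differentiableWithinAt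

theorem hasSum_deriv_lacunarySeries (hu : ∀ k, ‖u k‖ ≤ C) (hz : z ∈ ball (0 : ℂ) 1) :
    HasSum (fun k ↦ 4 ^ k * u k * z ^ (4 ^ k - 1)) (deriv (lacunarySeries u) z) := by
  rw [mem_ball_zero_iff] at hz
  obtain ⟨ρ, hzρ, hρ⟩ := exists_between hz
  have hsum := hasSum_deriv_of_summable_norm
    ((summable_geometric_of_lt_one ((norm_nonneg z).trans hzρ.le) hρ).mul_left C)
    (fun k ↦ (by fun_prop : DifferentiableOn ℂ (fun z ↦ u k * z ^ 4 ^ k) _)) isOpen_ball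
    (fun k _ ↦ norm_mul_pow_four_pow_le hu hρ k) (mem_ball_zero_iff.mpr hzρ)
  refine hsum.congr_fun fun k ↦ ?_
  rw [deriv_const_mul_field, deriv_pow_field]
  push_cast
  ring

theorem strictMono_four_pow : StrictMono fun k : ℕ ↦ 4 ^ k :=
  pow_right_strictMono₀ (by norm_num)

theorem strictMono_four_pow_sub_one : StrictMono fun k : ℕ ↦ 4 ^ k - 1 := fun _ _ hkl ↦
  Nat.sub_lt_sub_right (Nat.one_le_pow _ _ (by norm_num)) (strictMono_four_pow hkl)

theorem taylorCoeff_lacunarySeries (hu : ∀ k, ‖u k‖ ≤ C) :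
    taylorCoeff (lacunarySeries u) = Function.extend (fun k ↦ 4 ^ k) u 0 :=
  taylorCoeff_eq_extend strictMono_four_pow.injective
    ((holOn_lacunarySeries hu).analyticAt (mem_ball_self one_pos))
    (eventually_of_mem (ball_mem_nhds 0 one_pos) fun _ ↦ hasSum_lacunarySeries hu)

theorem taylorCoeff_deriv_lacunarySeries (hu : ∀ k, ‖u k‖ ≤ C) :
    taylorCoeff (deriv (lacunarySeries u)) =
      Function.extend (fun k ↦ 4 ^ k - 1) (fun k ↦ 4 ^ k * u k) 0 :=
  taylorCoeff_eq_extend strictMono_four_pow_sub_one.injective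
    ((holOn_lacunarySeries hu).deriv.analyticAt (mem_ball_self one_pos))
    (eventually_of_mem (ball_mem_nhds 0 one_pos) fun _ ↦ hasSum_deriv_lacunarySeries hu)

end lacunarySeries

/-! ### Radial integrals -/

theorem tsum_mul_rpow_le {ι : Type*} {p : ℝ} (hp : 1 ≤ p) (w x : ι → ℝ≥0∞) :
    (∑' i, w i * x i) ^ p ≤ (∑' i, w i) ^ (p - 1) * ∑' i, w i * x i ^ p := by
  have hp0 : 0 < p := one_pos.trans_le hp
  have hholder : ∑' i, w i * x i ≤
      (∑' i, w i) ^ (1 - p⁻¹) * (∑' i, w i * x i ^ p) ^ p⁻¹ := by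
    rw [ENNReal.tsum_eq_iSup_sum]
    refine iSup_le fun s ↦ (ENNReal.inner_le_weight_mul_Lp_of_nonneg s hp w x).trans ?_
    have : 0 ≤ 1 - p⁻¹ := sub_nonneg.mpr (inv_le_one_of_one_le₀ hp)
    gcongr <;> exact ENNReal.sum_le_tsum s
  calc (∑' i, w i * x i) ^ p
      ≤ ((∑' i, w i) ^ (1 - p⁻¹) * (∑' i, w i * x i ^ p) ^ p⁻¹) ^ p := by gcongr
    _ = (∑' i, w i) ^ (p - 1) * ∑' i, w i * x i ^ p := by
      rw [ENNReal.mul_rpow_of_nonneg _ _ hp0.le, ← ENNReal.rpow_mul, ← ENNReal.rpow_mul,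
        inv_mul_cancel₀ hp0.ne', ENNReal.rpow_one, sub_mul, one_mul, inv_mul_cancel₀ hp0.ne']

theorem natCast_mul_pow_pred_mul_one_sub_le {r : ℝ} (h0 : 0 ≤ r) (h1 : r ≤ 1) (n : ℕ) :
    n * r ^ (n - 1) * (1 - r) ≤ 1 := by
  have hsum : n * r ^ (n - 1) ≤ ∑ i ∈ Finset.range n, r ^ i := by
    rw [← nsmul_eq_mul, ← Finset.card_range n, ← Finset.sum_const, Finset.card_range]
    refine Finset.sum_le_sum fun i hi ↦ pow_le_pow_of_le_one h0 h1 ?_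
    have := Finset.mem_range.mp hi
    omega
  calc n * r ^ (n - 1) * (1 - r) ≤ (∑ i ∈ Finset.range n, r ^ i) * (1 - r) := by
        gcongr
    _ = 1 - r ^ n := geom_sum_mul_neg r n
    _ ≤ 1 := sub_le_self 1 (pow_nonneg h0 n)

theorem tsum_min_two_pow_le {v : ℝ} (hv : 1 ≤ v) :
    ∑' k : ℕ, ENNReal.ofReal (min (2 ^ k) (v ^ 2 / 2 ^ k)) ≤ ENNReal.ofReal (4 * v) := by
  obtain ⟨K, hKv, hvK⟩ := exists_nat_pow_near hv (one_lt_two (α := ℝ))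
  have hhead : ∑ k ∈ Finset.range (K + 1), ENNReal.ofReal (min (2 ^ k) (v ^ 2 / 2 ^ k)) ≤
      ENNReal.ofReal (2 * v) := by
    rw [← ENNReal.ofReal_sum_of_nonneg fun k _ ↦ by positivity]
    refine ENNReal.ofReal_le_ofReal ((Finset.sum_le_sum fun k _ ↦ min_le_left _ _).trans ?_)
    rw [geom_sum_eq (by norm_num), pow_succ]
    linarith
  have htail : ∑' k, ENNReal.ofReal (min (2 ^ (k + (K + 1))) (v ^ 2 / 2 ^ (k + (K + 1)))) ≤
      ENNReal.ofReal (2 * v) := by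
    have hgeom : HasSum (fun k : ℕ ↦ v ^ 2 / 2 ^ (k + (K + 1))) (v ^ 2 / 2 ^ K) := by
      convert! hasSum_geometric_two.mul_left (v ^ 2 / 2 ^ (K + 1)) using 1
      · funext k
        rw [pow_add, one_div_pow]
        field
      · field
    calc ∑' k, ENNReal.ofReal (min (2 ^ (k + (K + 1))) (v ^ 2 / 2 ^ (k + (K + 1))))
        ≤ ∑' k : ℕ, ENNReal.ofReal (v ^ 2 / 2 ^ (k + (K + 1))) :=
          ENNReal.tsum_le_tsum fun k ↦ ENNReal.ofReal_le_ofReal (min_le_right _ _)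
      _ = ENNReal.ofReal (v ^ 2 / 2 ^ K) := by
          rw [← ENNReal.ofReal_tsum_of_nonneg (fun k ↦ by positivity) hgeom.summable,
            hgeom.tsum_eq]
      _ ≤ ENNReal.ofReal (2 * v) := by
          refine ENNReal.ofReal_le_ofReal ((div_le_iff₀ (by positivity)).mpr ?_)
          rw [pow_succ] at hvK
          nlinarith
  calc _ = _ := (ENNReal.summable.sum_add_tsum_nat_add' (k := K + 1)).symm
    _ ≤ ENNReal.ofReal (2 * v) + ENNReal.ofReal (2 * v) := add_le_add hhead htail
    _ = ENNReal.ofReal (4 * v) := by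
      rw [← ENNReal.ofReal_add (by positivity) (by positivity)]
      ring_nf

theorem tsum_two_pow_mul_pow_le {r : ℝ} (h0 : 0 ≤ r) (h1 : r < 1) :
    ∑' k : ℕ, ENNReal.ofReal (2 ^ k * r ^ (4 ^ k - 1)) ≤
      ENNReal.ofReal (4 * (1 - r) ^ (-(1 / 2) : ℝ)) := by
  have hr : 0 < 1 - r := sub_pos.mpr h1
  set v : ℝ := (1 - r) ^ (-(1 / 2) : ℝ) with hv
  have hv2 : v ^ 2 = 1 / (1 - r) := by
    rw [hv, ← rpow_natCast, ← rpow_mul hr.le]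
    norm_num [rpow_neg_one]
  have hv1 : 1 ≤ v := one_le_rpow_of_pos_of_le_one_of_nonpos hr (by linarith) (by norm_num)
  refine (ENNReal.tsum_le_tsum fun k ↦ ENNReal.ofReal_le_ofReal (le_min ?_ ?_)).trans
    (tsum_min_two_pow_le hv1)
  · exact mul_le_of_le_one_right (by positivity) (pow_le_one₀ h0 h1.le)
  · have hbound := natCast_mul_pow_pred_mul_one_sub_le h0 h1.le (4 ^ k)
    rw [hv2, le_div_iff₀ (by positivity), le_div_iff₀ hr]
    convert! hbound using 2
    rw [mul_right_comm, ← mul_pow]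
    norm_num

theorem setLIntegral_one_sub_rpow_mul_pow_le {β : ℝ} (hβ : 0 < β) {n : ℕ} (hn : 0 < n) :
    ∫⁻ r in Ioo (0 : ℝ) 1, ENNReal.ofReal ((1 - r) ^ (β - 1) * r ^ n) ≤
      ENNReal.ofReal ((1 / n) ^ β * Real.Gamma β) := by
  have hn' : (0 : ℝ) < n := Nat.cast_pos.mpr hn
  have hint : IntegrableOn (fun x : ℝ ↦ x ^ (β - 1) * Real.exp (-(n * x))) (Ioi 0) := by
    simpa only [rpow_one, neg_mul] using
      integrableOn_rpow_mul_exp_neg_mul_rpow (s := β - 1) (p := 1) (by linarith) one_pos hn'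
  set G : ℝ → ℝ≥0∞ := (Ioo (0 : ℝ) 1).indicator
    fun x ↦ ENNReal.ofReal (x ^ (β - 1) * Real.exp (-(n * x))) with hG
  have hle (r : ℝ) : (Ioo (0 : ℝ) 1).indicator
      (fun r ↦ ENNReal.ofReal ((1 - r) ^ (β - 1) * r ^ n)) r ≤ G (1 - r) := by
    by_cases hr : r ∈ Ioo (0 : ℝ) 1
    · have hr' : 1 - r ∈ Ioo (0 : ℝ) 1 := ⟨sub_pos.mpr hr.2, sub_lt_self 1 hr.1⟩
      have hpow : r ^ n ≤ Real.exp (-(n * (1 - r))) := calc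
        r ^ n ≤ Real.exp (-(1 - r)) ^ n :=
          pow_le_pow_left₀ hr.1.le (by linarith [Real.add_one_le_exp (-(1 - r))]) n
        _ = _ := by rw [← Real.exp_nat_mul, mul_neg]
      rw [hG, indicator_of_mem hr, indicator_of_mem hr']
      exact ENNReal.ofReal_le_ofReal (mul_le_mul_of_nonneg_left hpow (rpow_nonneg hr'.1.le _))
    · rw [indicator_of_notMem hr]
      exact zero_le
  calc ∫⁻ r in Ioo (0 : ℝ) 1, ENNReal.ofReal ((1 - r) ^ (β - 1) * r ^ n)
      ≤ ∫⁻ r, G (1 - r) := by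
        rw [← lintegral_indicator measurableSet_Ioo]
        exact lintegral_mono hle
    _ = ∫⁻ x in Ioo (0 : ℝ) 1, ENNReal.ofReal (x ^ (β - 1) * Real.exp (-(n * x))) := by
        rw [lintegral_sub_left_eq_self G 1, lintegral_indicator measurableSet_Ioo]
    _ ≤ ∫⁻ x in Ioi (0 : ℝ), ENNReal.ofReal (x ^ (β - 1) * Real.exp (-(n * x))) :=
        lintegral_mono_set Ioo_subset_Ioi_self
    _ = ENNReal.ofReal ((1 / n) ^ β * Real.Gamma β) := by
        rw [← Real.integral_rpow_mul_exp_neg_mul_Ioi hβ hn',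
          ofReal_integral_eq_lintegral_ofReal hint]
        exact ae_restrict_of_forall_mem measurableSet_Ioi fun x (hx : 0 < x) ↦ by positivity

theorem setLIntegral_ball_one_sub_norm_rpow_mul_pow_le {β : ℝ} (hβ : 0 < β) (n : ℕ) :
    ∫⁻ z in ball (0 : ℂ) 1, ENNReal.ofReal ((1 - ‖z‖) ^ (β - 1) * ‖z‖ ^ n) ≤
      ENNReal.ofReal (2 * π * Real.Gamma β * (1 / (n + 1 : ℕ)) ^ β) := by
  rw [setLIntegral_ball_norm (W := fun r ↦ ENNReal.ofReal ((1 - r) ^ (β - 1) * r ^ n))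
    (by fun_prop)]
  calc _ = ENNReal.ofReal (2 * π) * ∫⁻ r in Ioo (0 : ℝ) 1,
        ENNReal.ofReal ((1 - r) ^ (β - 1) * r ^ (n + 1)) := by
        congr 1
        refine setLIntegral_congr_fun measurableSet_Ioo fun r hr ↦ ?_
        simp only [← ENNReal.ofReal_mul hr.1.le]
        ring_nf
    _ ≤ ENNReal.ofReal (2 * π) *
        ENNReal.ofReal ((1 / (n + 1 : ℕ)) ^ β * Real.Gamma β) := by
        gcongr
        exact setLIntegral_one_sub_rpow_mul_pow_le hβ n.succ_pos
    _ = _ := by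
        rw [← ENNReal.ofReal_mul (by positivity)]
        ring_nf

/-! ### Lacunary series in Besov spaces -/

section Besov

variable {u : ℕ → ℂ} {p : ℝ}

theorem ofReal_norm_deriv_lacunarySeries_rpow_le (hp : 1 ≤ p) {C : ℝ} (hu : ∀ k, ‖u k‖ ≤ C)
    (hz : z ∈ ball (0 : ℂ) 1) :
    ENNReal.ofReal (‖deriv (lacunarySeries u) z‖ ^ p) ≤
      ENNReal.ofReal (4 ^ (p - 1) * (1 - ‖z‖) ^ (-((p - 1) / 2))) *
        ∑' k, ENNReal.ofReal (2 ^ k * (2 ^ k * ‖u k‖) ^ p * ‖z‖ ^ (4 ^ k - 1)) := by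
  have hz1 : 0 < 1 - ‖z‖ := sub_pos.mpr (mem_ball_zero_iff.mp hz)
  have hp0 : 0 ≤ p := zero_le_one.trans hp
  have hmass := tsum_two_pow_mul_pow_le (norm_nonneg z) (sub_pos.mp hz1)
  have hnorm : ENNReal.ofReal ‖deriv (lacunarySeries u) z‖ ≤
      ∑' k, ENNReal.ofReal (2 ^ k * ‖z‖ ^ (4 ^ k - 1)) * ENNReal.ofReal (2 ^ k * ‖u k‖) := by
    rw [← (hasSum_deriv_lacunarySeries hu hz).tsum_eq, ofReal_norm]
    refine enorm_tsum_le_tsum_enorm.trans (ENNReal.tsum_le_tsum fun k ↦ le_of_eq ?_)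
    have hfour : (4 : ℝ) ^ k = 2 ^ k * 2 ^ k := by rw [← mul_pow]; norm_num
    rw [← ENNReal.ofReal_mul (by positivity), ← ofReal_norm, norm_mul, norm_mul, norm_pow, norm_pow,
      Complex.norm_ofNat, hfour]
    ring_nf
  calc ENNReal.ofReal (‖deriv (lacunarySeries u) z‖ ^ p)
      ≤ (∑' k, ENNReal.ofReal (2 ^ k * ‖z‖ ^ (4 ^ k - 1)) *
          ENNReal.ofReal (2 ^ k * ‖u k‖)) ^ p := by
        rw [← ENNReal.ofReal_rpow_of_nonneg (norm_nonneg _) hp0]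
        gcongr
    _ ≤ (∑' k, ENNReal.ofReal (2 ^ k * ‖z‖ ^ (4 ^ k - 1))) ^ (p - 1) *
        ∑' k, ENNReal.ofReal (2 ^ k * ‖z‖ ^ (4 ^ k - 1)) * ENNReal.ofReal (2 ^ k * ‖u k‖) ^ p :=
        tsum_mul_rpow_le hp _ _
    _ ≤ ENNReal.ofReal (4 * (1 - ‖z‖) ^ (-(1 / 2) : ℝ)) ^ (p - 1) *
        ∑' k, ENNReal.ofReal (2 ^ k * ‖z‖ ^ (4 ^ k - 1)) * ENNReal.ofReal (2 ^ k * ‖u k‖) ^ p := by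
        gcongr
    _ = _ := by
        rw [ENNReal.ofReal_rpow_of_nonneg (by positivity) (sub_nonneg.mpr hp),
          mul_rpow (by norm_num) (by positivity), ← rpow_mul hz1.le]
        congr 1
        · ring_nf
        · refine tsum_congr fun k ↦ ?_
          rw [ENNReal.ofReal_rpow_of_nonneg (by positivity) hp0,
            ← ENNReal.ofReal_mul (by positivity)]
          ring_nf

theorem ofReal_besov_integrand_lacunarySeries_le (hp : 1 ≤ p) {C : ℝ} (hu : ∀ k, ‖u k‖ ≤ C)
    (hz : z ∈ ball (0 : ℂ) 1) :
    ENNReal.ofReal ((1 - ‖z‖) ^ (p - 2) * ‖deriv (lacunarySeries u) z‖ ^ p) ≤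
      ENNReal.ofReal (4 ^ (p - 1)) * ∑' k, ENNReal.ofReal ((1 - ‖z‖) ^ ((p - 1) / 2 - 1) *
        (2 ^ k * (2 ^ k * ‖u k‖) ^ p * ‖z‖ ^ (4 ^ k - 1))) := by
  have hz1 : 0 < 1 - ‖z‖ := sub_pos.mpr (mem_ball_zero_iff.mp hz)
  have hweight : (1 - ‖z‖) ^ (p - 2) * (1 - ‖z‖) ^ (-((p - 1) / 2)) =
      (1 - ‖z‖) ^ ((p - 1) / 2 - 1) := by
    rw [← rpow_add hz1]
    ring_nf
  calc ENNReal.ofReal ((1 - ‖z‖) ^ (p - 2) * ‖deriv (lacunarySeries u) z‖ ^ p)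
      ≤ ENNReal.ofReal ((1 - ‖z‖) ^ (p - 2)) *
        (ENNReal.ofReal (4 ^ (p - 1) * (1 - ‖z‖) ^ (-((p - 1) / 2))) *
          ∑' k, ENNReal.ofReal (2 ^ k * (2 ^ k * ‖u k‖) ^ p * ‖z‖ ^ (4 ^ k - 1))) := by
        rw [ENNReal.ofReal_mul (by positivity)]
        gcongr
        exact ofReal_norm_deriv_lacunarySeries_rpow_le hp hu hz
    _ = ENNReal.ofReal (4 ^ (p - 1)) * (ENNReal.ofReal ((1 - ‖z‖) ^ ((p - 1) / 2 - 1)) *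
          ∑' k, ENNReal.ofReal (2 ^ k * (2 ^ k * ‖u k‖) ^ p * ‖z‖ ^ (4 ^ k - 1))) := by
        rw [← hweight, ENNReal.ofReal_mul (by positivity), ENNReal.ofReal_mul (by positivity)]
        ring
    _ = _ := by
        rw [← ENNReal.tsum_mul_left]
        simp only [ENNReal.ofReal_mul (rpow_nonneg hz1.le ((p - 1) / 2 - 1))]

theorem exists_norm_le_of_summable_four_pow_mul_rpow (hp : 0 < p)
    (hu : Summable fun k ↦ 4 ^ k * ‖u k‖ ^ p) : ∃ C, ∀ k, ‖u k‖ ≤ C := by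
  refine ⟨(∑' k, 4 ^ k * ‖u k‖ ^ p) ^ p⁻¹, fun k ↦ ?_⟩
  refine (le_rpow_inv_iff_of_pos (norm_nonneg _) (tsum_nonneg fun k ↦ by positivity) hp).mpr ?_
  calc ‖u k‖ ^ p ≤ 4 ^ k * ‖u k‖ ^ p :=
        le_mul_of_one_le_left (by positivity) (one_le_pow₀ (by norm_num))
    _ ≤ ∑' k, 4 ^ k * ‖u k‖ ^ p := hu.le_tsum k fun l _ ↦ by positivity

theorem lintegral_besov_weight_mul_pow_le (hp : 1 < p) (k : ℕ) {a : ℝ} (ha : 0 ≤ a) :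
    ∫⁻ z in ball (0 : ℂ) 1, ENNReal.ofReal ((1 - ‖z‖) ^ ((p - 1) / 2 - 1) *
      (2 ^ k * (2 ^ k * a) ^ p * ‖z‖ ^ (4 ^ k - 1))) ≤
      ENNReal.ofReal (2 * π * Real.Gamma ((p - 1) / 2) * (4 ^ k * a ^ p)) := by
  have hβ : 0 < (p - 1) / 2 := by linarith
  have hexp : (2 ^ k : ℝ) * (2 ^ k * a) ^ p * (1 / (4 ^ k : ℝ)) ^ ((p - 1) / 2) =
      4 ^ k * a ^ p := by
    have hw : (0 : ℝ) < 2 ^ k := by positivity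
    have hfour : (4 : ℝ) ^ k = 2 ^ k * 2 ^ k := by rw [← mul_pow]; norm_num
    have hinv : (1 / (4 ^ k : ℝ)) ^ ((p - 1) / 2) = ((2 : ℝ) ^ k) ^ (1 - p) := by
      rw [hfour, ← sq, one_div, ← rpow_natCast, ← rpow_neg hw.le, ← rpow_mul hw.le]
      push_cast
      ring_nf
    have hone : ((2 : ℝ) ^ k) ^ p * (2 ^ k) ^ (1 - p) = 2 ^ k := by
      rw [← rpow_add hw, add_sub_cancel, rpow_one]
    rw [hinv, mul_rpow hw.le ha, hfour]
    linear_combination 2 ^ k * a ^ p * hone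
  calc _ = ENNReal.ofReal (2 ^ k * (2 ^ k * a) ^ p) * ∫⁻ z in ball (0 : ℂ) 1,
        ENNReal.ofReal ((1 - ‖z‖) ^ ((p - 1) / 2 - 1) * ‖z‖ ^ (4 ^ k - 1)) := by
        rw [← lintegral_const_mul _ (by fun_prop)]
        refine lintegral_congr fun z ↦ ?_
        rw [← ENNReal.ofReal_mul (by positivity)]
        ring_nf
    _ ≤ ENNReal.ofReal (2 ^ k * (2 ^ k * a) ^ p) * ENNReal.ofReal
        (2 * π * Real.Gamma ((p - 1) / 2) * (1 / (4 ^ k - 1 + 1 : ℕ)) ^ ((p - 1) / 2)) := by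
        gcongr
        exact setLIntegral_ball_one_sub_norm_rpow_mul_pow_le hβ _
    _ = _ := by
        rw [Nat.sub_add_cancel (Nat.one_le_pow _ _ (by norm_num)), ← hexp,
          ← ENNReal.ofReal_mul (by positivity)]
        push_cast
        ring_nf

theorem lacunarySeries_mem_besov (hp : 1 < p) (hu : Summable fun k ↦ 4 ^ k * ‖u k‖ ^ p) :
    lacunarySeries u ∈ Besov p := by
  obtain ⟨C, hC⟩ := exists_norm_le_of_summable_four_pow_mul_rpow (one_pos.trans hp) hu
  refine ⟨holOn_lacunarySeries hC, setLIntegral_dA_lt_top.mpr ?_⟩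
  calc _ ≤ ∫⁻ z in ball (0 : ℂ) 1, ENNReal.ofReal (4 ^ (p - 1)) *
        ∑' k, ENNReal.ofReal ((1 - ‖z‖) ^ ((p - 1) / 2 - 1) *
          (2 ^ k * (2 ^ k * ‖u k‖) ^ p * ‖z‖ ^ (4 ^ k - 1))) :=
        setLIntegral_mono' measurableSet_ball fun z hz ↦
          ofReal_besov_integrand_lacunarySeries_le hp.le hC hz
    _ = ENNReal.ofReal (4 ^ (p - 1)) * ∑' k, ∫⁻ z in ball (0 : ℂ) 1,
        ENNReal.ofReal ((1 - ‖z‖) ^ ((p - 1) / 2 - 1) *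
          (2 ^ k * (2 ^ k * ‖u k‖) ^ p * ‖z‖ ^ (4 ^ k - 1))) := by
        rw [lintegral_const_mul _ (Measurable.tsum fun k ↦ by fun_prop),
          lintegral_tsum fun k ↦ by fun_prop]
    _ ≤ ENNReal.ofReal (4 ^ (p - 1)) * ∑' k, ENNReal.ofReal
        (2 * π * Real.Gamma ((p - 1) / 2) * (4 ^ k * ‖u k‖ ^ p)) := by
        gcongr with k
        exact lintegral_besov_weight_mul_pow_le hp k (norm_nonneg _)
    _ < ⊤ := ENNReal.mul_lt_top ENNReal.ofReal_lt_top (hu.mul_left _).tsum_ofReal_lt_top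

end Besov

/-! ### Choice of the coefficients -/

theorem exists_norm_eq_one_norm_le_norm_add_mul (x y : ℂ) :
    ∃ ε : ℂ, ‖ε‖ = 1 ∧ ‖y‖ ≤ ‖x + ε * y‖ := by
  by_contra! hlt
  have hplus := hlt 1 norm_one
  have hminus := hlt (-1) (by rw [norm_neg, norm_one])
  have htriangle := norm_sub_le (x + 1 * y) (x + -1 * y)
  rw [show x + 1 * y - (x + -1 * y) = 2 * y by ring, norm_mul, Complex.norm_ofNat] at htriangle
  linarith

theorem exists_norm_eq_one_norm_diag_le (B : ℕ → ℕ → ℂ) :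
    ∃ ε : ℕ → ℂ, (∀ k, ‖ε k‖ = 1) ∧
      ∀ k, ‖B k k‖ ≤ ‖∑ l ∈ Finset.range (k + 1), ε l * B k l‖ := by
  choose sign hsign hle using exists_norm_eq_one_norm_le_norm_add_mul
  let ε : ℕ → ℂ := Nat.strongRec fun k prev ↦ sign (∑ l : Fin k, prev l l.2 * B k l) (B k k)
  have hε (k : ℕ) : ε k = sign (∑ l ∈ Finset.range k, ε l * B k l) (B k k) := by
    rw [← Fin.sum_univ_eq_sum_range fun l ↦ ε l * B k l]
    exact Nat.strongRec_eq _ k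
  refine ⟨ε, fun k ↦ hε k ▸ hsign _ _, fun k ↦ ?_⟩
  rw [Finset.sum_range_succ, hε k]
  exact hle _ _

/-- The moduli of the coefficients of the lacunary test functions in `B^p`. They are so small that
`∑ 4 ^ k * lacunaryModulus p k ^ p` converges and so large that the series
`∑ (4 ^ k * lacunaryModulus p k) ^ 2 / (4 ^ k) ^ (2 - 2 / p)` diverges. -/
def lacunaryModulus (p : ℝ) (k : ℕ) : ℝ := (k + 1 : ℝ) ^ (-(1 / 2) : ℝ) * (4 ^ k : ℝ) ^ (-(1 / p))

section lacunaryModulus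

variable {p : ℝ}

theorem lacunaryModulus_nonneg (p : ℝ) (k : ℕ) : 0 ≤ lacunaryModulus p k := by
  unfold lacunaryModulus
  positivity

theorem lacunaryModulus_le_one (hp : 0 < p) (k : ℕ) : lacunaryModulus p k ≤ 1 := by
  refine mul_le_one₀ (rpow_le_one_of_one_le_of_nonpos ?_ (by norm_num)) (by positivity)
    (rpow_le_one_of_one_le_of_nonpos (one_le_pow₀ (by norm_num)) ?_)
  · linarith [k.cast_nonneg (α := ℝ)]
  · exact neg_nonpos.mpr (by positivity)

theorem summable_four_pow_mul_lacunaryModulus_rpow (hp : 2 < p) :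
    Summable fun k ↦ 4 ^ k * lacunaryModulus p k ^ p := by
  have hshift := (summable_nat_add_iff 1).mpr
    (Real.summable_nat_rpow.mpr (by linarith : -(p / 2) < -1))
  refine hshift.congr fun k ↦ ?_
  have hfour : (0 : ℝ) < 4 ^ k := by positivity
  have hcancel : -(1 / p) * p = -1 := by field
  rw [lacunaryModulus, mul_rpow (by positivity) (by positivity), ← rpow_mul (by positivity),
    ← rpow_mul hfour.le, hcancel, rpow_neg_one, mul_left_comm, mul_inv_cancel₀ hfour.ne', mul_one]
  push_cast
  ring_nf

theorem sq_four_pow_mul_lacunaryModulus_div (p : ℝ) (k : ℕ) :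
    (4 ^ k * lacunaryModulus p k) ^ 2 / (4 ^ k : ℝ) ^ (2 - 2 / p) = 1 / (k + 1 : ℝ) := by
  have hfour : (0 : ℝ) < 4 ^ k := by positivity
  rw [div_eq_iff (by positivity)]
  have hsq : ((k + 1 : ℝ) ^ (-(1 / 2) : ℝ)) ^ 2 = 1 / (k + 1 : ℝ) := by
    rw [← rpow_natCast, ← rpow_mul (by positivity)]
    norm_num [rpow_neg_one]
  have hpow : ((4 ^ k : ℝ) * (4 ^ k : ℝ) ^ (-(1 / p))) ^ 2 = (4 ^ k : ℝ) ^ (2 - 2 / p) := by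
    nth_rw 1 [← rpow_one (4 ^ k : ℝ)]
    rw [← rpow_add hfour, ← rpow_natCast, ← rpow_mul hfour.le]
    push_cast
    ring_nf
  rw [← hsq, ← hpow, lacunaryModulus]
  ring

theorem not_summable_sq_div_of_four_pow_mul_lacunaryModulus_le (hp : 1 ≤ p) {γ : ℝ} (hγ : 0 < γ)
    {c : ℕ → ℝ} (hc : ∀ k, γ * (4 ^ k * lacunaryModulus p k) ≤ c k) (m : ℕ) :
    ¬ Summable fun k ↦ c k ^ 2 / ((m + (4 ^ k - 1) : ℕ) + 1 : ℝ) ^ (2 - 2 / p) := by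
  have hexp : 0 ≤ 2 - 2 / p := by
    have : 2 / p ≤ 2 := div_le_self two_pos.le hp
    linarith
  have hindex (k : ℕ) : ((m + (4 ^ k - 1) : ℕ) + 1 : ℝ) ≤ (m + 1) * 4 ^ k := by
    have hone : 1 ≤ 4 ^ k := Nat.one_le_pow _ _ (by norm_num)
    have : m + (4 ^ k - 1) + 1 ≤ (m + 1) * 4 ^ k := by
      have := Nat.mul_le_mul_left m hone
      rw [add_mul]
      omega
    exact_mod_cast this
  have hharmonic (k : ℕ) : γ ^ 2 / (m + 1 : ℝ) ^ (2 - 2 / p) * (1 / (k + 1 : ℝ)) ≤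
      c k ^ 2 / ((m + (4 ^ k - 1) : ℕ) + 1 : ℝ) ^ (2 - 2 / p) := by
    have := lacunaryModulus_nonneg p k
    rw [← sq_four_pow_mul_lacunaryModulus_div p k, div_mul_div_comm, ← mul_pow,
      ← mul_rpow (by positivity) (by positivity)]
    gcongr
    · exact hc k
    · exact hindex k
  intro hsum
  have hscaled := Summable.of_nonneg_of_le (fun k ↦ by positivity) hharmonic hsum
  rw [summable_mul_left_iff (by positivity)] at hscaled
  exact Real.not_summable_one_div_natCast ((summable_nat_add_iff 1).mp (by exact_mod_cast hscaled))

end lacunaryModulus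

theorem not_mapsInto_weightedDirichlet {p : ℝ} (hp : 2 < p) {T : (ℂ → ℂ) → ℂ → ℂ}
    {B : ℕ → ℕ → ℂ} {m : ℕ} {γ : ℝ} (hγ : 0 < γ) (hB : ∀ k, γ * 4 ^ k ≤ ‖B k k‖)
    (hT : ∀ u : ℕ → ℂ, (∀ k, ‖u k‖ ≤ 1) → ∀ k,
      taylorCoeff (deriv (T (lacunarySeries u))) (m + (4 ^ k - 1)) =
        ∑ l ∈ Finset.range (k + 1), u l * B k l) :
    ¬ MapsInto T (Besov p) (WeightedDirichlet (1 - 2 / p)) := by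
  intro hmaps
  have hp0 : 0 < p := two_pos.trans hp
  obtain ⟨ε, hε, hdiag⟩ := exists_norm_eq_one_norm_diag_le fun k l ↦ lacunaryModulus p l * B k l
  set u : ℕ → ℂ := fun k ↦ ε k * lacunaryModulus p k with hu
  have hnorm (k : ℕ) : ‖u k‖ = lacunaryModulus p k := by
    rw [hu, norm_mul, hε, one_mul, Complex.norm_real,
      Real.norm_of_nonneg (lacunaryModulus_nonneg p k)]
  have hbesov : lacunarySeries u ∈ Besov p := lacunarySeries_mem_besov (by linarith) <| by
    simpa only [hnorm] using summable_four_pow_mul_lacunaryModulus_rpow hp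
  have hs : 0 ≤ 1 - 2 / p := sub_nonneg.mpr ((div_le_one hp0).mpr hp.le)
  have hsum := (summable_of_mem_weightedDirichlet hs (hmaps _ hbesov)).comp_injective
    ((add_right_injective m).comp strictMono_four_pow_sub_one.injective)
  have hcoeff (k : ℕ) : γ * (4 ^ k * lacunaryModulus p k) ≤
      ‖taylorCoeff (deriv (T (lacunarySeries u))) (m + (4 ^ k - 1))‖ := by
    rw [hT u fun l ↦ (hnorm l).trans_le (lacunaryModulus_le_one hp0 l)]
    simp only [hu, mul_assoc]
    refine le_trans ?_ (hdiag k)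
    rw [norm_mul, Complex.norm_real, Real.norm_of_nonneg (lacunaryModulus_nonneg p k)]
    calc γ * (4 ^ k * lacunaryModulus p k) = lacunaryModulus p k * (γ * 4 ^ k) := by ring
      _ ≤ lacunaryModulus p k * ‖B k k‖ :=
        mul_le_mul_of_nonneg_left (hB k) (lacunaryModulus_nonneg p k)
  refine not_summable_sq_div_of_four_pow_mul_lacunaryModulus_le (by linarith) hγ hcoeff m ?_
  simpa only [Function.comp_def, show 1 + (1 - 2 / p) = 2 - 2 / p by ring] using hsum

/-! ### The operators -/

theorem taylorCoeff_deriv_Ig (hg : HolOn g) (hf : HolOn f) (n : ℕ) :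
    taylorCoeff (deriv (Ig g f)) n =
      ∑ ij ∈ antidiagonal n, taylorCoeff g ij.1 * taylorCoeff (deriv f) ij.2 := by
  have h0 : (0 : ℂ) ∈ ball 0 1 := mem_ball_self one_pos
  rw [← taylorCoeff_mul (hg.analyticAt h0) (hf.deriv.analyticAt h0)]
  exact taylorCoeff_congr (eventually_of_mem (isOpen_ball.mem_nhds h0) fun z hz ↦
    (hasDerivAt_Ig hg hf hz).deriv) n

theorem taylorCoeff_deriv_Mg (hg : HolOn g) (hf : HolOn f) (n : ℕ) :
    taylorCoeff (deriv (Mg g f)) n =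
      (n + 1 : ℕ) * ∑ ij ∈ antidiagonal (n + 1), taylorCoeff g ij.1 * taylorCoeff f ij.2 := by
  have h0 : (0 : ℂ) ∈ ball 0 1 := mem_ball_self one_pos
  rw [taylorCoeff_deriv, ← taylorCoeff_mul (hg.analyticAt h0) (hf.analyticAt h0)]
  rfl

theorem not_mapsInto_Ig_weightedDirichlet {p : ℝ} (hp : 2 < p) (hg : HolOn g)
    (hne : ∃ z ∈ ball (0 : ℂ) 1, g z ≠ 0) :
    ¬ MapsInto (Ig g) (Besov p) (WeightedDirichlet (1 - 2 / p)) := by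
  obtain ⟨m, hm, hlt⟩ := hg.exists_taylorCoeff_ne_zero hne
  refine not_mapsInto_weightedDirichlet hp (m := m)
    (B := fun k l ↦ 4 ^ l * taylorCoeff g (m + (4 ^ k - 1) - (4 ^ l - 1)))
    (norm_pos_iff.mpr hm) (fun k ↦ ?_) fun u hu k ↦ ?_
  · rw [Nat.add_sub_cancel, norm_mul, norm_pow, Complex.norm_ofNat, mul_comm]
  · rw [taylorCoeff_deriv_Ig hg (holOn_lacunarySeries hu), taylorCoeff_deriv_lacunarySeries hu,
      sum_antidiagonal_mul_extend strictMono_four_pow_sub_one hlt]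
    exact Finset.sum_congr rfl fun l _ ↦ by ring

theorem not_mapsInto_Mg_weightedDirichlet {p : ℝ} (hp : 2 < p) (hg : HolOn g)
    (hne : ∃ z ∈ ball (0 : ℂ) 1, g z ≠ 0) :
    ¬ MapsInto (Mg g) (Besov p) (WeightedDirichlet (1 - 2 / p)) := by
  obtain ⟨m, hm, hlt⟩ := hg.exists_taylorCoeff_ne_zero hne
  refine not_mapsInto_weightedDirichlet hp (m := m)
    (B := fun k l ↦ (m + 4 ^ k : ℕ) * taylorCoeff g (m + 4 ^ k - 4 ^ l))
    (norm_pos_iff.mpr hm) (fun k ↦ ?_) fun u hu k ↦ ?_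
  · rw [Nat.add_sub_cancel, norm_mul, Complex.norm_natCast, mul_comm]
    gcongr
    push_cast
    exact le_add_of_nonneg_left m.cast_nonneg
  · have hindex : m + (4 ^ k - 1) + 1 = m + 4 ^ k := by
      rw [add_assoc, Nat.sub_add_cancel (Nat.one_le_pow _ _ (by norm_num))]
    rw [taylorCoeff_deriv_Mg hg (holOn_lacunarySeries hu), hindex, taylorCoeff_lacunarySeries hu,
      sum_antidiagonal_mul_extend strictMono_four_pow hlt, Finset.mul_sum]
    exact Finset.sum_congr rfl fun l _ ↦ by ring

theorem stmt13_general {p : ℝ} (hp : 2 < p) {Y : Set (ℂ → ℂ)}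
    (hY : Y ⊆ WeightedDirichlet (1 - 2 / p))
    (hY0 : ∀ f : ℂ → ℂ, (∀ z ∈ ball (0 : ℂ) 1, f z = 0) → f ∈ Y) (hg : HolOn g) :
    (MapsInto (Ig g) (Besov p) Y ↔ ∀ z ∈ ball (0 : ℂ) 1, g z = 0) ∧
    (MapsInto (Mg g) (Besov p) Y ↔ ∀ z ∈ ball (0 : ℂ) 1, g z = 0) := by
  refine ⟨⟨fun hmaps ↦ ?_, fun h0 f _ ↦ hY0 _ fun z ↦ Ig_eq_zero h0 f⟩,
    ⟨fun hmaps ↦ ?_, fun h0 f _ ↦ hY0 _ fun z hz ↦ ?_⟩⟩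
  · by_contra! hne
    exact not_mapsInto_Ig_weightedDirichlet hp hg hne fun f hf ↦ hY (hmaps f hf)
  · by_contra! hne
    exact not_mapsInto_Mg_weightedDirichlet hp hg hne fun f hf ↦ hY (hmaps f hf)
  · rw [Mg, h0 z hz, zero_mul]

end

/-- For `2 < p < ∞`, `0 < s ≤ 1 - 2/p`, and `g` holomorphic on the unit
disc: (i) `I_g` maps `Bᵖ` into `Q_s` iff `g ≡ 0`; (ii) `M_g` maps `Bᵖ` into `Q_s` iff
`g ≡ 0` (on the disc). -/
theorem stmt13 (p s : ℝ) (hp : 2 < p) (hs0 : 0 < s) (hs1 : s ≤ 1 - 2 / p)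
    (g : ℂ → ℂ) (hg : HolOn g) :
    (MapsInto (Ig g) (Besov p) (Qs s) ↔ ∀ z ∈ Metric.ball (0:ℂ) 1, g z = 0) ∧
    (MapsInto (Mg g) (Besov p) (Qs s) ↔ ∀ z ∈ Metric.ball (0:ℂ) 1, g z = 0) :=
  stmt13_general hp ((Qs_subset_weightedDirichlet s).trans (weightedDirichlet_mono hs1))
    (fun _ ↦ mem_Qs_of_eqOn_zero s) hg
end
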